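/- arXiv:2410.18259 — 3 statements merged into one kernel-verified Lean document; each statement's English description precedes it below -/
import Mathlib

section
/- Let p be an arbitrary but fixed prime. Then the series Σ_{n ≥ 2, p(n) = p} μ(n) ω(n) / n, taken over integers n ≥ 2 whose smallest prime factor equals p, converges and equals 0; that is, lim_{x → ∞} Σ_{2 ≤ n ≤ x, p(n) = p} μ(n) ω(n)/n = 0. -/
open Finset ArithmeticFunction Filter

/-!
Non-vanishing of `ζ` on `re s = 1`, made quantitative by the 3-4-1 inequality, bounds
`ζ₁' / ζ₁ ^ 2` polynomially on `1 ≤ re s ≤ 2`, where `ζ₁ s = (s - 1) ζ s`. This quotient is the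
Fourier transform of `t * m (e ^ t)` (damped by `e ^ (-σ t)`), where `m x = ∑_{n ≤ x} μ(n) / n`, so
comparing with a Gaussian average at scale `t ^ (-1 / 20)` gives `m x ≪ (1 + log x) ^ (-1 / 20)`,
and the same bound for the sum `m_N x` over `n` coprime to a fixed `N`.

Expanding `ω(n)` over the primes `q ∣ n`, the sum of `μ(n) ω(n) / n` over `n ≤ x` coprime to `N`
becomes `-∑_q m_{qN}(x / q) / q` over the primes `q ≤ x` not dividing `N`, which tends to `0` by
Chebyshev's bound for `π`. Finally `p(n) = p` says that `n` is coprime to `(p - 1)!` but not to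
`p * (p - 1)!`, so the sum in question is a difference of two such sums.
-/

section BoundedMellin

open MeasureTheory

variable {g : ℝ → ℂ} {s : ℂ}

lemma mellin_neg_eq_setIntegral_Ioi_one (hg : ∀ t < 1, g t = 0) (s : ℂ) :
    mellin g (-s) = ∫ t in Set.Ioi (1 : ℝ), g t * (t : ℂ) ^ (-(s + 1)) := by
  rw [mellin, setIntegral_eq_of_subset_of_ae_sdiff_eq_zero measurableSet_Ioi.nullMeasurableSet
    (Set.Ioi_subset_Ioi zero_le_one)]
  · refine integral_congr_ae (.of_forall fun t => ?_)
    simp only [smul_eq_mul, mul_comm, neg_add']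
  · filter_upwards [Measure.ae_ne volume (1 : ℝ)] with t ht1 ht
    rw [hg t (lt_of_le_of_ne (not_lt.1 ht.2) ht1), smul_zero]

lemma norm_mellin_neg_le (hg : ∀ t < 1, g t = 0) (hg1 : ∀ t, ‖g t‖ ≤ 1) (hs : 0 < s.re) :
    ‖mellin g (-s)‖ ≤ s.re⁻¹ := by
  have hint : ∫ t in Set.Ioi (1 : ℝ), t ^ (-(s.re + 1)) = s.re⁻¹ := by
    rw [integral_Ioi_rpow_of_lt (by linarith) one_pos]
    simp
  rw [mellin_neg_eq_setIntegral_Ioi_one hg, ← hint]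
  refine norm_integral_le_of_norm_le (integrableOn_Ioi_rpow_of_lt (by linarith) one_pos)
    (ae_restrict_of_forall_mem measurableSet_Ioi fun t ht => ?_)
  rw [norm_mul, Complex.norm_cpow_eq_rpow_re_of_pos (one_pos.trans ht)]
  simpa using mul_le_of_le_one_left (Real.rpow_nonneg (one_pos.trans ht).le _) (hg1 t)

lemma hasDerivAt_mellin_neg (hg : ∀ t < 1, g t = 0) (hg1 : ∀ t, ‖g t‖ ≤ 1) (hgm : Measurable g)
    (hs : 0 < s.re) :
    HasDerivAt (fun z => mellin g (-z)) (-mellin (fun t => Real.log t • g t) (-s)) s := by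
  have hloc : LocallyIntegrableOn g (Set.Ioi 0) :=
    ((locallyIntegrable_const (1 : ℝ)).mono hgm.aestronglyMeasurable
      (.of_forall fun t => by simpa using hg1 t)).locallyIntegrableOn _
  have hbot : g =ᶠ[nhdsWithin 0 (Set.Ioi 0)] 0 := by
    filter_upwards [nhdsWithin_le_nhds (Iio_mem_nhds one_pos)] with t ht using hg t ht
  have htop : g =O[atTop] (fun t : ℝ => t ^ (-(0 : ℝ))) :=
    .of_bound 1 (.of_forall fun t => by simpa using hg1 t)
  have h := (mellin_hasDerivAt_of_isBigO_rpow (s := -s) (b := (-s).re - 1) hloc htop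
    (by simpa using hs) (hbot.trans_isBigO (Asymptotics.isBigO_zero _ _)) (by linarith)).2
  simpa [Function.comp_def] using h.scomp s (hasDerivAt_neg s)

end BoundedMellin

section Zeta

open MeasureTheory

variable {s : ℂ}

/-- The sawtooth `t ↦ {t}` cut off to `t > 1`; its Mellin transform continues `ζ` to `0 < re s`. -/
noncomputable def sawtooth : ℝ → ℂ :=
  (Set.Ioi 1).indicator fun t => ((Int.fract t : ℝ) : ℂ)

lemma sawtooth_of_lt_one (t : ℝ) (ht : t < 1) : sawtooth t = 0 :=
  Set.indicator_of_notMem (not_lt.2 ht.le) _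

lemma norm_sawtooth_le (t : ℝ) : ‖sawtooth t‖ ≤ 1 :=
  (norm_indicator_le_norm_self _ _).trans <| by
    simpa [abs_of_nonneg (Int.fract_nonneg t)] using (Int.fract_lt_one t).le

lemma measurable_sawtooth : Measurable sawtooth :=
  (Complex.measurable_ofReal.comp measurable_fract).indicator measurableSet_Ioi

lemma norm_mellin_sawtooth_le (hs : 0 < s.re) : ‖mellin sawtooth (-s)‖ ≤ s.re⁻¹ :=
  norm_mellin_neg_le sawtooth_of_lt_one norm_sawtooth_le hs

lemma differentiableAt_mellin_sawtooth (hs : 0 < s.re) :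
    DifferentiableAt ℂ (fun z => mellin sawtooth (-z)) s :=
  (hasDerivAt_mellin_neg sawtooth_of_lt_one norm_sawtooth_le
    measurable_sawtooth hs).differentiableAt

lemma sum_one_eq_sub_sawtooth {t : ℝ} (ht : 1 < t) :
    ∑ _k ∈ Icc 1 ⌊t⌋₊, (1 : ℂ) = t - sawtooth t := by
  rw [sawtooth, Set.indicator_of_mem (show t ∈ Set.Ioi 1 from ht), sum_const, Nat.card_Icc,
    add_tsub_cancel_right, nsmul_one]
  rw [← Int.cast_natCast, Int.natCast_floor_eq_floor (zero_le_one.trans ht.le)]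
  exact_mod_cast (Int.self_sub_fract t).symm

lemma riemannZeta_eq_of_one_lt_re (hs : 1 < s.re) :
    riemannZeta s = s / (s - 1) - s * mellin sawtooth (-s) := by
  have hpow : IntegrableOn (fun t : ℝ => (t : ℂ) ^ (-s)) (Set.Ioi 1) :=
    integrableOn_Ioi_cpow_of_lt (by simpa using hs) one_pos
  have hsaw : IntegrableOn (fun t : ℝ => sawtooth t * (t : ℂ) ^ (-(s + 1))) (Set.Ioi 1) :=
    (integrableOn_Ioi_cpow_of_lt (by simp; linarith) one_pos).bdd_mul
      measurable_sawtooth.aestronglyMeasurable (.of_forall norm_sawtooth_le)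
  have hint : ∫ t in Set.Ioi (1 : ℝ), (t : ℂ) ^ (-s) = 1 / (s - 1) := by
    rw [integral_Ioi_cpow_of_lt (by simpa using hs) one_pos, Complex.ofReal_one, Complex.one_cpow,
      neg_div, ← div_neg, neg_add, neg_neg, sub_eq_add_neg]
  have hL := LSeries_eq_mul_integral_of_nonneg (fun _ => 1) zero_le_one hs
    (.of_bound 1 (.of_forall fun n => by simp)) fun _ => zero_le_one
  calc riemannZeta s
    _ = s * ∫ t in Set.Ioi (1 : ℝ), ((t : ℂ) ^ (-s) - sawtooth t * (t : ℂ) ^ (-(s + 1))) := by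
      rw [← LSeries_one_eq_riemannZeta hs]
      refine hL.trans (congrArg (s * ·) (setIntegral_congr_fun measurableSet_Ioi fun t ht => ?_))
      have ht0 : (t : ℂ) ≠ 0 := Complex.ofReal_ne_zero.2 (one_pos.trans ht).ne'
      simp only [Complex.ofReal_one]
      rw [sum_one_eq_sub_sawtooth ht, sub_mul, show -s = 1 + -(s + 1) by ring,
        Complex.cpow_add _ _ ht0, Complex.cpow_one]
    _ = s / (s - 1) - s * mellin sawtooth (-s) := by
      rw [integral_sub hpow hsaw, hint, mellin_neg_eq_setIntegral_Ioi_one sawtooth_of_lt_one]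
      ring

lemma riemannZeta₁_eq (hs : 0 < s.re) :
    riemannZeta₁ s = s - s * (s - 1) * mellin sawtooth (-s) := by
  have hU : IsOpen {z : ℂ | 0 < z.re} := isOpen_lt continuous_const Complex.continuous_re
  have hright : DifferentiableOn ℂ (fun z => z - z * (z - 1) * mellin sawtooth (-z))
      {z : ℂ | 0 < z.re} := fun z hz =>
    (differentiableAt_id.sub (.mul (by fun_prop)
      (differentiableAt_mellin_sawtooth hz))).differentiableWithinAt
  refine differentiable_riemannZeta₁.differentiableOn.analyticOnNhd hU
    |>.eqOn_of_preconnected_of_eventuallyEq (hright.analyticOnNhd hU)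
      (convex_halfSpace_re_gt 0).isPreconnected (z₀ := 2) (by simp) ?_ hs
  filter_upwards [(isOpen_lt continuous_const Complex.continuous_re).mem_nhds
    (show (1 : ℝ) < (2 : ℂ).re by norm_num)] with z hz
  have hz1 : z ≠ 1 := by rintro rfl; simp at hz
  have h := riemannZeta_eq_of_one_lt_re hz
  rw [riemannZeta_eq_inv_sub_mul hz1] at h
  have := sub_ne_zero.2 hz1
  field_simp at h
  linear_combination h

end Zeta

section ZetaBounds

variable {s : ℂ}

lemma norm_riemannZeta₁_le (h₁ : 1 / 2 ≤ s.re) (h₂ : s.re ≤ 3) :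
    ‖riemannZeta₁ s‖ ≤ 15 * (1 + |s.im|) ^ 2 := by
  have hs : 0 < s.re := by linarith
  have him := abs_nonneg s.im
  have hn : ‖s‖ ≤ 3 * (1 + |s.im|) := by
    linarith [Complex.norm_le_abs_re_add_abs_im s, abs_of_pos hs]
  have hn1 : ‖s - 1‖ ≤ 2 * (1 + |s.im|) := by
    have hre : |s.re - 1| ≤ 2 := abs_le.2 ⟨by linarith, by linarith⟩
    have h := Complex.norm_le_abs_re_add_abs_im (s - 1)
    simp only [Complex.sub_re, Complex.one_re, Complex.sub_im, Complex.one_im, sub_zero] at h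
    linarith
  have hK : ‖mellin sawtooth (-s)‖ ≤ 2 :=
    (norm_mellin_sawtooth_le hs).trans (inv_le_of_inv_le₀ two_pos (by linarith))
  calc ‖riemannZeta₁ s‖ ≤ ‖s‖ + ‖s‖ * ‖s - 1‖ * ‖mellin sawtooth (-s)‖ := by
        rw [riemannZeta₁_eq hs, ← norm_mul, ← norm_mul]
        exact norm_sub_le _ _
    _ ≤ 3 * (1 + |s.im|) + 3 * (1 + |s.im|) * (2 * (1 + |s.im|)) * 2 := by gcongr
    _ ≤ 15 * (1 + |s.im|) ^ 2 := by nlinarith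

lemma norm_deriv_riemannZeta₁_le (h₁ : 1 ≤ s.re) (h₂ : s.re ≤ 2) :
    ‖deriv riemannZeta₁ s‖ ≤ 70 * (1 + |s.im|) ^ 2 := by
  have hsphere : ∀ z ∈ Metric.sphere s (1 / 2), ‖riemannZeta₁ z‖ ≤ 35 * (1 + |s.im|) ^ 2 := by
    intro z hz
    rw [mem_sphere_iff_norm] at hz
    have hre := abs_le.1 ((Complex.abs_re_le_norm (z - s)).trans_eq hz)
    have him := (Complex.abs_im_le_norm (z - s)).trans_eq hz
    rw [Complex.sub_re] at hre
    rw [Complex.sub_im] at him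
    have hz_im : 1 + |z.im| ≤ 3 / 2 * (1 + |s.im|) := by
      linarith [abs_sub_abs_le_abs_sub z.im s.im, abs_nonneg s.im]
    calc ‖riemannZeta₁ z‖ ≤ 15 * (1 + |z.im|) ^ 2 :=
          norm_riemannZeta₁_le (by linarith) (by linarith)
      _ ≤ 15 * (3 / 2 * (1 + |s.im|)) ^ 2 := by gcongr
      _ ≤ 35 * (1 + |s.im|) ^ 2 := by nlinarith [sq_nonneg (1 + |s.im|)]
  have h := Complex.norm_deriv_le_of_forall_mem_sphere_norm_le one_half_pos
    differentiable_riemannZeta₁.diffContOnCl hsphere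
  linarith

lemma riemannZeta₁_ne_zero (hs : 1 ≤ s.re) : riemannZeta₁ s ≠ 0 := by
  rcases eq_or_ne s 1 with rfl | hs1
  · simp
  · exact right_ne_zero_of_mul
      ((riemannZeta_eq_inv_sub_mul hs1).symm.trans_ne (riemannZeta_ne_zero_of_one_le_re hs))

lemma norm_riemannZeta_le_norm_riemannZeta₁ (hs : 1 ≤ |s.im|) :
    ‖riemannZeta s‖ ≤ ‖riemannZeta₁ s‖ := by
  have h1 : 1 ≤ ‖s - 1‖ := by simpa using hs.trans (by simpa using Complex.abs_im_le_norm (s - 1))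
  have hs1 : s ≠ 1 := by
    rintro rfl
    norm_num at h1
  rw [riemannZeta_eq_inv_sub_mul hs1, norm_mul, norm_inv]
  exact mul_le_of_le_one_left (norm_nonneg _) (inv_le_one_of_one_le₀ h1)

lemma one_le_riemannZeta_product (hs : 1 < s.re) :
    1 ≤ ‖riemannZeta s.re‖ ^ 3 * ‖riemannZeta s‖ ^ 4 * ‖riemannZeta (s + Complex.I * s.im)‖ := by
  have h := DirichletCharacter.norm_LFunction_product_ge_one (N := 1) 1 (sub_pos.2 hs) s.im
  simp only [DirichletCharacter.LFunctionTrivChar, one_pow, DirichletCharacter.LFunction_modOne_eq,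
    norm_mul, norm_pow, Complex.ofReal_sub, Complex.ofReal_one, add_sub_cancel] at h
  have hre : (s.re : ℂ) + Complex.I * s.im = s := by rw [mul_comm, Complex.re_add_im]
  have hdouble : (s.re : ℂ) + 2 * Complex.I * s.im = s + Complex.I * s.im := by
    rw [mul_assoc, two_mul, ← add_assoc, hre]
  rwa [hdouble, hre] at h

lemma sub_one_pow_three_le_norm_riemannZeta₁ (h₁ : 1 < s.re) (h₂ : s.re ≤ 2) (him : 1 ≤ |s.im|) :
    (s.re - 1) ^ 3 ≤ 22 ^ 4 * (1 + |s.im|) ^ 2 * ‖riemannZeta₁ s‖ ^ 4 := by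
  have hpos : 0 < s.re - 1 := sub_pos.2 h₁
  have hreal : (s.re - 1) * ‖riemannZeta s.re‖ ≤ 15 := by
    have hne : (s.re : ℂ) ≠ 1 := by exact_mod_cast h₁.ne'
    have h := norm_riemannZeta₁_le (s := (s.re : ℂ)) (by simp; linarith) (by simp; linarith)
    rw [riemannZeta_eq_inv_sub_mul hne, norm_mul, norm_inv, ← Complex.ofReal_one,
      ← Complex.ofReal_sub, Complex.norm_of_nonneg hpos.le, mul_inv_cancel_left₀ hpos.ne']
    simpa using h
  have him2 : (s + Complex.I * s.im).im = 2 * s.im := by simp [two_mul]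
  have hdouble : ‖riemannZeta (s + Complex.I * s.im)‖ ≤ 60 * (1 + |s.im|) ^ 2 := by
    have habs : |2 * s.im| = 2 * |s.im| := by rw [abs_mul, abs_two]
    have h := norm_riemannZeta₁_le (s := s + Complex.I * s.im) (by simp; linarith)
      (by simp; linarith)
    rw [him2, habs] at h
    refine (norm_riemannZeta_le_norm_riemannZeta₁ ?_).trans (h.trans ?_)
    · rw [him2, habs]
      linarith
    · nlinarith
  calc (s.re - 1) ^ 3
    _ ≤ (s.re - 1) ^ 3 * (‖riemannZeta s.re‖ ^ 3 * ‖riemannZeta s‖ ^ 4 *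
          ‖riemannZeta (s + Complex.I * s.im)‖) :=
      le_mul_of_one_le_right (by positivity) (one_le_riemannZeta_product h₁)
    _ = ((s.re - 1) * ‖riemannZeta s.re‖) ^ 3 * ‖riemannZeta s‖ ^ 4 *
          ‖riemannZeta (s + Complex.I * s.im)‖ := by ring
    _ ≤ 15 ^ 3 * ‖riemannZeta₁ s‖ ^ 4 * (60 * (1 + |s.im|) ^ 2) := by
      gcongr
      exact norm_riemannZeta_le_norm_riemannZeta₁ him
    _ ≤ 22 ^ 4 * (1 + |s.im|) ^ 2 * ‖riemannZeta₁ s‖ ^ 4 := by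
      nlinarith [mul_nonneg (sq_nonneg (1 + |s.im|)) (pow_nonneg (norm_nonneg (riemannZeta₁ s)) 4)]

lemma norm_riemannZeta₁_sub_le {a b : ℝ} (t : ℝ) (ha : 1 ≤ a) (hab : a ≤ b) (hb : b ≤ 2) :
    ‖riemannZeta₁ (b + t * Complex.I) - riemannZeta₁ (a + t * Complex.I)‖ ≤
      70 * (1 + |t|) ^ 2 * (b - a) := by
  have hderiv : ∀ x ∈ Set.Icc a b, HasDerivWithinAt (fun x : ℝ => riemannZeta₁ (x + t * Complex.I))
      (deriv riemannZeta₁ (x + t * Complex.I)) (Set.Icc a b) x := fun x _ => by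
    have h := (differentiable_riemannZeta₁ (x + t * Complex.I)).hasDerivAt
    exact (h.comp_add_const (x : ℂ) (t * Complex.I)).comp_ofReal.hasDerivWithinAt
  have h := (convex_Icc a b).norm_image_sub_le_of_norm_hasDerivWithin_le hderiv
    (fun x hx => by
      simpa using norm_deriv_riemannZeta₁_le (s := x + t * Complex.I)
        (by simpa using ha.trans hx.1) (by simpa using hx.2.trans hb))
    (Set.left_mem_Icc.2 hab) (Set.right_mem_Icc.2 hab)
  rwa [Real.norm_of_nonneg (sub_nonneg.2 hab)] at h

lemma le_norm_riemannZeta₁_of_le_re_sub_one {k : ℝ} (hk : 0 < k) (h₂ : s.re ≤ 2)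
    (him : 1 ≤ |s.im|) (h : k ^ 4 / (1 + |s.im|) ^ 10 ≤ s.re - 1) :
    k ^ 3 / 22 / (1 + |s.im|) ^ 8 ≤ ‖riemannZeta₁ s‖ := by
  have hre : 0 < s.re - 1 := lt_of_lt_of_le (by positivity) h
  refine le_of_pow_le_pow_left₀ four_ne_zero (norm_nonneg _) ?_
  calc (k ^ 3 / 22 / (1 + |s.im|) ^ 8) ^ 4
      = (k ^ 4 / (1 + |s.im|) ^ 10) ^ 3 / (22 ^ 4 * (1 + |s.im|) ^ 2) := by field_simp
    _ ≤ (s.re - 1) ^ 3 / (22 ^ 4 * (1 + |s.im|) ^ 2) := by gcongr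
    _ ≤ ‖riemannZeta₁ s‖ ^ 4 := by
      rw [div_le_iff₀' (by positivity)]
      exact sub_one_pow_three_le_norm_riemannZeta₁ (by linarith) h₂ him

lemma exists_le_norm_riemannZeta₁_of_one_le_abs_im :
    ∃ c > 0, ∀ s : ℂ, 1 ≤ s.re → s.re ≤ 2 → 1 ≤ |s.im| →
      c / (1 + |s.im|) ^ 8 ≤ ‖riemannZeta₁ s‖ := by
  refine ⟨(1 / 3200) ^ 3 / 44, by positivity, fun s h₁ h₂ him => ?_⟩
  set X := 1 + |s.im| with hX
  -- The exponents make the 3-4-1 bound at `1 + η + it` beat the mean value bound for the step `η`.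
  set η : ℝ := (1 / 3200) ^ 4 / X ^ 10 with hη
  have hX1 : 1 ≤ X := by rw [hX]; linarith
  have hη1 : η ≤ 1 := div_le_one_of_le₀ ((by norm_num : (1 / 3200 : ℝ) ^ 4 ≤ 1).trans
    (one_le_pow₀ hX1)) (by positivity)
  rcases le_total η (s.re - 1) with h | h
  · refine le_trans ?_ (le_norm_riemannZeta₁_of_le_re_sub_one (by norm_num) h₂ him h)
    gcongr
    norm_num
  · have hre' : ((1 + η : ℝ) + s.im * Complex.I : ℂ).re = 1 + η := by simp
    have him' : ((1 + η : ℝ) + s.im * Complex.I : ℂ).im = s.im := by simp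
    have hlow := le_norm_riemannZeta₁_of_le_re_sub_one (s := (1 + η : ℝ) + s.im * Complex.I)
      (k := 1 / 3200) (by norm_num) (by linarith) (by rwa [him'])
      (by rw [him', hre', add_sub_cancel_left])
    rw [him', ← hX] at hlow
    have hlip := norm_riemannZeta₁_sub_le s.im h₁ (by linarith : s.re ≤ 1 + η) (by linarith)
    rw [Complex.re_add_im] at hlip
    have htri := norm_sub_norm_le (riemannZeta₁ ((1 + η : ℝ) + s.im * Complex.I))
      (riemannZeta₁ s)
    have hstep : 70 * X ^ 2 * (1 + η - s.re) ≤ (1 / 3200) ^ 3 / 44 / X ^ 8 :=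
      calc 70 * X ^ 2 * (1 + η - s.re) ≤ 70 * X ^ 2 * η := by gcongr; linarith
        _ = 70 * (1 / 3200) ^ 4 / X ^ 8 := by rw [hη]; field_simp
        _ ≤ (1 / 3200) ^ 3 / 44 / X ^ 8 := by gcongr; norm_num
    have hhalf : (1 / 3200 : ℝ) ^ 3 / 22 / X ^ 8 = 2 * ((1 / 3200) ^ 3 / 44 / X ^ 8) := by ring
    linarith

lemma exists_le_norm_riemannZeta₁_of_abs_im_le_one :
    ∃ c > 0, ∀ s : ℂ, 1 ≤ s.re → s.re ≤ 2 → |s.im| ≤ 1 → c ≤ ‖riemannZeta₁ s‖ := by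
  have hK : IsCompact (Set.Icc (1 : ℝ) 2 ×ℂ Set.Icc (-1 : ℝ) 1) :=
    isCompact_Icc.reProdIm isCompact_Icc
  obtain ⟨z, hz, hmin⟩ := hK.exists_isMinOn ⟨1, by simp [Complex.mem_reProdIm]⟩
    differentiable_riemannZeta₁.continuous.norm.continuousOn
  exact ⟨‖riemannZeta₁ z‖, norm_pos_iff.2 (riemannZeta₁_ne_zero hz.1.1), fun s h₁ h₂ him =>
    hmin (Complex.mem_reProdIm.2 ⟨⟨h₁, h₂⟩, abs_le.1 him⟩)⟩

lemma exists_le_norm_riemannZeta₁ :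
    ∃ c > 0, ∀ s : ℂ, 1 ≤ s.re → s.re ≤ 2 → c / (1 + |s.im|) ^ 8 ≤ ‖riemannZeta₁ s‖ := by
  obtain ⟨a, ha, hfar⟩ := exists_le_norm_riemannZeta₁_of_one_le_abs_im
  obtain ⟨b, hb, hnear⟩ := exists_le_norm_riemannZeta₁_of_abs_im_le_one
  refine ⟨min a b, lt_min ha hb, fun s h₁ h₂ => ?_⟩
  rcases le_total 1 |s.im| with him | him
  · refine le_trans ?_ (hfar s h₁ h₂ him)
    gcongr
    exact min_le_left a b
  · have hX : 1 ≤ (1 + |s.im|) ^ 8 := one_le_pow₀ (by linarith [abs_nonneg s.im])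
    exact (div_le_self (lt_min ha hb).le hX).trans ((min_le_right a b).trans (hnear s h₁ h₂ him))

lemma exists_norm_deriv_div_sq_riemannZeta₁_le :
    ∃ C, ∀ s : ℂ, 1 ≤ s.re → s.re ≤ 2 →
      ‖deriv riemannZeta₁ s / riemannZeta₁ s ^ 2‖ ≤ C * (1 + |s.im|) ^ 18 := by
  obtain ⟨c, hc, hlow⟩ := exists_le_norm_riemannZeta₁
  refine ⟨70 / c ^ 2, fun s h₁ h₂ => ?_⟩
  rw [norm_div, norm_pow]
  calc ‖deriv riemannZeta₁ s‖ / ‖riemannZeta₁ s‖ ^ 2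
      ≤ 70 * (1 + |s.im|) ^ 2 / (c / (1 + |s.im|) ^ 8) ^ 2 := by
        gcongr
        exacts [norm_deriv_riemannZeta₁_le h₁ h₂, hlow s h₁ h₂]
    _ = 70 / c ^ 2 * (1 + |s.im|) ^ 18 := by field_simp

end ZetaBounds

section MoebiusSum

open MeasureTheory

open scoped FourierTransform

/-- `m(x) = ∑_{n ≤ x} μ(n) / n`. -/
noncomputable def moebiusDivSum (x : ℝ) : ℝ := ∑ n ∈ Icc 1 ⌊x⌋₊, (moebius n : ℝ) / n

lemma abs_moebius_div_le (n : ℕ) : |(moebius n : ℝ) / n| ≤ (n : ℝ)⁻¹ := by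
  rw [abs_div, Nat.abs_cast, div_eq_mul_inv]
  exact mul_le_of_le_one_left (by positivity) (mod_cast abs_moebius_le_one)

lemma moebiusDivSum_of_lt_one {x : ℝ} (hx : x < 1) : moebiusDivSum x = 0 := by
  simp [moebiusDivSum, Nat.floor_eq_zero.2 hx]

lemma measurable_moebiusDivSum : Measurable moebiusDivSum :=
  (measurable_from_nat (f := fun N => ∑ n ∈ Icc 1 N, (moebius n : ℝ) / n)).comp
    Nat.measurable_floor

lemma sum_moebius_mul_div {N : ℕ} (hN : 1 ≤ N) :
    ∑ n ∈ Icc 1 N, (moebius n : ℝ) * (N / n : ℕ) = 1 := by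
  have h := sum_Ioc_mul_zeta_eq_sum moebius N
  rw [moebius_mul_coe_zeta, ← Icc_add_one_left_eq_Ioc, zero_add] at h
  have hone : ∑ n ∈ Icc 1 N, (1 : ArithmeticFunction ℤ) n = 1 := by
    rw [sum_eq_single_of_mem 1 (mem_Icc.2 ⟨le_rfl, hN⟩) fun n _ hn => one_apply_ne hn, one_one]
  simpa only [Int.cast_sum, Int.cast_mul, Int.cast_natCast, Int.cast_one] using
    congrArg (Int.cast (R := ℝ)) (h.symm.trans hone)

/-- The fractional parts of `N / n` are less than `1`, and the one for `n = N` vanishes. -/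
lemma abs_sum_moebius_div_le_one (N : ℕ) : |∑ n ∈ Icc 1 N, (moebius n : ℝ) / n| ≤ 1 := by
  rcases N with _ | N
  · simp
  have hdecomp : ∀ n : ℕ, (moebius n : ℝ) / n * (N + 1 : ℕ) =
      moebius n * ((N + 1) / n : ℕ) + moebius n * Int.fract (((N + 1 : ℕ) : ℝ) / n) := fun n => by
    rw [← mul_add, ← Nat.floor_div_eq_div (K := ℝ), natCast_floor_eq_intCast_floor (by positivity),
      Int.floor_add_fract, div_mul_eq_mul_div, mul_div_assoc]
  have hfract : |∑ n ∈ Icc 1 (N + 1), (moebius n : ℝ) * Int.fract (((N + 1 : ℕ) : ℝ) / n)| ≤ N := by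
    rw [sum_Icc_succ_top (by omega), div_self (by positivity), Int.fract_one, mul_zero, add_zero]
    refine (abs_sum_le_sum_abs _ _).trans ((sum_le_card_nsmul _ _ 1 fun n _ => ?_).trans (by simp))
    rw [abs_mul, Int.abs_fract]
    exact mul_le_one₀ (mod_cast abs_moebius_le_one) (Int.fract_nonneg _) (Int.fract_lt_one _).le
  have hmul : (∑ n ∈ Icc 1 (N + 1), (moebius n : ℝ) / n) * (N + 1 : ℕ) = 1 +
      ∑ n ∈ Icc 1 (N + 1), (moebius n : ℝ) * Int.fract (((N + 1 : ℕ) : ℝ) / n) := by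
    rw [sum_mul, ← sum_moebius_mul_div (Nat.le_add_left 1 N), ← sum_add_distrib]
    exact sum_congr rfl fun n _ => hdecomp n
  have hle := (congrArg abs hmul).trans_le ((abs_add_le _ _).trans (add_le_add_right hfract _))
  rw [abs_mul, Nat.abs_cast, abs_one] at hle
  push_cast at hle
  exact le_of_mul_le_mul_right (by linarith) (by positivity : (0 : ℝ) < N + 1)

lemma abs_moebiusDivSum_le_one (x : ℝ) : |moebiusDivSum x| ≤ 1 := abs_sum_moebius_div_le_one ⌊x⌋₊

lemma abs_moebiusDivSum_sub_le {x y : ℝ} (hx : 0 < x) (hxy : x ≤ y) :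
    |moebiusDivSum y - moebiusDivSum x| ≤ (y - x + 1) / x := by
  have hfloor := Nat.floor_le_floor hxy
  have hsum : moebiusDivSum y - moebiusDivSum x =
      ∑ n ∈ Ioc ⌊x⌋₊ ⌊y⌋₊, (moebius n : ℝ) / n := by
    rw [moebiusDivSum, moebiusDivSum, ← zero_add 1, Icc_add_one_left_eq_Ioc,
      Icc_add_one_left_eq_Ioc, sub_eq_iff_eq_add', sum_Ioc_consecutive _ (Nat.zero_le _) hfloor]
  have hcard : ((⌊y⌋₊ - ⌊x⌋₊ : ℕ) : ℝ) ≤ y - x + 1 := by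
    rw [Nat.cast_sub hfloor]
    linarith [Nat.floor_le (hx.le.trans hxy), Nat.lt_floor_add_one x]
  rw [hsum]
  calc |∑ n ∈ Ioc ⌊x⌋₊ ⌊y⌋₊, (moebius n : ℝ) / n|
      ≤ ∑ _n ∈ Ioc ⌊x⌋₊ ⌊y⌋₊, x⁻¹ := (abs_sum_le_sum_abs _ _).trans <| sum_le_sum fun n hn =>
        (abs_moebius_div_le n).trans (inv_anti₀ hx (Nat.lt_of_floor_lt (mem_Ioc.1 hn).1).le)
    _ ≤ (y - x + 1) / x := by
        rw [sum_const, Nat.card_Ioc, nsmul_eq_mul, div_eq_mul_inv]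
        gcongr

lemma abs_moebiusDivSum_exp_sub_le {t u : ℝ} (htu : t ≤ u) :
    |moebiusDivSum (Real.exp u) - moebiusDivSum (Real.exp t)| ≤ 2 * (u - t) + Real.exp (-t) := by
  rcases le_total (u - t) 1 with h | h
  · have hexp : Real.exp (u - t) - 1 ≤ 2 * (u - t) := by
      have := (abs_le.1 (Real.abs_exp_sub_one_sub_id_le
        (by rwa [abs_of_nonneg (sub_nonneg.2 htu)] : |u - t| ≤ 1))).2
      nlinarith
    refine (abs_moebiusDivSum_sub_le (Real.exp_pos t) (Real.exp_le_exp.2 htu)).trans ?_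
    rw [add_div, sub_div, div_self (Real.exp_ne_zero t), ← Real.exp_sub, one_div, ← Real.exp_neg]
    linarith
  · have hone := abs_moebiusDivSum_le_one
    linarith [abs_sub (moebiusDivSum (Real.exp u)) (moebiusDivSum (Real.exp t)),
      hone (Real.exp u), hone (Real.exp t), Real.exp_pos (-t)]

lemma LSeries_moebius_div {s : ℂ} :
    LSeries (fun n => (((moebius n : ℝ) / n : ℝ) : ℂ)) s =
      LSeries (fun n => (moebius n : ℂ)) (s + 1) :=
  tsum_congr fun n => by
    rcases eq_or_ne n 0 with rfl | hn
    · simp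
    · rw [LSeries.term_of_ne_zero hn, LSeries.term_of_ne_zero hn,
        Complex.cpow_add _ _ (Nat.cast_ne_zero.2 hn), Complex.cpow_one]
      push_cast
      rw [div_div, mul_comm]

lemma LSeriesSummable_moebius_div {s : ℂ} (hs : 0 < s.re) :
    LSeriesSummable (fun n => (((moebius n : ℝ) / n : ℝ) : ℂ)) s :=
  LSeriesSummable_of_le_const_mul_rpow (x := 0) (by linarith) ⟨1, fun n _ => by
    rw [Complex.norm_real, zero_sub, Real.rpow_neg_one, one_mul]
    exact abs_moebius_div_le n⟩

lemma mellin_moebiusDivSum {s : ℂ} (hs : 0 < s.re) :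
    mellin (fun t => (moebiusDivSum t : ℂ)) (-s) = (riemannZeta₁ (s + 1))⁻¹ := by
  have hs0 : s ≠ 0 := by rintro rfl; simp at hs
  have hre : 1 < (s + 1).re := by simpa using hs
  have hL := LSeries_eq_mul_integral _ le_rfl hs (LSeriesSummable_moebius_div hs)
    (.of_bound 1 (.of_forall fun N => by
      rw [← Complex.ofReal_sum, Complex.norm_real, Real.rpow_zero, norm_one, mul_one]
      exact abs_sum_moebius_div_le_one N))
  have hzeta := LSeries_one_mul_Lseries_moebius hre
  rw [LSeries_one_eq_riemannZeta hre, riemannZeta_eq_inv_sub_mul (by simpa using hs0),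
    ← LSeries_moebius_div, hL] at hzeta
  rw [mellin_neg_eq_setIntegral_Ioi_one (by simp +contextual [moebiusDivSum_of_lt_one])]
  simp only [moebiusDivSum, Complex.ofReal_sum]
  rw [add_sub_cancel_right] at hzeta
  refine eq_inv_of_mul_eq_one_left (.trans ?_ hzeta)
  rw [mul_mul_mul_comm, inv_mul_cancel₀ hs0, one_mul, mul_comm]

lemma mellin_log_moebiusDivSum {s : ℂ} (hs : 0 < s.re) :
    mellin (fun t => Real.log t • (moebiusDivSum t : ℂ)) (-s) =
      deriv riemannZeta₁ (s + 1) / riemannZeta₁ (s + 1) ^ 2 := by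
  have hmellin := hasDerivAt_mellin_neg (g := fun t => (moebiusDivSum t : ℂ))
    (by simp +contextual [moebiusDivSum_of_lt_one]) (by simpa using abs_moebiusDivSum_le_one)
    (Complex.measurable_ofReal.comp measurable_moebiusDivSum) hs
  have hinv := ((differentiable_riemannZeta₁ (s + 1)).hasDerivAt.comp_add_const s 1).fun_inv
    (riemannZeta₁_ne_zero (by simpa using hs.le))
  have heq := hmellin.unique (hinv.congr_of_eventuallyEq ?_)
  · rw [← neg_inj, heq, neg_div]
  · filter_upwards [(isOpen_lt continuous_const Complex.continuous_re).mem_nhds hs] with z hz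
    exact mellin_moebiusDivSum hz

/-- The function `t ↦ e ^ (-σ t) * t * m (e ^ t)`, whose Fourier transform at `ξ` is the value of
`ζ₁' / ζ₁ ^ 2` at `1 + σ + 2πiξ`. -/
noncomputable def dampedMoebius (σ t : ℝ) : ℂ :=
  ((Real.exp (-σ * t) * t * moebiusDivSum (Real.exp t) : ℝ) : ℂ)

lemma fourier_dampedMoebius {σ : ℝ} (hσ : 0 < σ) (ξ : ℝ) :
    𝓕 (dampedMoebius σ) ξ =
      deriv riemannZeta₁ (σ + 2 * Real.pi * ξ * Complex.I + 1) /
        riemannZeta₁ (σ + 2 * Real.pi * ξ * Complex.I + 1) ^ 2 := by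
  rw [← mellin_log_moebiusDivSum (by simpa using hσ), ← mellin_comp_inv, mellin_eq_fourier]
  congr! 1
  · funext t
    simp [dampedMoebius, ← Real.exp_neg, mul_assoc]
  · simp

lemma integrable_dampedMoebius {σ : ℝ} (hσ : 0 < σ) : Integrable (dampedMoebius σ) := by
  have hdom : IntegrableOn (fun t : ℝ => t * Real.exp (-σ * t)) (Set.Ioi 0) := by
    simpa using integrableOn_rpow_mul_exp_neg_mul_rpow (s := 1) (by norm_num) one_pos hσ
  have hmeas : Measurable (dampedMoebius σ) := by
    have := measurable_moebiusDivSum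
    unfold dampedMoebius
    fun_prop
  refine (hdom.integrable_indicator measurableSet_Ioi).mono' hmeas.aestronglyMeasurable
    (.of_forall fun t => ?_)
  rcases le_or_gt t 0 with ht | ht
  · have hzero : t * moebiusDivSum (Real.exp t) = 0 := by
      rcases ht.eq_or_lt with rfl | ht
      · rw [zero_mul]
      · rw [moebiusDivSum_of_lt_one (Real.exp_lt_one_iff.2 ht), mul_zero]
    rw [dampedMoebius, mul_assoc, hzero, mul_zero,
      Set.indicator_of_notMem (s := Set.Ioi 0) ht.not_gt]
    simp
  · rw [dampedMoebius, Complex.norm_real, Set.indicator_of_mem (s := Set.Ioi 0) ht, norm_mul,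
      mul_comm t, Real.norm_of_nonneg (by positivity)]
    exact mul_le_of_le_one_right (by positivity) (abs_moebiusDivSum_le_one _)

end MoebiusSum

section GaussianSmoothing

open MeasureTheory

open scoped FourierTransform

lemma norm_fourier_comp_add_mul (g : ℝ → ℂ) (a : ℝ) {δ : ℝ} (hδ : 0 < δ) (ξ : ℝ) :
    ‖𝓕 (fun v => g (a + δ * v)) ξ‖ = δ⁻¹ * ‖𝓕 g (ξ / δ)‖ := by
  have hshift : 𝓕 (fun v => g (v + a)) (ξ / δ) =
      Real.fourierChar (inner ℝ a (ξ / δ)) • 𝓕 g (ξ / δ) :=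
    congrFun (VectorFourier.fourierIntegral_comp_add_right Real.fourierChar volume (innerₗ ℝ) g a) _
  have hscale : 𝓕 (fun v => g (a + δ * v)) ξ = δ⁻¹ • 𝓕 (fun v => g (v + a)) (ξ / δ) := by
    rw [Real.fourier_real_eq, Real.fourier_real_eq, ← abs_of_pos (inv_pos.2 hδ),
      ← Measure.integral_comp_mul_left]
    congr! 4 with v
    · field_simp
    · exact add_comm a (δ * v)
  rw [hscale, hshift, norm_smul, Circle.norm_smul, Real.norm_of_nonneg (inv_pos.2 hδ).le]

lemma integrable_one_add_abs_pow_mul_gaussian (k : ℕ) :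
    Integrable fun x : ℝ => (1 + |x|) ^ k * Real.exp (-Real.pi * x ^ 2) := by
  refine ((integrable_exp_neg_mul_sq (b := Real.pi - 1) (by linarith [Real.pi_gt_three])).const_mul
    (k.factorial * Real.exp 2)).mono' (by fun_prop) (.of_forall fun x => ?_)
  have hpow := Real.pow_div_factorial_le_exp (1 + |x|) (by positivity) k
  rw [div_le_iff₀' (by positivity)] at hpow
  rw [Real.norm_of_nonneg (by positivity)]
  calc (1 + |x|) ^ k * Real.exp (-Real.pi * x ^ 2)
      ≤ k.factorial * Real.exp (1 + |x|) * Real.exp (-Real.pi * x ^ 2) := by gcongr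
    _ ≤ k.factorial * Real.exp 2 * Real.exp (-(Real.pi - 1) * x ^ 2) := by
        rw [mul_assoc, mul_assoc, ← Real.exp_add, ← Real.exp_add]
        refine mul_le_mul_of_nonneg_left (Real.exp_le_exp.2 ?_) (by positivity)
        nlinarith [sq_abs x, sq_nonneg (|x| - 1)]

/-- The `k`-th moment of `1 + |x|` for the Gaussian density `exp (-π x ^ 2)`. -/
noncomputable def gaussianMoment (k : ℕ) : ℝ :=
  ∫ x : ℝ, (1 + |x|) ^ k * Real.exp (-Real.pi * x ^ 2)

lemma gaussianMoment_nonneg (k : ℕ) : 0 ≤ gaussianMoment k :=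
  integral_nonneg fun _ => by positivity

lemma fourier_gaussian :
    𝓕 (fun x : ℝ => ((Real.exp (-Real.pi * x ^ 2) : ℝ) : ℂ)) =
      fun x : ℝ => ((Real.exp (-Real.pi * x ^ 2) : ℝ) : ℂ) := by
  simpa using fourier_gaussian_pi (b := 1) (by simp)

lemma integrable_gaussian : Integrable fun x : ℝ => Real.exp (-Real.pi * x ^ 2) :=
  integrable_exp_neg_mul_sq Real.pi_pos

lemma integral_gaussian_eq_one : ∫ x : ℝ, Real.exp (-Real.pi * x ^ 2) = 1 := by
  rw [integral_gaussian, div_self Real.pi_ne_zero, Real.sqrt_one]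

lemma integral_fourier_mul_gaussian {h : ℝ → ℂ} (hh : Integrable h) :
    ∫ ξ, 𝓕 h ξ * ((Real.exp (-Real.pi * ξ ^ 2) : ℝ) : ℂ) =
      ∫ x, h x * ((Real.exp (-Real.pi * x ^ 2) : ℝ) : ℂ) := by
  have hflip : ∫ ξ, 𝓕 h ξ * ((Real.exp (-Real.pi * ξ ^ 2) : ℝ) : ℂ) =
      ∫ x, h x * 𝓕 (fun x : ℝ => ((Real.exp (-Real.pi * x ^ 2) : ℝ) : ℂ)) x := by
    simpa using! VectorFourier.integral_fourierIntegral_smul_eq_flip (L := innerₗ ℝ)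
      Real.continuous_fourierChar continuous_inner hh (integrable_gaussian.ofReal (𝕜 := ℂ))
  rwa [fourier_gaussian] at hflip

/-- Smoothing at scale `δ` truncates the Fourier transform at height `δ⁻¹`. -/
lemma norm_integral_comp_add_mul_mul_gaussian_le {g : ℝ → ℂ} {C : ℝ} {k : ℕ} (hg : Integrable g)
    (hfourier : ∀ ξ, ‖𝓕 g ξ‖ ≤ C * (1 + |ξ|) ^ k) (a : ℝ) {δ : ℝ} (hδ : 0 < δ) (hδ1 : δ ≤ 1) :
    ‖∫ v, g (a + δ * v) * ((Real.exp (-Real.pi * v ^ 2) : ℝ) : ℂ)‖ ≤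
      C * δ⁻¹ ^ (k + 1) * gaussianMoment k := by
  have hC : 0 ≤ C := by simpa using (norm_nonneg _).trans (hfourier 0)
  have hint : Integrable fun v => g (a + δ * v) := (hg.comp_add_left a).comp_mul_left' hδ.ne'
  rw [← integral_fourier_mul_gaussian hint, gaussianMoment, ← integral_const_mul]
  refine norm_integral_le_of_norm_le ((integrable_one_add_abs_pow_mul_gaussian k).const_mul _)
    (.of_forall fun ξ => ?_)
  have hξ : 1 + |ξ / δ| ≤ δ⁻¹ * (1 + |ξ|) := by
    rw [abs_div, abs_of_pos hδ, mul_add, mul_one, div_eq_inv_mul]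
    gcongr
    exact (one_le_inv₀ hδ).2 hδ1
  rw [norm_mul, norm_fourier_comp_add_mul g a hδ, Complex.norm_real,
    Real.norm_of_nonneg (by positivity)]
  calc δ⁻¹ * ‖𝓕 g (ξ / δ)‖ * Real.exp (-Real.pi * ξ ^ 2)
      ≤ δ⁻¹ * (C * (δ⁻¹ * (1 + |ξ|)) ^ k) * Real.exp (-Real.pi * ξ ^ 2) := by
        gcongr
        exact (hfourier _).trans (by gcongr)
    _ = C * δ⁻¹ ^ (k + 1) * ((1 + |ξ|) ^ k * Real.exp (-Real.pi * ξ ^ 2)) := by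
        rw [mul_pow]
        ring

/-- A quantitative Tauberian theorem: `g a` is compared with its Gaussian average at scale `δ`. -/
lemma norm_le_of_norm_fourier_le {g : ℝ → ℂ} {C A B a δ : ℝ} {k : ℕ} (hg : Integrable g)
    (hfourier : ∀ ξ, ‖𝓕 g ξ‖ ≤ C * (1 + |ξ|) ^ k) (hosc : ∀ t, ‖g a - g t‖ ≤ A + B * |a - t|)
    (hB : 0 ≤ B) (hδ : 0 < δ) (hδ1 : δ ≤ 1) :
    ‖g a‖ ≤ C * δ⁻¹ ^ (k + 1) * gaussianMoment k + (A + B * δ) * gaussianMoment 1 := by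
  set γ : ℝ → ℂ := fun v => ((Real.exp (-Real.pi * v ^ 2) : ℝ) : ℂ) with hγ
  have hγint : Integrable γ := integrable_gaussian.ofReal
  have hsmooth : Integrable fun v => g (a + δ * v) * γ v := by
    refine ((hg.comp_add_left a).comp_mul_left' hδ.ne').mul_bdd (c := 1) hγint.aestronglyMeasurable
      (.of_forall fun v => ?_)
    rw [hγ, Complex.norm_real, Real.norm_of_nonneg (Real.exp_pos _).le, Real.exp_le_one_iff]
    nlinarith [sq_nonneg v, Real.pi_pos]
  have hsplit : g a = (∫ v, g (a + δ * v) * γ v) + ∫ v, (g a - g (a + δ * v)) * γ v := by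
    simp only [sub_mul]
    rw [integral_sub (hγint.const_mul _) hsmooth, integral_const_mul, hγ, integral_complex_ofReal,
      integral_gaussian_eq_one, Complex.ofReal_one, mul_one, add_sub_cancel]
  have hdiff : ‖∫ v, (g a - g (a + δ * v)) * γ v‖ ≤ (A + B * δ) * gaussianMoment 1 := by
    rw [gaussianMoment, ← integral_const_mul]
    refine norm_integral_le_of_norm_le ((integrable_one_add_abs_pow_mul_gaussian 1).const_mul _)
      (.of_forall fun v => ?_)
    have hA : 0 ≤ A := by simpa using hosc a
    have hv := hosc (a + δ * v)
    rw [sub_add_cancel_left, abs_neg, abs_mul, abs_of_pos hδ] at hv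
    rw [norm_mul, hγ, Complex.norm_real, Real.norm_of_nonneg (Real.exp_pos _).le, pow_one,
      ← mul_assoc]
    gcongr
    linarith [mul_nonneg hA (abs_nonneg v), mul_nonneg hB hδ.le]
  rw [hsplit]
  exact (norm_add_le _ _).trans (add_le_add
    (norm_integral_comp_add_mul_mul_gaussian_le hg hfourier a hδ hδ1) hdiff)

end GaussianSmoothing

section MoebiusDecay

open scoped FourierTransform

lemma exists_norm_fourier_dampedMoebius_le :
    ∃ C, ∀ σ, 0 < σ → σ ≤ 1 → ∀ ξ, ‖𝓕 (dampedMoebius σ) ξ‖ ≤ C * (1 + |ξ|) ^ 18 := by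
  obtain ⟨C, hC⟩ := exists_norm_deriv_div_sq_riemannZeta₁_le
  have hC0 : 0 ≤ C := by simpa using (norm_nonneg _).trans (hC 1 (by simp) (by simp))
  refine ⟨C * (2 * Real.pi) ^ 18, fun σ hσ hσ1 ξ => ?_⟩
  rw [fourier_dampedMoebius hσ]
  refine (hC _ (by simp [hσ.le]) (by simpa using by linarith)).trans ?_
  have him : (σ + 2 * Real.pi * ξ * Complex.I + 1 : ℂ).im = 2 * Real.pi * ξ := by simp
  rw [him, abs_mul, abs_of_pos Real.two_pi_pos, mul_assoc C, ← mul_pow]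
  gcongr
  linarith [Real.pi_gt_three]

lemma mul_exp_neg_le_one (t : ℝ) : t * Real.exp (-t) ≤ 1 := by
  rw [Real.exp_neg, ← div_eq_mul_inv, div_le_one (Real.exp_pos t)]
  linarith [Real.add_one_le_exp t]

lemma abs_exp_neg_mul_mul_sub_le {σ s t : ℝ} (hσ : 0 ≤ σ) (hs : 0 ≤ s) (ht : 0 ≤ t) :
    |Real.exp (-σ * t) * t - Real.exp (-σ * s) * s| ≤ |t - s| := by
  have hderiv : ∀ x : ℝ,
      HasDerivAt (fun u => Real.exp (-σ * u) * u) (Real.exp (-σ * x) * (1 - σ * x)) x := fun x => by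
    have := (((hasDerivAt_id' x).const_mul (-σ)).exp).mul (hasDerivAt_id' x)
    convert! this using 1
    ring
  have hbound : ∀ x ∈ Set.Ici (0 : ℝ), ‖Real.exp (-σ * x) * (1 - σ * x)‖ ≤ 1 := fun x hx => by
    have hσx : 0 ≤ σ * x := mul_nonneg hσ hx
    rw [norm_mul, Real.norm_of_nonneg (Real.exp_pos _).le, neg_mul, Real.exp_neg,
      inv_mul_le_one₀ (Real.exp_pos _), Real.norm_eq_abs, abs_le]
    constructor <;> linarith [Real.add_one_le_exp (σ * x)]
  simpa using (convex_Ici 0).norm_image_sub_le_of_norm_hasDerivWithin_le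
    (fun x _ => (hderiv x).hasDerivWithinAt) hbound hs ht

lemma mul_abs_moebiusDivSum_exp_sub_le {t u : ℝ} (hu : 0 ≤ u) (ht : 0 ≤ t) :
    u * |moebiusDivSum (Real.exp u) - moebiusDivSum (Real.exp t)| ≤
      1 + (2 * u + 1) * |u - t| := by
  rcases le_total t u with htu | htu
  · have hexp : (u - t) * Real.exp (-t) ≤ u - t :=
      mul_le_of_le_one_right (sub_nonneg.2 htu) (Real.exp_le_one_iff.2 (neg_nonpos.2 ht))
    rw [abs_of_nonneg (sub_nonneg.2 htu)]
    nlinarith [mul_le_mul_of_nonneg_left (abs_moebiusDivSum_exp_sub_le htu) hu,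
      mul_exp_neg_le_one t]
  · rw [abs_sub_comm, abs_sub_comm u, abs_of_nonneg (sub_nonneg.2 htu)]
    nlinarith [mul_le_mul_of_nonneg_left (abs_moebiusDivSum_exp_sub_le htu) hu,
      mul_exp_neg_le_one u]

lemma norm_dampedMoebius_inv_sub_le {T : ℝ} (hT : 1 ≤ T) (t : ℝ) :
    ‖dampedMoebius T⁻¹ T - dampedMoebius T⁻¹ t‖ ≤ 1 + 4 * T * |T - t| := by
  have hT0 : 0 < T := one_pos.trans_le hT
  have hm := abs_moebiusDivSum_le_one
  have hφT : |Real.exp (-T⁻¹ * T) * T| ≤ T := by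
    rw [abs_of_nonneg (by positivity)]
    exact mul_le_of_le_one_left hT0.le (Real.exp_le_one_iff.2 (by simp [hT0.ne']))
  rw [dampedMoebius, dampedMoebius, ← Complex.ofReal_sub, Complex.norm_real, Real.norm_eq_abs]
  rcases lt_or_ge t 0 with ht | ht
  · rw [moebiusDivSum_of_lt_one (Real.exp_lt_one_iff.2 ht), mul_zero, sub_zero, abs_mul,
      abs_of_pos (by linarith : 0 < T - t)]
    nlinarith [mul_le_mul hφT (hm (Real.exp T)) (abs_nonneg _) hT0.le]
  calc |Real.exp (-T⁻¹ * T) * T * moebiusDivSum (Real.exp T) -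
        Real.exp (-T⁻¹ * t) * t * moebiusDivSum (Real.exp t)|
      = |Real.exp (-T⁻¹ * T) * T * (moebiusDivSum (Real.exp T) - moebiusDivSum (Real.exp t)) +
          (Real.exp (-T⁻¹ * T) * T - Real.exp (-T⁻¹ * t) * t) * moebiusDivSum (Real.exp t)| := by
        ring_nf
    _ ≤ T * |moebiusDivSum (Real.exp T) - moebiusDivSum (Real.exp t)| + |T - t| * 1 := by
        refine (abs_add_le _ _).trans ?_
        rw [abs_mul, abs_mul _ (moebiusDivSum (Real.exp t))]
        exact add_le_add (mul_le_mul_of_nonneg_right hφT (abs_nonneg _)) (mul_le_mul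
          (abs_exp_neg_mul_mul_sub_le (inv_nonneg.2 hT0.le) ht hT0.le) (hm _) (abs_nonneg _)
          (abs_nonneg _))
    _ ≤ 1 + 4 * T * |T - t| := by
        nlinarith [mul_abs_moebiusDivSum_exp_sub_le hT0.le ht, abs_nonneg (T - t)]

lemma exists_abs_moebiusDivSum_exp_le :
    ∃ K, ∀ T, 1 ≤ T → |moebiusDivSum (Real.exp T)| ≤ K * T ^ (-(1 / 20) : ℝ) := by
  obtain ⟨C, hC⟩ := exists_norm_fourier_dampedMoebius_le
  refine ⟨Real.exp 1 * (C * gaussianMoment 18 + 5 * gaussianMoment 1), fun T hT => ?_⟩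
  have hT0 : 0 < T := one_pos.trans_le hT
  set δ := T ^ (-(1 / 20) : ℝ) with hδ
  have hδ0 : 0 < δ := by positivity
  have hδ1 : δ ≤ 1 := Real.rpow_le_one_of_one_le_of_nonpos hT (by norm_num)
  -- The exponent balances the two terms of `norm_le_of_norm_fourier_le`.
  have hδT : δ⁻¹ ^ 19 = T * δ := by
    rw [hδ, ← Real.rpow_neg hT0.le, ← Real.rpow_natCast, ← Real.rpow_mul hT0.le,
      ← Real.rpow_one_add' hT0.le (by norm_num)]
    norm_num
  have hTδ : 1 ≤ T * δ := hδT ▸ one_le_pow₀ ((one_le_inv₀ hδ0).2 hδ1)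
  have hM := gaussianMoment_nonneg 1
  have hD : ‖dampedMoebius T⁻¹ T‖ = T * |moebiusDivSum (Real.exp T)| / Real.exp 1 := by
    rw [dampedMoebius, Complex.norm_real, neg_mul, inv_mul_cancel₀ hT0.ne', Real.exp_neg,
      norm_mul, Real.norm_of_nonneg (by positivity), Real.norm_eq_abs]
    ring
  have htauber := norm_le_of_norm_fourier_le (integrable_dampedMoebius (inv_pos.2 hT0))
    (hC _ (inv_pos.2 hT0) (inv_le_one_of_one_le₀ hT)) (norm_dampedMoebius_inv_sub_le hT)
    (by positivity) hδ0 hδ1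
  rw [hD, div_le_iff₀ (Real.exp_pos 1), hδT] at htauber
  refine le_of_mul_le_mul_left (htauber.trans ?_) hT0
  calc _ ≤ (C * (T * δ) * gaussianMoment 18 + (T * δ + 4 * T * δ) * gaussianMoment 1) *
        Real.exp 1 := by gcongr
    _ = _ := by ring

lemma exists_abs_moebiusDivSum_le :
    ∃ K, ∀ x, 1 ≤ x → |moebiusDivSum x| ≤ K * (1 + Real.log x) ^ (-(1 / 20) : ℝ) := by
  obtain ⟨K, hK⟩ := exists_abs_moebiusDivSum_exp_le
  have hK0 : 0 ≤ K := by simpa using (abs_nonneg _).trans (hK 1 le_rfl)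
  refine ⟨(K + 1) * 2 ^ (1 / 20 : ℝ), fun x hx => ?_⟩
  have hlog := Real.log_nonneg hx
  have hhalf : (2 : ℝ) ^ (1 / 20 : ℝ) * (1 + Real.log x) ^ (-(1 / 20) : ℝ) =
      ((1 + Real.log x) / 2) ^ (-(1 / 20) : ℝ) := by
    rw [Real.div_rpow (by positivity) zero_le_two, Real.rpow_neg zero_le_two, div_inv_eq_mul,
      mul_comm]
  rw [mul_assoc, hhalf]
  rcases le_total 1 (Real.log x) with h | h
  · have hm := hK _ h
    rw [Real.exp_log (one_pos.trans_le hx)] at hm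
    refine hm.trans (mul_le_mul (by linarith) ?_ (by positivity) (by positivity))
    exact Real.rpow_le_rpow_of_nonpos (by positivity) (by linarith) (by norm_num)
  · refine (abs_moebiusDivSum_le_one x).trans ?_
    have := Real.one_le_rpow_of_pos_of_le_one_of_nonpos (x := (1 + Real.log x) / 2)
      (z := -(1 / 20)) (by positivity) (by linarith) (by norm_num)
    nlinarith

end MoebiusDecay

section PrimeLogSum

/-- `∑ (1 + log (x / q)) ^ (-c) / q` over the primes `q ≤ x`. -/
noncomputable def primeLogSum (c x : ℝ) : ℝ :=
  ∑ q ∈ Icc 1 ⌊x⌋₊ with q.Prime, (1 + Real.log (x / q)) ^ (-c) / q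

lemma one_le_div_of_mem_Icc_floor {q : ℕ} {x : ℝ} (hq : q ∈ Icc 1 ⌊x⌋₊) : 1 ≤ x / q := by
  obtain ⟨hq1, hqx⟩ := mem_Icc.1 hq
  exact (one_le_div (mod_cast hq1)).2 ((Nat.le_floor_iff' (Nat.ne_of_gt hq1)).1 hqx)

lemma primeLogSum_nonneg (c x : ℝ) : 0 ≤ primeLogSum c x :=
  sum_nonneg fun q hq => by
    have := Real.log_nonneg (one_le_div_of_mem_Icc_floor (mem_filter.1 hq).1)
    positivity

lemma primeCounting_le_self (n : ℕ) : Nat.primeCounting n ≤ n := by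
  rw [← Nat.primesLE_card_eq_primeCounting, Nat.primesLE_eq_filter_Icc_one]
  simpa using card_filter_le (Icc 1 n) Nat.Prime

lemma one_add_log_mul_primeCounting_le {x : ℝ} (hx : 1 ≤ x) :
    (1 + Real.log x) * Nat.primeCounting ⌊x⌋₊ ≤ 8 * x := by
  rcases le_total (Real.log x) 1 with h | h
  · have hpi : (Nat.primeCounting ⌊x⌋₊ : ℝ) ≤ x :=
      (Nat.cast_le.2 (primeCounting_le_self _)).trans (Nat.floor_le (by positivity))
    nlinarith
  · have hsqrt : 1 + Real.log x ≤ 2 * √x := by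
      have := Real.log_le_sub_one_of_pos (Real.sqrt_pos.2 (one_pos.trans_le hx))
      rw [Real.log_sqrt (by positivity)] at this
      linarith
    have hlog4 : Real.log 4 ≤ 3 / 2 := by
      rw [show (4 : ℝ) = 2 ^ 2 by norm_num, Real.log_pow, Nat.cast_ofNat]
      linarith [Real.log_two_lt_d9]
    have hlogx : 0 < Real.log x := by linarith
    calc (1 + Real.log x) * Nat.primeCounting ⌊x⌋₊
        ≤ (1 + Real.log x) * (Real.log 4 * x / (Real.log x / 2) + √x) := by
          rw [← Real.log_sqrt (by positivity)]
          gcongr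
          exact Chebyshev.pi_le_log4_mul_div ((Real.log_pos_iff (by positivity)).1 hlogx)
      _ = (1 + (Real.log x)⁻¹) * (2 * Real.log 4 * x) + (1 + Real.log x) * √x := by
          field_simp
          ring
      _ ≤ (1 + 1) * (2 * (3 / 2) * x) + 2 * √x * √x := by
          gcongr
          exact inv_le_one_of_one_le₀ h
      _ = 8 * x := by
          rw [mul_assoc 2 √x, Real.mul_self_sqrt (by positivity)]
          ring

lemma div_exp_lt_and_le_of_floor_log_eq {q x : ℝ} {j : ℕ} (hq : 0 < q) (hqx : q ≤ x)
    (hj : ⌊Real.log (x / q)⌋₊ = j) :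
    x / Real.exp j / Real.exp 1 < q ∧ q ≤ x / Real.exp j := by
  have hxq : 0 < x / q := div_pos (hq.trans_le hqx) hq
  rw [Nat.floor_eq_iff (Real.log_nonneg ((one_le_div hq).2 hqx)), Real.le_log_iff_exp_le hxq,
    Real.log_lt_iff_lt_exp hxq, le_div_iff₀ hq, div_lt_iff₀ hq, Real.exp_add] at hj
  rw [div_div, div_lt_iff₀' (by positivity), le_div_iff₀' (by positivity)]
  exact hj.symm

lemma sum_primes_floor_log_eq_inv_le {x : ℝ} {j : ℕ} (hx : 0 < x) (hj : j ≤ Real.log x) :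
    ∑ q ∈ Icc 1 ⌊x⌋₊ with Nat.Prime q ∧ ⌊Real.log (x / q)⌋₊ = j, (q : ℝ)⁻¹ ≤
      8 * Real.exp 1 * (Real.log x - j + 1)⁻¹ := by
  set z := x / Real.exp j with hz
  set B := {q ∈ Icc 1 ⌊x⌋₊ | Nat.Prime q ∧ ⌊Real.log (x / q)⌋₊ = j}
  have hz1 : 1 ≤ z := (one_le_div (Real.exp_pos _)).2 ((Real.le_log_iff_exp_le hx).1 hj)
  have hlogz : Real.log z = Real.log x - j := by
    rw [hz, Real.log_div hx.ne' (Real.exp_ne_zero _), Real.log_exp]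
  have hblock : ∀ q ∈ B, z / Real.exp 1 < q ∧ (q : ℝ) ≤ z := fun q hq => by
    obtain ⟨hqx, hq, hqj⟩ := mem_filter.1 hq
    exact div_exp_lt_and_le_of_floor_log_eq (mod_cast hq.pos)
      ((Nat.le_floor_iff hx.le).1 (mem_Icc.1 hqx).2) hqj
  have hcard : #B ≤ Nat.primeCounting ⌊z⌋₊ := by
    rw [← Nat.primesLE_card_eq_primeCounting, Nat.primesLE_eq_filter_Icc_one]
    refine card_le_card fun q hq => ?_
    have hqp := (mem_filter.1 hq).2.1
    exact mem_filter.2 ⟨mem_Icc.2 ⟨hqp.one_le, Nat.le_floor (hblock q hq).2⟩, hqp⟩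
  calc ∑ q ∈ B, (q : ℝ)⁻¹
      ≤ ∑ _q ∈ B, (z / Real.exp 1)⁻¹ :=
        sum_le_sum fun q hq => inv_anti₀ (by positivity) (hblock q hq).1.le
    _ ≤ Nat.primeCounting ⌊z⌋₊ * (z / Real.exp 1)⁻¹ := by
        rw [sum_const, nsmul_eq_mul]
        gcongr
    _ ≤ 8 * z * (1 + Real.log z)⁻¹ * (z / Real.exp 1)⁻¹ := by
        gcongr
        rw [← div_eq_mul_inv, le_div_iff₀' (by linarith [Real.log_nonneg hz1])]
        exact one_add_log_mul_primeCounting_le hz1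
    _ = 8 * Real.exp 1 * (Real.log x - j + 1)⁻¹ := by
        rw [hlogz, add_comm 1]
        field_simp

lemma inv_mul_rpow_neg_le {c u v : ℝ} (hc : 0 ≤ c) (hc2 : c ≤ 2) (hu : 0 < u) (hv : 0 < v) :
    u⁻¹ * v ^ (-c) ≤ (u * v) ^ (-(c / 2)) * ((1 - c / 2) * u⁻¹ + c / 2 * v⁻¹) := by
  calc u⁻¹ * v ^ (-c)
      = (u * v) ^ (-(c / 2)) * (u⁻¹ ^ (1 - c / 2) * v⁻¹ ^ (c / 2)) := by
        rw [Real.mul_rpow hu.le hv.le, Real.inv_rpow hu.le, Real.inv_rpow hv.le,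
          ← Real.rpow_neg hu.le, ← Real.rpow_neg hv.le, mul_mul_mul_comm, ← Real.rpow_add hu,
          ← Real.rpow_add hv, ← Real.rpow_neg_one]
        ring_nf
    _ ≤ _ := mul_le_mul_of_nonneg_left (Real.geom_mean_le_arith_mean2_weighted (by linarith)
        (by linarith) (inv_pos.2 hu).le (inv_pos.2 hv).le (by ring)) (by positivity)

lemma sum_range_inv_le_one_add_log (n : ℕ) :
    ∑ j ∈ range n, (j + 1 : ℝ)⁻¹ ≤ 1 + Real.log n := by
  simpa [harmonic] using harmonic_le_one_add_log n

lemma sum_inv_mul_rpow_neg_le {c : ℝ} (hc : 0 ≤ c) (hc2 : c ≤ 2) (J : ℕ) :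
    ∑ j ∈ range (J + 1), (J - j + 1 : ℝ)⁻¹ * (j + 1 : ℝ) ^ (-c) ≤
      (J + 1 : ℝ) ^ (-(c / 2)) * (1 + Real.log (J + 1)) := by
  have hreflect : ∑ j ∈ range (J + 1), (J - j + 1 : ℝ)⁻¹ =
      ∑ j ∈ range (J + 1), (j + 1 : ℝ)⁻¹ := by
    rw [← sum_flip]
    refine sum_congr rfl fun j hj => ?_
    rw [Nat.cast_sub (mem_range_succ_iff.1 hj), sub_sub_cancel]
  calc ∑ j ∈ range (J + 1), (J - j + 1 : ℝ)⁻¹ * (j + 1 : ℝ) ^ (-c)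
      ≤ ∑ j ∈ range (J + 1), (J + 1 : ℝ) ^ (-(c / 2)) *
          ((1 - c / 2) * (J - j + 1 : ℝ)⁻¹ + c / 2 * (j + 1 : ℝ)⁻¹) := by
        refine sum_le_sum fun j hj => ?_
        have hjJ : (j : ℝ) ≤ J := mod_cast mem_range_succ_iff.1 hj
        have : (0 : ℝ) ≤ j := j.cast_nonneg
        refine (inv_mul_rpow_neg_le hc hc2 (by linarith) (by linarith)).trans
          (mul_le_mul_of_nonneg_right (Real.rpow_le_rpow_of_nonpos (by positivity) ?_
            (by linarith)) ?_)
        · nlinarith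
        · have := sub_nonneg.2 hjJ
          have : 0 ≤ 1 - c / 2 := by linarith
          positivity
    _ = (J + 1 : ℝ) ^ (-(c / 2)) * ∑ j ∈ range (J + 1), (j + 1 : ℝ)⁻¹ := by
        rw [← mul_sum, sum_add_distrib, ← mul_sum, ← mul_sum, hreflect]
        ring
    _ ≤ (J + 1 : ℝ) ^ (-(c / 2)) * (1 + Real.log (J + 1)) := by
        gcongr
        exact_mod_cast sum_range_inv_le_one_add_log (J + 1)

lemma primeLogSum_le {c x : ℝ} (hc : 0 ≤ c) (hx : 1 ≤ x) :
    primeLogSum c x ≤ 8 * Real.exp 1 * ∑ j ∈ range (⌊Real.log x⌋₊ + 1),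
      (⌊Real.log x⌋₊ - j + 1 : ℝ)⁻¹ * (j + 1 : ℝ) ^ (-c) := by
  have hx0 : 0 < x := one_pos.trans_le hx
  have hlog := Real.log_nonneg hx
  have hmaps : ∀ q ∈ {q ∈ Icc 1 ⌊x⌋₊ | q.Prime},
      ⌊Real.log (x / q)⌋₊ ∈ range (⌊Real.log x⌋₊ + 1) := fun q hq => by
    have hq1 : (1 : ℝ) ≤ q := mod_cast (mem_filter.1 hq).2.one_le
    rw [mem_range_succ_iff]
    gcongr
    exact div_le_self hx0.le hq1
  rw [primeLogSum, ← sum_fiberwise_of_maps_to hmaps, mul_sum]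
  refine sum_le_sum fun j hj => ?_
  have hJ : (j : ℝ) ≤ ⌊Real.log x⌋₊ := mod_cast mem_range_succ_iff.1 hj
  have hJx := Nat.floor_le hlog
  rw [filter_filter]
  calc ∑ q ∈ Icc 1 ⌊x⌋₊ with Nat.Prime q ∧ ⌊Real.log (x / q)⌋₊ = j,
        (1 + Real.log (x / q)) ^ (-c) / q
      ≤ ∑ q ∈ Icc 1 ⌊x⌋₊ with Nat.Prime q ∧ ⌊Real.log (x / q)⌋₊ = j,
          (j + 1 : ℝ) ^ (-c) * (q : ℝ)⁻¹ := by
        refine sum_le_sum fun q hq => ?_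
        obtain ⟨hqx, -, rfl⟩ := mem_filter.1 hq
        have := Nat.floor_le (Real.log_nonneg (one_le_div_of_mem_Icc_floor hqx))
        rw [div_eq_mul_inv]
        gcongr ?_ * _
        exact Real.rpow_le_rpow_of_nonpos (by positivity) (by linarith) (neg_nonpos.2 hc)
    _ ≤ (j + 1 : ℝ) ^ (-c) * (8 * Real.exp 1 * (Real.log x - j + 1)⁻¹) := by
        rw [← mul_sum]
        gcongr
        exact sum_primes_floor_log_eq_inv_le hx0 (hJ.trans hJx)
    _ ≤ (j + 1 : ℝ) ^ (-c) * (8 * Real.exp 1 * (⌊Real.log x⌋₊ - j + 1 : ℝ)⁻¹) := by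
        gcongr
    _ = 8 * Real.exp 1 * ((⌊Real.log x⌋₊ - j + 1 : ℝ)⁻¹ * (j + 1 : ℝ) ^ (-c)) := by ring

lemma tendsto_rpow_neg_mul_one_add_log {c : ℝ} (hc : 0 < c) :
    Tendsto (fun t : ℝ => t ^ (-c) * (1 + Real.log t)) atTop (nhds 0) := by
  have hlog : Tendsto (fun t : ℝ => Real.log t / t ^ c) atTop (nhds 0) :=
    (isLittleO_log_rpow_atTop hc).tendsto_div_nhds_zero
  have hsum := (tendsto_rpow_neg_atTop hc).add hlog
  rw [add_zero] at hsum
  refine hsum.congr' ?_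
  filter_upwards [eventually_ge_atTop 0] with t ht
  rw [Real.rpow_neg ht]
  ring

lemma tendsto_primeLogSum {c : ℝ} (hc : 0 < c) (hc2 : c ≤ 2) :
    Tendsto (primeLogSum c) atTop (nhds 0) := by
  have hJ : Tendsto (fun x : ℝ => (⌊Real.log x⌋₊ : ℝ) + 1) atTop atTop :=
    tendsto_atTop_add_const_right _ _
      (tendsto_natCast_atTop_atTop.comp (tendsto_nat_floor_atTop.comp Real.tendsto_log_atTop))
  have hbound := ((tendsto_rpow_neg_mul_one_add_log (half_pos hc)).comp hJ).const_mul
    (8 * Real.exp 1)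
  rw [mul_zero] at hbound
  refine squeeze_zero' (Eventually.of_forall (primeLogSum_nonneg c)) ?_ hbound
  filter_upwards [eventually_ge_atTop 1] with x hx
  refine (primeLogSum_le hc.le hx).trans ?_
  gcongr
  exact sum_inv_mul_rpow_neg_le hc.le hc2 _

end PrimeLogSum

section CoprimeMoebiusSum

variable {N q : ℕ}

/-- `∑ μ(n) / n` over the `n ≤ x` coprime to `N`. -/
noncomputable def coprimeMoebiusDivSum (N : ℕ) (x : ℝ) : ℝ :=
  ∑ n ∈ Icc 1 ⌊x⌋₊ with n.Coprime N, (moebius n : ℝ) / n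

/-- `∑ μ(n) ω(n) / n` over the `n ≤ x` coprime to `N`. -/
noncomputable def coprimeMoebiusOmegaDivSum (N : ℕ) (x : ℝ) : ℝ :=
  ∑ n ∈ Icc 1 ⌊x⌋₊ with n.Coprime N, (moebius n : ℝ) * #n.primeFactors / n

lemma coprimeMoebiusDivSum_one : coprimeMoebiusDivSum 1 = moebiusDivSum := by
  ext x
  simp [coprimeMoebiusDivSum, moebiusDivSum]

lemma coprimeMoebiusDivSum_of_lt_one {x : ℝ} (hx : x < 1) : coprimeMoebiusDivSum N x = 0 := by
  simp [coprimeMoebiusDivSum, Nat.floor_eq_zero.2 hx]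

lemma sum_coprime_eq_add_sum_dvd {M : Type*} [AddCommMonoid M] (hq : q.Prime) (s : Finset ℕ)
    (f : ℕ → M) :
    ∑ n ∈ s with n.Coprime N, f n =
      ∑ n ∈ s with n.Coprime (q * N), f n + ∑ n ∈ s with n.Coprime N ∧ q ∣ n, f n := by
  rw [← sum_filter_not_add_sum_filter _ (q ∣ ·), filter_filter, filter_filter]
  simp only [Nat.coprime_mul_iff_right, Nat.coprime_comm (m := q), hq.coprime_iff_not_dvd,
    and_comm]

lemma sum_coprime_dvd_moebius_div (hq : q.Prime) (hqN : q.Coprime N) (x : ℝ) :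
    ∑ n ∈ Icc 1 ⌊x⌋₊ with n.Coprime N ∧ q ∣ n, (moebius n : ℝ) / n =
      -(coprimeMoebiusDivSum (q * N) (x / q) / q) := by
  rw [coprimeMoebiusDivSum, sum_div, ← sum_neg_distrib, Nat.floor_div_natCast]
  have hmem : ∀ m, q * m ∈ Icc 1 ⌊x⌋₊ ↔ m ∈ Icc 1 (⌊x⌋₊ / q) := fun m => by
    rw [mem_Icc, mem_Icc, Nat.le_div_iff_mul_le hq.pos, mul_comm q, Nat.one_le_iff_ne_zero,
      Nat.one_le_iff_ne_zero, mul_ne_zero_iff_right hq.ne_zero]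
  have hcop : ∀ m, (q * m).Coprime N ↔ m.Coprime N := fun m => by
    rw [Nat.coprime_mul_iff_left, and_iff_right hqN]
  simp only [Nat.coprime_mul_iff_right]
  refine (sum_of_injOn (q * ·) (mul_right_injective₀ hq.ne_zero).injOn (fun m hm => ?_)
    (fun n hn hnot => ?_) fun m hm => ?_).symm
  · rw [mem_coe, mem_filter] at hm
    exact mem_coe.2 (mem_filter.2 ⟨(hmem m).2 hm.1, (hcop m).2 hm.2.2, dvd_mul_right q m⟩)
  · obtain ⟨hn, hnN, m, rfl⟩ := mem_filter.1 hn
    have hdvd : q ∣ m := by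
      by_contra hdvd
      exact hnot ⟨m, mem_coe.2 (mem_filter.2 ⟨(hmem m).1 hn,
        (hq.coprime_iff_not_dvd.2 hdvd).symm, (hcop m).1 hnN⟩), rfl⟩
    have hsq : ¬ Squarefree (q * m) := fun hsq => hq.not_isUnit (hsq q (mul_dvd_mul_left q hdvd))
    rw [moebius_eq_zero_of_not_squarefree hsq, Int.cast_zero, zero_div]
  · have hqm : q.Coprime m := (mem_filter.1 hm).2.1.symm
    rw [isMultiplicative_moebius.map_mul_of_coprime hqm, moebius_apply_prime hq]
    push_cast
    rw [neg_one_mul, neg_div, div_div, mul_comm (m : ℝ)]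

lemma coprimeMoebiusDivSum_mul_eq (hq : q.Prime) (hqN : q.Coprime N) (x : ℝ) :
    coprimeMoebiusDivSum (q * N) x =
      coprimeMoebiusDivSum N x + coprimeMoebiusDivSum (q * N) (x / q) / q := by
  rw [coprimeMoebiusDivSum, coprimeMoebiusDivSum, sum_coprime_eq_add_sum_dvd (N := N) hq,
    sum_coprime_dvd_moebius_div hq hqN]
  ring

lemma coprimeMoebiusOmegaDivSum_eq (N : ℕ) (x : ℝ) :
    coprimeMoebiusOmegaDivSum N x = -∑ q ∈ Icc 1 ⌊x⌋₊ with q.Prime ∧ q.Coprime N,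
      coprimeMoebiusDivSum (q * N) (x / q) / q := by
  rw [← sum_neg_distrib]
  calc coprimeMoebiusOmegaDivSum N x
      = ∑ n ∈ Icc 1 ⌊x⌋₊ with n.Coprime N, ∑ _q ∈ n.primeFactors, (moebius n : ℝ) / n :=
        sum_congr rfl fun n _ => by
          rw [sum_const, nsmul_eq_mul, mul_comm (moebius n : ℝ), mul_div_assoc]
    _ = ∑ q ∈ Icc 1 ⌊x⌋₊ with q.Prime ∧ q.Coprime N,
          ∑ n ∈ Icc 1 ⌊x⌋₊ with n.Coprime N ∧ q ∣ n, (moebius n : ℝ) / n :=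
        sum_comm' fun n q => by
          simp only [mem_filter, mem_Icc, Nat.mem_primeFactors]
          constructor
          · rintro ⟨⟨hn, hnN⟩, hq, hqn, -⟩
            exact ⟨⟨hn, hnN, hqn⟩, ⟨hq.one_le, (Nat.le_of_dvd hn.1 hqn).trans hn.2⟩, hq,
              hnN.coprime_dvd_left hqn⟩
          · rintro ⟨⟨hn, hnN, hqn⟩, -, hq, -⟩
            exact ⟨⟨hn, hnN⟩, hq, hqn, Nat.ne_of_gt hn.1⟩
    _ = _ := sum_congr rfl fun q hq => by
        obtain ⟨hq, hqN⟩ := (mem_filter.1 hq).2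
        exact sum_coprime_dvd_moebius_div hq hqN x

lemma one_add_log_rpow_neg_le {c y z : ℝ} (hc : 0 ≤ c) (hc1 : c ≤ 1) (hy : 1 ≤ y) (hz : 1 ≤ z) :
    (1 + Real.log y) ^ (-c) ≤ (1 + Real.log z) * (1 + Real.log (y * z)) ^ (-c) := by
  have hy0 := Real.log_nonneg hy
  have hz0 := Real.log_nonneg hz
  have hmul : 1 + Real.log (y * z) ≤ (1 + Real.log y) * (1 + Real.log z) := by
    rw [Real.log_mul (by positivity) (by positivity)]
    nlinarith
  have hyz : 0 < 1 + Real.log (y * z) := by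
    linarith [Real.log_nonneg (one_le_mul_of_one_le_of_one_le hy hz)]
  calc (1 + Real.log y) ^ (-c)
      = (1 + Real.log z) ^ c * ((1 + Real.log y) * (1 + Real.log z)) ^ (-c) := by
        rw [Real.mul_rpow (by positivity) (by positivity), mul_left_comm,
          ← Real.rpow_add (by positivity), add_neg_cancel, Real.rpow_zero, mul_one]
    _ ≤ (1 + Real.log z) * (1 + Real.log (y * z)) ^ (-c) :=
        mul_le_mul (Real.rpow_le_self_of_one_le (by linarith) hc1)
          (Real.rpow_le_rpow_of_nonpos hyz hmul (neg_nonpos.2 hc)) (by positivity) (by positivity)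

lemma seven_mul_one_add_log_le {t : ℝ} (ht : 2 ≤ t) : 7 * (1 + Real.log t) ≤ 6 * t := by
  have hlog := Real.log_le_sub_one_of_pos (by positivity : 0 < t / 2)
  rw [Real.log_div (by positivity) two_ne_zero] at hlog
  linarith [Real.log_two_lt_d9]

/-- Iterating `coprimeMoebiusDivSum_mul_eq` costs a geometric series of ratio at most
`(1 + log q) / q ≤ 6 / 7`. -/
lemma abs_coprimeMoebiusDivSum_mul_le {C c : ℝ} (hc : 0 ≤ c) (hc1 : c ≤ 1)
    (hN : ∀ x, 1 ≤ x → |coprimeMoebiusDivSum N x| ≤ C * (1 + Real.log x) ^ (-c))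
    (hq : q.Prime) (hqN : q.Coprime N) {x : ℝ} (hx : 1 ≤ x) :
    |coprimeMoebiusDivSum (q * N) x| ≤ 7 * C * (1 + Real.log x) ^ (-c) := by
  have hC : 0 ≤ C := by simpa using (abs_nonneg _).trans (hN 1 le_rfl)
  have hq0 : (0 : ℝ) < q := mod_cast hq.pos
  have hq2 : (2 : ℝ) ≤ q := mod_cast hq.two_le
  induction h : ⌊x⌋₊ using Nat.strong_induction_on generalizing x with
  | _ k ih =>
    have hlog := Real.log_nonneg hx
    have hrec : |coprimeMoebiusDivSum (q * N) (x / q)| / q ≤ 6 * C * (1 + Real.log x) ^ (-c) := by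
      rcases lt_or_ge (x / q) 1 with hxq | hxq
      · rw [coprimeMoebiusDivSum_of_lt_one hxq, abs_zero, zero_div]
        positivity
      · have hfloor : ⌊x / q⌋₊ < k := by
          rw [Nat.floor_div_natCast, h]
          exact Nat.div_lt_self (h ▸ Nat.floor_pos.2 hx) hq.one_lt
        have hlogq := one_add_log_rpow_neg_le hc hc1 hxq (z := q) (by linarith)
        rw [div_mul_cancel₀ _ hq0.ne'] at hlogq
        rw [div_le_iff₀ hq0]
        calc _ ≤ 7 * C * ((1 + Real.log q) * (1 + Real.log x) ^ (-c)) :=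
              (ih _ hfloor hxq rfl).trans (by gcongr)
          _ = C * (1 + Real.log x) ^ (-c) * (7 * (1 + Real.log q)) := by ring
          _ ≤ C * (1 + Real.log x) ^ (-c) * (6 * q) :=
              mul_le_mul_of_nonneg_left (seven_mul_one_add_log_le hq2) (by positivity)
          _ = _ := by ring
    rw [coprimeMoebiusDivSum_mul_eq hq hqN]
    refine (abs_add_le _ _).trans ?_
    rw [abs_div, Nat.abs_cast]
    linarith [hN x hx]

lemma exists_abs_coprimeMoebiusDivSum_le (hN : N ≠ 0) :
    ∃ C, ∀ x, 1 ≤ x → |coprimeMoebiusDivSum N x| ≤ C * (1 + Real.log x) ^ (-(1 / 20) : ℝ) := by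
  induction N using induction_on_primes with
  | zero => exact absurd rfl hN
  | one => simpa only [coprimeMoebiusDivSum_one] using exists_abs_moebiusDivSum_le
  | prime_mul q N hq ih =>
    obtain ⟨C, hC⟩ := ih (right_ne_zero_of_mul hN)
    by_cases hqN : q.Coprime N
    · exact ⟨7 * C, fun x hx =>
        abs_coprimeMoebiusDivSum_mul_le (by norm_num) (by norm_num) hC hq hqN hx⟩
    · have hdvd : q ∣ N := by rwa [hq.coprime_iff_not_dvd, not_not] at hqN
      have hcop : ∀ n : ℕ, n.Coprime (q * N) ↔ n.Coprime N := fun n =>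
        ⟨fun h => h.coprime_mul_left_right, fun h =>
          Nat.Coprime.mul_right (h.coprime_dvd_right hdvd) h⟩
      simpa only [coprimeMoebiusDivSum, hcop] using ⟨C, hC⟩

lemma exists_abs_coprimeMoebiusOmegaDivSum_le (hN : N ≠ 0) :
    ∃ C, ∀ x, |coprimeMoebiusOmegaDivSum N x| ≤ C * primeLogSum (1 / 20) x := by
  obtain ⟨C, hC⟩ := exists_abs_coprimeMoebiusDivSum_le hN
  have hC0 : 0 ≤ C := by simpa using (abs_nonneg _).trans (hC 1 le_rfl)
  refine ⟨7 * C, fun x => ?_⟩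
  rw [coprimeMoebiusOmegaDivSum_eq, abs_neg, primeLogSum, mul_sum]
  calc |∑ q ∈ Icc 1 ⌊x⌋₊ with q.Prime ∧ q.Coprime N, coprimeMoebiusDivSum (q * N) (x / q) / q|
      ≤ ∑ q ∈ Icc 1 ⌊x⌋₊ with q.Prime ∧ q.Coprime N,
          7 * C * ((1 + Real.log (x / q)) ^ (-(1 / 20) : ℝ) / q) := by
        refine (abs_sum_le_sum_abs _ _).trans (sum_le_sum fun q hq => ?_)
        obtain ⟨hqx, hq, hqN⟩ := mem_filter.1 hq
        rw [abs_div, Nat.abs_cast, ← mul_div_assoc]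
        gcongr
        exact abs_coprimeMoebiusDivSum_mul_le (by norm_num) (by norm_num) hC hq hqN
          (one_le_div_of_mem_Icc_floor hqx)
    _ ≤ ∑ q ∈ Icc 1 ⌊x⌋₊ with q.Prime, 7 * C * ((1 + Real.log (x / q)) ^ (-(1 / 20) : ℝ) / q) :=
        sum_le_sum_of_subset_of_nonneg (fun q => by grind) fun q hq _ => by
          have := Real.log_nonneg (one_le_div_of_mem_Icc_floor (mem_filter.1 hq).1)
          positivity

lemma tendsto_coprimeMoebiusOmegaDivSum (hN : N ≠ 0) :
    Tendsto (coprimeMoebiusOmegaDivSum N) atTop (nhds 0) := by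
  obtain ⟨C, hC⟩ := exists_abs_coprimeMoebiusOmegaDivSum_le hN
  refine squeeze_zero_norm hC ?_
  simpa using (tendsto_primeLogSum (by norm_num) (by norm_num)).const_mul C

end CoprimeMoebiusSum

lemma minFac_eq_iff_coprime_factorial_and_dvd {n p : ℕ} (hn : n ≠ 1) (hp : p.Prime) :
    n.minFac = p ↔ n.Coprime (p - 1).factorial ∧ p ∣ n := by
  rw [Nat.coprime_factorial_iff hn]
  constructor
  · rintro rfl
    exact ⟨Nat.pred_lt hp.ne_zero, n.minFac_dvd⟩
  · rintro ⟨hlt, hdvd⟩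
    exact le_antisymm (Nat.minFac_le_of_dvd hp.two_le hdvd) (by lia)

lemma filter_minFac_eq {p : ℕ} (hp : p.Prime) (k : ℕ) :
    {n ∈ Icc 2 k | n.minFac = p} = {n ∈ Icc 1 k | n.Coprime (p - 1).factorial ∧ p ∣ n} := by
  ext n
  rcases eq_or_ne n 1 with rfl | hn
  · simp [hp.ne_one]
  · rw [mem_filter, mem_filter, minFac_eq_iff_coprime_factorial_and_dvd hn hp]
    grind

/-- For an arbitrary but fixed prime `p`, the series `Σ_{n ≥ 2, p(n) = p} μ(n) ω(n)/n`,
taken over integers `n ≥ 2` whose smallest prime factor equals `p`, converges to `0`: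
its partial sums up to `x` tend to `0` as `x → ∞`. -/
theorem moebius_omega_div_fixed_smallest_factor (p : ℕ) (hp : p.Prime) :
    Tendsto (fun x : ℝ =>
        ∑ n ∈ (Finset.Icc 2 ⌊x⌋₊).filter (fun n => n.minFac = p),
          (moebius n : ℝ) * (n.primeFactors.card : ℝ) / n)
      atTop (nhds 0) := by
  have hsub := (tendsto_coprimeMoebiusOmegaDivSum (p - 1).factorial_ne_zero).sub
    (tendsto_coprimeMoebiusOmegaDivSum (mul_ne_zero hp.ne_zero (p - 1).factorial_ne_zero))
  rw [sub_zero] at hsub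
  refine hsub.congr fun x => ?_
  rw [filter_minFac_eq hp, sub_eq_iff_eq_add']
  exact sum_coprime_eq_add_sum_dvd hp _ _
end

section
/- Let f be a real-valued function on the positive integers with f(1) = 0 and |f(q)| ≤ B for all primes q and some constant B. Suppose there is a constant κ such that Σ_{2 ≤ n ≤ x} f(P(n)) = κx + o(x) and Σ_{2 ≤ n ≤ x} f(P₂(n)) = κx + o(x) as x → ∞. Then the series Σ_{n ≥ 2} μ(n) ω(n) f(p(n)) / n converges and equals 0; that is, lim_{x → ∞} Σ_{2 ≤ n ≤ x} μ(n) ω(n) f(p(n))/n = 0. -/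
open Finset ArithmeticFunction Filter Asymptotics

/-- The largest prime factor of `n` (junk value `0` for `n ≤ 1`). -/
def maxPrimeFac (n : ℕ) : ℕ := n.primeFactors.sup _root_.id

/-- The second largest distinct prime factor of `n`: the largest prime factor of `n`
strictly less than `P(n)`, with the convention `P₂(n) = 1` if `n` has fewer than two
distinct prime factors. -/
def secondLargestPrimeFac (n : ℕ) : ℕ :=
  ((n.primeFactors.sort (· ≤ ·)).reverse).getD 1 1

/-!
The identity `∑_{d ∣ n} μ(d) ω(d) f(p(d)) = f(P₂(n)) - f(P(n))`, for `n ≥ 2`, writes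
`μ(n) ω(n) f(p(n))` as a Dirichlet convolution `μ * h` in which `h` is bounded and has mean value
zero. With `m(x) = ∑_{n ≤ x} μ(n)/n`, the partial sum at `N` is therefore
`∑_{a ≤ N} h(a)/a · m(N/a)`. Small `a` contribute little because `m → 0`, large `a` because of the
mean value of `h`, and the range in between because `∫ |m(eᵛ)| dv < ∞`.

For the integrability of `m(eᵛ)`, the Fourier transform of `v e^{-σv} m(eᵛ)` is a derivative of
`1/(s ζ(s + 1))` on the line `re s = σ`. Polynomial bounds for `ζ` near `re s = 1` and the
3-4-1 inequality make it square integrable uniformly in `σ > 0`, so `v m(eᵛ)` is square integrable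
by Plancherel, and Cauchy–Schwarz against `1/v` gives the claim.
-/

open MeasureTheory
open scoped Topology FourierTransform SchwartzMap ContDiff ENNReal

section Plancherel

variable {V F : Type*} [NormedAddCommGroup V] [InnerProductSpace ℝ V] [FiniteDimensional ℝ V]
  [MeasurableSpace V] [BorelSpace V] [NormedAddCommGroup F] [InnerProductSpace ℂ F]
  [CompleteSpace F] {f : V → F}

theorem fourier_toLp_ae_eq_fourier (hf : Integrable f) (hf₂ : MemLp f 2) :
    (𝓕 (hf₂.toLp f) : Lp F 2) =ᵐ[volume] 𝓕 f := by
  set φ : Lp F 2 (volume : Measure V) := 𝓕 (hf₂.toLp f) with hφ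
  have hcont : Continuous (𝓕 f) := VectorFourier.fourierIntegral_continuous
    Real.continuous_fourierChar (L := innerₗ V) continuous_inner hf
  refine ae_eq_of_integral_contDiff_smul_eq
    ((Lp.memLp φ).locallyIntegrable (by norm_num)) hcont.locallyIntegrable ?_
  intro g hg hg_supp
  have hψ_smooth : ContDiff ℝ ∞ fun x ↦ (g x : ℂ) := Complex.ofRealCLM.contDiff.comp hg
  have hψ_supp : HasCompactSupport fun x ↦ (g x : ℂ) := hg_supp.comp_left (g := Complex.ofReal) rfl
  let ψ : 𝓢(V, ℂ) := hψ_supp.toSchwartzMap hψ_smooth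
  have hψ : ∀ x, ψ x = g x := fun _ ↦ rfl
  have hflip : ∫ x, (𝓕 (ψ : V → ℂ)) x • f x = ∫ x, ψ x • 𝓕 f x := by
    simpa using! VectorFourier.integral_fourierIntegral_smul_eq_flip (L := innerₗ V)
      Real.continuous_fourierChar continuous_inner ψ.integrable hf
  calc ∫ x, g x • φ x
      = Lp.toTemperedDistribution φ ψ := by
        simp [Lp.toTemperedDistribution_apply, hψ]
    _ = ∫ x, (𝓕 ψ) x • (hf₂.toLp f) x := by
        rw [hφ, ← Lp.fourier_toTemperedDistribution_eq, TemperedDistribution.fourier_apply,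
          Lp.toTemperedDistribution_apply]
    _ = ∫ x, (𝓕 (ψ : V → ℂ)) x • f x := by
        refine integral_congr_ae ?_
        filter_upwards [hf₂.coeFn_toLp] with x hx
        rw [hx, SchwartzMap.fourier_coe]
    _ = ∫ x, g x • 𝓕 f x := by simp [hflip, hψ]

theorem eLpNorm_fourier_eq (hf : Integrable f) (hf₂ : MemLp f 2) :
    eLpNorm (𝓕 f) 2 = eLpNorm f 2 volume := by
  have h := congrArg ENNReal.ofReal (Lp.norm_fourier_eq (hf₂.toLp f))
  rwa [Lp.norm_def, Lp.norm_def, ENNReal.ofReal_toReal (Lp.eLpNorm_ne_top _),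
    ENNReal.ofReal_toReal (Lp.eLpNorm_ne_top _), eLpNorm_congr_ae hf₂.coeFn_toLp,
    eLpNorm_congr_ae (fourier_toLp_ae_eq_fourier hf hf₂)] at h

end Plancherel

/-! ### The zeta function near the line `re s = 1` -/

theorem riemannZeta_eq_mul_integral_natFloor {s : ℂ} (hs : 1 < s.re) :
    riemannZeta s = s * ∫ t in Set.Ioi (1 : ℝ), (⌊t⌋₊ : ℂ) * (t : ℂ) ^ (-(s + 1)) := by
  rw [← LSeries_one_eq_riemannZeta hs, LSeries_eq_mul_integral 1 zero_le_one hs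
    (LSeriesSummable_one_iff.mpr hs)]
  · simp
  · simpa using! isBigO_refl (fun n : ℕ ↦ (n : ℂ)) atTop |>.norm_right

theorem sum_cpow_neg_eq_integral_natFloor (N : ℕ) {s : ℂ} (hs : s ≠ 0) :
    ∑ n ∈ Icc 1 N, (n : ℂ) ^ (-s) =
      N * (N : ℂ) ^ (-s) + s * ∫ t in Set.Ioc (1 : ℝ) N, (⌊t⌋₊ : ℂ) * (t : ℂ) ^ (-(s + 1)) := by
  have hpos : ∀ t ∈ Set.Icc (1 : ℝ) N, 0 < t := fun t ht ↦ zero_lt_one.trans_le ht.1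
  have hderiv : ∀ t ∈ Set.Icc (1 : ℝ) N,
      HasDerivAt (fun t : ℝ ↦ (t : ℂ) ^ (-s)) (-s * (t : ℂ) ^ (-(s + 1))) t := fun t ht ↦ by
    simpa only [neg_add'] using hasDerivAt_ofReal_cpow_const (hpos t ht).ne' (neg_ne_zero.mpr hs)
  have hint : IntegrableOn (deriv fun t : ℝ ↦ (t : ℂ) ^ (-s)) (Set.Icc 1 N) := by
    refine IntegrableOn.congr_fun (ContinuousOn.integrableOn_Icc ?_)
      (fun t ht ↦ (hderiv t ht).deriv.symm) measurableSet_Icc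
    exact continuousOn_const.mul (Complex.continuous_ofReal.continuousOn.cpow_const
      fun t ht ↦ .inl <| by simpa using hpos t ht)
  have hsplit (F : ℕ → ℂ) (n : ℕ) :
      ∑ k ∈ Icc 0 n, F k * (if k = 0 then 0 else 1) = ∑ k ∈ Icc 1 n, F k := by
    rw [← Finset.insert_Icc_add_one_left_eq_Icc n.zero_le, sum_insert (by simp)]
    simpa using! sum_congr rfl fun k hk ↦ by grind
  have hfloor (n : ℕ) : ∑ k ∈ Icc 0 n, (if k = 0 then (0 : ℂ) else 1) = n := by
    simpa using hsplit 1 n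
  have habel := sum_mul_eq_sub_integral_mul₀' (fun k ↦ if k = 0 then (0 : ℂ) else 1) rfl N
    (fun t ht ↦ (hderiv t ht).differentiableAt) hint
  simp only [hfloor, hsplit] at habel
  rw [setIntegral_congr_fun measurableSet_Ioc
    (g := fun t : ℝ ↦ -s * ((⌊t⌋₊ : ℂ) * (t : ℂ) ^ (-(s + 1)))) fun t ht ↦ by
      beta_reduce
      rw [(hderiv t (Set.Ioc_subset_Icc_self ht)).deriv]; ring, integral_const_mul] at habel
  push_cast at habel
  rw [habel]
  ring

/-- The remainder `∫_c^∞ {t} t^(-s-1) dt` of the Euler–Maclaurin formula for `ζ(s)`, cut off at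
`c`. -/
noncomputable def fractIntegral (c : ℝ) (s : ℂ) : ℂ :=
  ∫ t in Set.Ioi c, ((Int.fract t : ℝ) : ℂ) * (t : ℂ) ^ (-(s + 1))

theorem integrableOn_fract_mul_cpow {c : ℝ} (hc : 0 < c) {s : ℂ} (hs : 0 < s.re) :
    IntegrableOn (fun t : ℝ ↦ ((Int.fract t : ℝ) : ℂ) * (t : ℂ) ^ (-(s + 1))) (Set.Ioi c) := by
  refine (integrableOn_Ioi_cpow_of_lt (a := -(s + 1)) (by simpa) hc).bdd_mul (c := 1)
    (Complex.measurable_ofReal.comp measurable_fract).aestronglyMeasurable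
    (.of_forall fun t ↦ ?_)
  simpa [abs_of_nonneg (Int.fract_nonneg t)] using (Int.fract_lt_one t).le

theorem norm_fractIntegral_le {c : ℝ} (hc : 0 < c) {s : ℂ} (hs : 0 < s.re) :
    ‖fractIntegral c s‖ ≤ c ^ (-s.re) / s.re := by
  have hre : -(s.re + 1) < -1 := by linarith
  calc ‖fractIntegral c s‖
      ≤ ∫ t in Set.Ioi c, t ^ (-(s.re + 1)) := by
        refine norm_integral_le_of_norm_le (integrableOn_Ioi_rpow_of_lt hre hc) ?_
        refine (ae_restrict_mem measurableSet_Ioi).mono fun t ht ↦ ?_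
        have ht0 : 0 < t := hc.trans ht
        rw [norm_mul, Complex.norm_cpow_eq_rpow_re_of_pos ht0, Complex.norm_real,
          Real.norm_of_nonneg (Int.fract_nonneg t)]
        simpa using mul_le_of_le_one_left (Real.rpow_nonneg ht0.le _) (Int.fract_lt_one t).le
    _ = c ^ (-s.re) / s.re := by
        rw [integral_Ioi_rpow_of_lt hre hc]
        simp [neg_div_neg_eq]

theorem natFloor_mul_cpow {t : ℝ} (ht : 0 < t) (s : ℂ) : (⌊t⌋₊ : ℂ) * (t : ℂ) ^ (-(s + 1)) =
    (t : ℂ) ^ (-s) - ((Int.fract t : ℝ) : ℂ) * (t : ℂ) ^ (-(s + 1)) := by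
  have hfloor : (⌊t⌋₊ : ℂ) = t - ((Int.fract t : ℝ) : ℂ) := by
    rw [← Complex.ofReal_sub, Int.self_sub_fract, ← natCast_floor_eq_intCast_floor ht.le]; simp
  rw [hfloor, sub_mul, neg_add', Complex.cpow_sub _ _ (mod_cast ht.ne'), Complex.cpow_one]
  field_simp [show (t : ℂ) ≠ 0 from mod_cast ht.ne']

theorem integrableOn_natFloor_mul_cpow {c : ℝ} (hc : 0 < c) {s : ℂ} (hs : 1 < s.re) :
    IntegrableOn (fun t : ℝ ↦ (⌊t⌋₊ : ℂ) * (t : ℂ) ^ (-(s + 1))) (Set.Ioi c) :=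
  ((integrableOn_Ioi_cpow_of_lt (a := -s) (by simpa) hc).sub
    (integrableOn_fract_mul_cpow hc (zero_lt_one.trans hs))).congr_fun
    (fun _ ht ↦ (natFloor_mul_cpow (hc.trans ht) s).symm) measurableSet_Ioi

theorem integral_Ioi_natFloor_mul_cpow {c : ℝ} (hc : 0 < c) {s : ℂ} (hs : 1 < s.re) :
    ∫ t in Set.Ioi c, (⌊t⌋₊ : ℂ) * (t : ℂ) ^ (-(s + 1)) =
      (c : ℂ) ^ (1 - s) / (s - 1) - fractIntegral c s := by
  rw [setIntegral_congr_fun measurableSet_Ioi fun t (ht : c < t) ↦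
      natFloor_mul_cpow (hc.trans ht) s,
    integral_sub (integrableOn_Ioi_cpow_of_lt (by simpa) hc)
      (integrableOn_fract_mul_cpow hc (zero_lt_one.trans hs)),
    integral_Ioi_cpow_of_lt (by simpa) hc, neg_add_eq_sub, ← neg_sub s 1, neg_div_neg_eq,
    neg_sub, fractIntegral]

theorem riemannZeta_eq_sum_sub_fractIntegral {N : ℕ} (hN : 1 ≤ N) {s : ℂ} (hs : 1 < s.re) :
    riemannZeta s = ∑ n ∈ Icc 1 N, (n : ℂ) ^ (-s) + (N : ℂ) ^ (1 - s) / (s - 1) -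
      s * fractIntegral N s := by
  have hN1 : (1 : ℝ) ≤ N := mod_cast hN
  have hN0 : (N : ℂ) ≠ 0 := mod_cast (zero_lt_one.trans_le hN).ne'
  have hs0 : s ≠ 0 := by rintro rfl; simp at hs; linarith
  have hs1 : s - 1 ≠ 0 := sub_ne_zero.mpr <| by rintro rfl; simp at hs
  have hint := integrableOn_natFloor_mul_cpow one_pos hs
  rw [riemannZeta_eq_mul_integral_natFloor hs, sum_cpow_neg_eq_integral_natFloor N hs0,
    ← Set.Ioc_union_Ioi_eq_Ioi hN1, setIntegral_union (Set.Ioc_disjoint_Ioi le_rfl)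
      measurableSet_Ioi (hint.mono_set Set.Ioc_subset_Ioi_self)
      (hint.mono_set (Set.Ioi_subset_Ioi hN1)),
    integral_Ioi_natFloor_mul_cpow (zero_lt_one.trans_le hN1) hs, Complex.ofReal_natCast,
    sub_eq_add_neg (1 : ℂ) s, Complex.cpow_add _ _ hN0, Complex.cpow_one]
  field_simp
  ring

theorem differentiableOn_fractIntegral {c : ℝ} (hc : 0 < c) :
    DifferentiableOn ℂ (fractIntegral c) {s | 0 < s.re} := by
  let φ : ℝ → ℂ := (Set.Ioi c).indicator fun t ↦ ((Int.fract t : ℝ) : ℂ)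
  have hφ_le (t : ℝ) : ‖φ t‖ ≤ 1 :=
    (norm_indicator_le_norm_self _ t).trans <| by
      simpa [abs_of_nonneg (Int.fract_nonneg t)] using (Int.fract_lt_one t).le
  have hφ_meas : Measurable φ :=
    (Complex.measurable_ofReal.comp measurable_fract).indicator measurableSet_Ioi
  have hφ_int : LocallyIntegrableOn φ (Set.Ioi 0) := by
    refine LocallyIntegrable.locallyIntegrableOn ?_ _
    exact (locallyIntegrable_const (1 : ℝ)).mono hφ_meas.aestronglyMeasurable
      (.of_forall fun t ↦ by simpa using hφ_le t)
  have hφ_top : φ =O[atTop] fun t : ℝ ↦ t ^ (-0 : ℝ) :=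
    .of_bound 1 <| .of_forall fun t ↦ by simpa using hφ_le t
  have hφ_zero (b : ℝ) : φ =O[𝓝[>] 0] fun t : ℝ ↦ t ^ (-b) := by
    refine (isBigO_zero _ _).congr' (EventuallyEq.symm ?_) .rfl
    filter_upwards [nhdsWithin_le_nhds (Iio_mem_nhds hc)] with t ht
    simp [φ, (show t < c from ht).le]
  have heq (s : ℂ) : fractIntegral c s = mellin φ (-s) := by
    have hind (t : ℝ) : (t : ℂ) ^ (-s - 1) • φ t = (Set.Ioi c).indicator
        (fun t : ℝ ↦ ((Int.fract t : ℝ) : ℂ) * (t : ℂ) ^ (-(s + 1))) t := by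
      rw [neg_add']
      by_cases ht : t ∈ Set.Ioi c <;> simp [φ, ht, mul_comm]
    simp only [mellin, hind]
    rw [setIntegral_indicator measurableSet_Ioi,
      Set.inter_eq_right.mpr (Set.Ioi_subset_Ioi hc.le), fractIntegral]
  intro s hs
  rw [funext heq]
  have hre : (-s).re < 0 := by simpa using hs
  exact ((mellin_differentiableAt_of_isBigO_rpow hφ_int hφ_top hre
    (hφ_zero ((-s).re - 1)) (by linarith)).comp s differentiableAt_id.neg).differentiableWithinAt

theorem riemannZeta₁_eq_sum_sub_fractIntegral {N : ℕ} (hN : 1 ≤ N) {s : ℂ} (hs : 0 < s.re) :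
    riemannZeta₁ s = (s - 1) * ∑ n ∈ Icc 1 N, (n : ℂ) ^ (-s) + (N : ℂ) ^ (1 - s) -
      s * (s - 1) * fractIntegral N s := by
  have hopen : IsOpen {s : ℂ | 0 < s.re} := isOpen_lt continuous_const Complex.continuous_re
  have hconn : IsPreconnected {s : ℂ | 0 < s.re} := (convex_halfSpace_re_gt 0).isPreconnected
  have hN0 : (0 : ℝ) < N := mod_cast hN
  have hcpow {n : ℕ} (hn : 1 ≤ n) (e : ℂ → ℂ) (he : Differentiable ℂ e) :
      Differentiable ℂ fun s ↦ (n : ℂ) ^ e s :=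
    he.const_cpow (.inl <| mod_cast (zero_lt_one.trans_le hn).ne')
  have hdiff : DifferentiableOn ℂ (fun s ↦ (s - 1) * ∑ n ∈ Icc 1 N, (n : ℂ) ^ (-s) +
      (N : ℂ) ^ (1 - s) - s * (s - 1) * fractIntegral N s) {s | 0 < s.re} := by
    have hsum : Differentiable ℂ fun s : ℂ ↦ ∑ n ∈ Icc 1 N, (n : ℂ) ^ (-s) :=
      .fun_sum fun n hn ↦ hcpow (mem_Icc.mp hn).1 _ (by fun_prop)
    have := hcpow hN (1 - ·) (by fun_prop)
    have hfract := differentiableOn_fractIntegral hN0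
    fun_prop
  refine (differentiable_riemannZeta₁.differentiableOn.analyticOnNhd hopen)
    |>.eqOn_of_preconnected_of_eventuallyEq (hdiff.analyticOnNhd hopen) hconn (z₀ := 2)
    (by simp) ?_ hs
  filter_upwards [(isOpen_lt continuous_const Complex.continuous_re).mem_nhds
    (show (1 : ℝ) < (2 : ℂ).re by simp)] with z (hz : 1 < z.re)
  have hz1 : z - 1 ≠ 0 := sub_ne_zero.mpr <| by rintro rfl; simp at hz
  have h := riemannZeta_eq_inv_sub_mul (sub_ne_zero.mp hz1)
  rw [riemannZeta_eq_sum_sub_fractIntegral hN hz] at h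
  field_simp at h
  linear_combination -h

theorem sum_rpow_sub_one_le {δ : ℝ} (hδ0 : 0 < δ) (hδ1 : δ ≤ 1) (N : ℕ) :
    ∑ n ∈ Icc 1 N, (n : ℝ) ^ (δ - 1) ≤ (N : ℝ) ^ δ / δ := by
  induction N with
  | zero => simp [hδ0.ne']
  | succ N ih =>
    have hN : (0 : ℝ) < N + 1 := by positivity
    have hbern : ((N : ℝ) / (N + 1)) ^ δ ≤ 1 - δ / (N + 1) := by
      have h := rpow_one_add_le_one_add_mul_self (s := -(1 / ((N : ℝ) + 1)))
        (by rw [neg_le_neg_iff, div_le_one hN]; linarith) hδ0.le hδ1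
      rw [show 1 + -(1 / ((N : ℝ) + 1)) = N / (N + 1) by field_simp; ring] at h
      exact h.trans_eq (by ring)
    rw [sum_Icc_succ_top (by lia), Nat.cast_succ, Real.rpow_sub_one hN.ne']
    rw [Real.div_rpow N.cast_nonneg hN.le, div_le_iff₀ (by positivity)] at hbern
    rw [le_div_iff₀ hδ0] at ih ⊢
    calc _ ≤ (N : ℝ) ^ δ + ((N : ℝ) + 1) ^ δ / (N + 1) * δ := by linarith
      _ ≤ (1 - δ / (N + 1)) * ((N : ℝ) + 1) ^ δ + ((N : ℝ) + 1) ^ δ / (N + 1) * δ := by gcongr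
      _ = ((N : ℝ) + 1) ^ δ := by ring

theorem norm_riemannZeta₁_le_s18 {δ : ℝ} (hδ0 : 0 < δ) (hδ1 : δ < 1) {s : ℂ} (hs : 1 - δ ≤ s.re) :
    ‖riemannZeta₁ s‖ ≤ (1 / δ + 1 / (1 - δ) + 1) * (‖s‖ + 1) ^ (1 + δ) := by
  have hs0 : 0 < s.re := by linarith
  set T := ‖s‖ + 1
  set N := ⌈‖s‖⌉₊
  have hsN : ‖s‖ ≤ N := Nat.le_ceil _
  have hN : 1 ≤ N := Nat.one_le_ceil_iff.mpr (norm_pos_iff.mpr (by rintro rfl; simp at hs0))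
  have hN0 : (0 : ℝ) < N := mod_cast hN
  have hN1 : (1 : ℝ) ≤ N := mod_cast hN
  have hNT : (N : ℝ) ≤ T := (Nat.ceil_lt_add_one (norm_nonneg s)).le
  have hT : 0 < T := by positivity
  have hs1 : ‖s - 1‖ ≤ T := by simpa [T] using norm_sub_le s 1
  have hsum : ‖∑ n ∈ Icc 1 N, (n : ℂ) ^ (-s)‖ ≤ T ^ δ / δ := calc
    _ ≤ ∑ n ∈ Icc 1 N, (n : ℝ) ^ (δ - 1) := norm_sum_le_of_le _ fun n hn ↦ by
      have hn1 : 1 ≤ n := (mem_Icc.mp hn).1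
      rw [Complex.norm_natCast_cpow_of_pos hn1]
      exact Real.rpow_le_rpow_of_exponent_le (mod_cast hn1) (by simp; linarith)
    _ ≤ (N : ℝ) ^ δ / δ := sum_rpow_sub_one_le hδ0 hδ1.le N
    _ ≤ T ^ δ / δ := by gcongr
  have hpow : ‖(N : ℂ) ^ (1 - s)‖ ≤ T ^ δ := calc
    _ = (N : ℝ) ^ (1 - s.re) := by simp [Complex.norm_natCast_cpow_of_pos hN]
    _ ≤ (N : ℝ) ^ δ := Real.rpow_le_rpow_of_exponent_le hN1 (by linarith)
    _ ≤ T ^ δ := by gcongr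
  have hfract : ‖s‖ * ‖fractIntegral N s‖ ≤ T ^ δ / (1 - δ) := calc
    _ ≤ N * ((N : ℝ) ^ (-s.re) / s.re) := by
      gcongr; exact norm_fractIntegral_le hN0 hs0
    _ = (N : ℝ) ^ (1 - s.re) / s.re := by
      rw [sub_eq_add_neg, Real.rpow_add hN0, Real.rpow_one]; ring
    _ ≤ (N : ℝ) ^ δ / (1 - δ) := by
      gcongr; linarith
    _ ≤ T ^ δ / (1 - δ) := by gcongr
  have hTδ : T ^ (1 + δ) = T * T ^ δ := by rw [Real.rpow_add hT, Real.rpow_one]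
  rw [riemannZeta₁_eq_sum_sub_fractIntegral hN hs0, mul_assoc, mul_left_comm]
  calc _ ≤ ‖s - 1‖ * ‖∑ n ∈ Icc 1 N, (n : ℂ) ^ (-s)‖ + ‖(N : ℂ) ^ (1 - s)‖ +
        ‖s - 1‖ * (‖s‖ * ‖fractIntegral N s‖) := by
        grw [norm_sub_le, norm_add_le]
        simp only [norm_mul, le_refl]
    _ ≤ T * (T ^ δ / δ) + T ^ δ * T + T * (T ^ δ / (1 - δ)) := by
        gcongr
        exact hpow.trans (le_mul_of_one_le_right (by positivity) (by simp [T]))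
    _ = (1 / δ + 1 / (1 - δ) + 1) * T ^ (1 + δ) := by rw [hTδ]; ring

theorem norm_deriv_riemannZeta₁_le_s18 {δ : ℝ} (hδ0 : 0 < δ) (hδ1 : δ < 1) {s : ℂ} (hs : 1 ≤ s.re) :
    ‖deriv riemannZeta₁ s‖ ≤ (1 / δ + 1 / (1 - δ) + 1) * (‖s‖ + 2) ^ (1 + δ) / δ := by
  have : 0 < 1 - δ := sub_pos.mpr hδ1
  refine Complex.norm_deriv_le_of_forall_mem_sphere_norm_le hδ0
    differentiable_riemannZeta₁.diffContOnCl fun z hz ↦ ?_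
  have hz' : ‖z - s‖ = δ := mem_sphere_iff_norm.mp hz
  have hre : |z.re - s.re| ≤ δ := hz' ▸ Complex.abs_re_le_norm (z - s)
  refine (norm_riemannZeta₁_le_s18 hδ0 hδ1 (by linarith [(abs_le.mp hre).1])).trans ?_
  have hnorm : ‖z‖ + 1 ≤ ‖s‖ + 2 := by linarith [norm_le_norm_add_norm_sub' z s]
  gcongr

theorem exists_norm_riemannZeta₁_le_and_norm_deriv_le {δ : ℝ} (hδ0 : 0 < δ) (hδ1 : δ < 1) :
    ∃ A, 1 ≤ A ∧ ∀ Y, 1 ≤ Y → ∀ s : ℂ, 1 ≤ s.re → s.re ≤ 3 → |s.im| ≤ 2 * Y →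
      ‖riemannZeta₁ s‖ ≤ A * (Y * Y ^ δ) ∧ ‖deriv riemannZeta₁ s‖ ≤ A * (Y * Y ^ δ) := by
  have : 0 < 1 - δ := sub_pos.mpr hδ1
  set K := 1 / δ + 1 / (1 - δ) + 1
  have hK : 1 ≤ K := le_add_of_nonneg_left (by positivity)
  refine ⟨K / δ * 7 ^ (1 + δ), ?_, fun Y hY s hs hs3 him ↦ ?_⟩
  · refine one_le_mul_of_one_le_of_one_le ((one_le_div hδ0).mpr (hδ1.le.trans hK)) ?_
    exact Real.one_le_rpow (by norm_num) (by linarith)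
  have hY0 : 0 < Y := zero_lt_one.trans_le hY
  have hnorm : ‖s‖ + 2 ≤ 7 * Y := by
    linarith [Complex.norm_le_abs_re_add_abs_im s, abs_of_nonneg (zero_le_one.trans hs)]
  have hderiv : K * (‖s‖ + 2) ^ (1 + δ) / δ ≤ K / δ * 7 ^ (1 + δ) * (Y * Y ^ δ) := calc
    _ ≤ K * (7 * Y) ^ (1 + δ) / δ := by gcongr
    _ = _ := by rw [Real.mul_rpow (by norm_num) hY0.le, Real.rpow_add hY0, Real.rpow_one]; ring
  refine ⟨(norm_riemannZeta₁_le_s18 hδ0 hδ1 (by linarith)).trans (le_trans ?_ hderiv),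
    (norm_deriv_riemannZeta₁_le_s18 hδ0 hδ1 hs).trans hderiv⟩
  rw [le_div_iff₀ hδ0]
  refine (mul_le_of_le_one_right (by positivity) hδ1.le).trans ?_
  gcongr
  norm_num

theorem norm_riemannZeta_le_norm_riemannZeta₁_div {s : ℂ} {r : ℝ} (hr : 0 < r) (hs : r ≤ ‖s - 1‖) :
    ‖riemannZeta s‖ ≤ ‖riemannZeta₁ s‖ / r := by
  have hs1 : s ≠ 1 := by rintro rfl; simp at hs; linarith
  rw [riemannZeta_eq_inv_sub_mul hs1, norm_mul, norm_inv, inv_mul_eq_div]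
  gcongr

theorem one_le_norm_riemannZeta_product {x : ℝ} (hx : 0 < x) (y : ℝ) :
    1 ≤ ‖riemannZeta (1 + x)‖ ^ 3 * ‖riemannZeta (1 + x + y * Complex.I)‖ ^ 4 *
      ‖riemannZeta (1 + x + (2 * y : ℝ) * Complex.I)‖ := by
  have h := DirichletCharacter.norm_LFunction_product_ge_one (N := 1) 1 hx y
  simpa [DirichletCharacter.LFunctionTrivChar, norm_mul, norm_pow, mul_comm, mul_left_comm] using h

theorem mul_pow_le_norm_riemannZeta₁_pow {A M x y : ℝ} (hx0 : 0 < x) (hy : y ≠ 0)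
    (hx : ‖riemannZeta₁ (1 + x)‖ ≤ A)
    (hxy : ‖riemannZeta₁ (1 + x + (2 * y : ℝ) * Complex.I)‖ ≤ |y| * M) :
    x ^ 3 * |y| ^ 4 ≤ A ^ 3 * M * ‖riemannZeta₁ (1 + x + y * Complex.I)‖ ^ 4 := by
  set w := 1 + x + y * Complex.I
  have hy0 : 0 < |y| := abs_pos.mpr hy
  have hA : 0 ≤ A := (norm_nonneg _).trans hx
  have hprod : 1 ≤ (A / x) ^ 3 * (‖riemannZeta₁ w‖ / |y|) ^ 4 * M := by
    refine (one_le_norm_riemannZeta_product hx0 y).trans ?_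
    gcongr
    · refine (norm_riemannZeta_le_norm_riemannZeta₁_div hx0 (by simp [abs_of_pos hx0])).trans ?_
      gcongr
    · exact norm_riemannZeta_le_norm_riemannZeta₁_div hy0
        (by simpa [w] using Complex.abs_im_le_norm (w - 1))
    · refine (norm_riemannZeta_le_norm_riemannZeta₁_div hy0 ?_).trans
        ((div_le_iff₀' hy0).mpr hxy)
      refine le_trans ?_ (Complex.abs_im_le_norm _)
      simpa using le_mul_of_one_le_left hy0.le one_le_two
  calc x ^ 3 * |y| ^ 4
      ≤ x ^ 3 * |y| ^ 4 * ((A / x) ^ 3 * (‖riemannZeta₁ w‖ / |y|) ^ 4 * M) :=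
        le_mul_of_one_le_right (by positivity) hprod
    _ = A ^ 3 * M * ‖riemannZeta₁ w‖ ^ 4 := by field_simp

theorem norm_le_norm_add_of_norm_deriv_le_of_im_eq {f : ℂ → ℂ} (hf : Differentiable ℂ f) {s w : ℂ}
    {C : ℝ} (him : w.im = s.im) (hre : s.re ≤ w.re)
    (hC : ∀ z : ℂ, s.re ≤ z.re → z.re ≤ w.re → z.im = s.im → ‖deriv f z‖ ≤ C) :
    ‖f w‖ ≤ ‖f s‖ + C * (w.re - s.re) := by
  have hconv : Convex ℝ (Set.Icc s.re w.re ×ℂ {s.im}) :=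
    ((convex_Icc s.re w.re).linear_preimage Complex.reLm).inter
      ((convex_singleton s.im).linear_preimage Complex.imLm)
  have hmvt := hconv.norm_image_sub_le_of_norm_deriv_le (fun z _ ↦ hf z)
    (fun z hz ↦ hC z hz.1.1 hz.1.2 hz.2) (x := s) (y := w) ⟨⟨le_rfl, hre⟩, rfl⟩ ⟨⟨hre, le_rfl⟩, him⟩
  have hnorm : ‖w - s‖ = w.re - s.re := by
    rw [Complex.ext (z := w - s) (w := (w.re - s.re : ℝ)) (by simp) (by simp [him]),
      Complex.norm_real, Real.norm_of_nonneg (sub_nonneg.mpr hre)]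
  exact (norm_le_norm_add_norm_sub' _ _).trans (by gcongr; exact hnorm ▸ hmvt)

theorem exists_le_norm_riemannZeta₁_s18 {δ : ℝ} (hδ0 : 0 < δ) (hδ1 : δ < 1) :
    ∃ K, 0 < K ∧ ∀ s : ℂ, 1 < s.re → s.re ≤ 2 → 1 ≤ |s.im| →
      |s.im| ≤ K * (|s.im| ^ δ) ^ 4 * ‖riemannZeta₁ s‖ := by
  obtain ⟨A, hA, hbound⟩ := exists_norm_riemannZeta₁_le_and_norm_deriv_le hδ0 hδ1
  refine ⟨16 * A ^ 7, by positivity, fun s hs hs2 him ↦ ?_⟩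
  set Y := |s.im|
  have hY0 : 0 < Y := by positivity
  have hB : 1 ≤ Y ^ δ := Real.one_le_rpow him hδ0.le
  set B := Y ^ δ
  -- The product inequality is used at distance `x ≥ η` from the line `re s = 1`; moving from there
  -- to `s` costs at most `A Y B η`, and `η` is chosen to make this half of the lower bound.
  set η := (16 * A ^ 8 * B ^ 5)⁻¹ with hη
  have hη0 : 0 < η := by positivity
  have hη1 : η ≤ 1 := inv_le_one_of_one_le₀ <| one_le_mul_of_one_le_of_one_le
    (one_le_mul_of_one_le_of_one_le (by norm_num) (one_le_pow₀ hA)) (one_le_pow₀ hB)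
  set x := max (s.re - 1) η
  have hx1 : x ≤ 1 := max_le (by linarith) hη1
  have hx0 : 0 < x := lt_max_of_lt_right hη0
  set w : ℂ := 1 + x + s.im * Complex.I
  have hwre : w.re = 1 + x := by simp [w]
  have hwim : w.im = s.im := by simp [w]
  have hpow : x ^ 3 * Y ^ 4 ≤ A ^ 3 * (A * B) * ‖riemannZeta₁ w‖ ^ 4 := by
    refine mul_pow_le_norm_riemannZeta₁_pow hx0 (abs_pos.mp hY0) ?_ ?_
    · simpa using (hbound 1 le_rfl (1 + x) (by simpa using hx0.le) (by simp; linarith) (by simp)).1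
    · exact (hbound Y him _ (by simpa using hx0.le) (by simp; linarith)
        (by simp [abs_mul, Y])).1.trans_eq (by ring)
  have hmvt : ‖riemannZeta₁ w‖ ≤ ‖riemannZeta₁ s‖ + A * (Y * B) * η := calc
    _ ≤ ‖riemannZeta₁ s‖ + A * (Y * B) * (w.re - s.re) :=
      norm_le_norm_add_of_norm_deriv_le_of_im_eq differentiable_riemannZeta₁ hwim
        (by rw [hwre]; linarith [le_max_left (s.re - 1) η]) fun z hz hzw hzim ↦
          (hbound Y him z (by linarith) (by linarith) (by rw [hzim]; linarith)).2
    _ ≤ _ := by gcongr; linarith [max_le_add_of_nonneg (sub_pos.mpr hs).le hη0.le]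
  have hw : 2 * (A * (Y * B) * η) ≤ ‖riemannZeta₁ w‖ := by
    refine le_of_pow_le_pow_left₀ four_ne_zero (norm_nonneg _) ?_
    calc (2 * (A * (Y * B) * η)) ^ 4 = Y ^ 4 * η ^ 3 / (A ^ 4 * B) := by
          rw [hη]; field_simp; norm_num
      _ ≤ Y ^ 4 * x ^ 3 / (A ^ 4 * B) := by gcongr; exact le_max_right _ _
      _ ≤ ‖riemannZeta₁ w‖ ^ 4 := by rw [div_le_iff₀ (by positivity)]; linarith
  have hlower : A * (Y * B) * η ≤ ‖riemannZeta₁ s‖ := by linarith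
  calc Y = 16 * A ^ 7 * B ^ 4 * (A * (Y * B) * η) := by rw [hη]; field_simp
    _ ≤ _ := by gcongr

theorem riemannZeta₁_ne_zero_of_one_le_re {s : ℂ} (hs : 1 ≤ s.re) : riemannZeta₁ s ≠ 0 := by
  rcases eq_or_ne s 1 with rfl | hs1
  · simp
  · intro h
    exact riemannZeta_ne_zero_of_one_le_re hs (by rw [riemannZeta_eq_inv_sub_mul hs1, h, mul_zero])

theorem deriv_inv_riemannZeta₁ {s : ℂ} (hs : 1 ≤ s.re) :
    deriv (fun z ↦ (riemannZeta₁ z)⁻¹) s = -deriv riemannZeta₁ s / riemannZeta₁ s ^ 2 :=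
  ((differentiable_riemannZeta₁ s).hasDerivAt.inv (riemannZeta₁_ne_zero_of_one_le_re hs)).deriv

theorem exists_norm_deriv_inv_riemannZeta₁_le_of_abs_im_le (T : ℝ) :
    ∃ C, ∀ s : ℂ, 1 ≤ s.re → s.re ≤ 2 → |s.im| ≤ T →
      ‖deriv (fun z ↦ (riemannZeta₁ z)⁻¹) s‖ ≤ C := by
  have hderiv : Continuous (deriv riemannZeta₁) :=
    differentiable_riemannZeta₁.contDiff.continuous_deriv le_rfl
  have hcompact : IsCompact (Set.Icc 1 2 ×ℂ Set.Icc (-T) T) := isCompact_Icc.reProdIm isCompact_Icc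
  obtain ⟨C, hC⟩ := hcompact.exists_bound_of_continuousOn
    (f := fun s ↦ -deriv riemannZeta₁ s / riemannZeta₁ s ^ 2)
    (hderiv.neg.continuousOn.div (differentiable_riemannZeta₁.continuous.pow 2).continuousOn
      fun s hs ↦ pow_ne_zero 2 (riemannZeta₁_ne_zero_of_one_le_re hs.1.1))
  exact ⟨C, fun s hs hs2 him ↦
    deriv_inv_riemannZeta₁ hs ▸ hC s ⟨⟨hs, hs2⟩, abs_le.mp him⟩⟩

theorem rpow_le_two_mul_rpow {p x y : ℝ} (hx : 0 < x) (hxy : x ≤ 2 * y) (hp : -1 ≤ p)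
    (hp0 : p ≤ 0) : y ^ p ≤ 2 * x ^ p := by
  have hy : 0 < y := by linarith
  have h2 : (2 : ℝ)⁻¹ ≤ 2 ^ p := by
    simpa [Real.rpow_neg_one] using Real.rpow_le_rpow_of_exponent_le one_le_two hp
  calc y ^ p = 2 * (2⁻¹ * y ^ p) := by ring
    _ ≤ 2 * (2 ^ p * y ^ p) := by gcongr
    _ = 2 * (2 * y) ^ p := by rw [Real.mul_rpow zero_le_two hy.le]
    _ ≤ 2 * x ^ p := by gcongr ?_ * ?_; exact Real.rpow_le_rpow_of_nonpos hx hxy hp0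

theorem exists_norm_deriv_inv_riemannZeta₁_le {δ : ℝ} (hδ0 : 0 < δ) (hδ1 : δ < 1 / 9) :
    ∃ C, ∀ s : ℂ, 1 < s.re → s.re ≤ 2 →
      ‖deriv (fun z ↦ (riemannZeta₁ z)⁻¹) s‖ ≤ C * (1 + |s.im|) ^ (9 * δ - 1) := by
  obtain ⟨A, hA, hbound⟩ := exists_norm_riemannZeta₁_le_and_norm_deriv_le hδ0 (by linarith)
  obtain ⟨K, hK, hlower⟩ := exists_le_norm_riemannZeta₁_s18 hδ0 (by linarith)
  obtain ⟨C, hC⟩ := exists_norm_deriv_inv_riemannZeta₁_le_of_abs_im_le 1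
  suffices h : ∀ s : ℂ, 1 < s.re → s.re ≤ 2 → ‖deriv (fun z ↦ (riemannZeta₁ z)⁻¹) s‖ ≤
      max C (A * K ^ 2) * max 1 |s.im| ^ (9 * δ - 1) by
    refine ⟨max C (A * K ^ 2) * 2, fun s hs hs2 ↦ (h s hs hs2).trans ?_⟩
    rw [mul_assoc]
    gcongr
    refine rpow_le_two_mul_rpow (by positivity) ?_ (by linarith) (by linarith)
    linarith [le_max_left 1 |s.im|, le_max_right 1 |s.im|]
  intro s hs hs2
  rcases le_total |s.im| 1 with him | him
  · simpa [max_eq_left him] using (hC s hs.le hs2 him).trans (le_max_left _ _)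
  set Y := |s.im|
  have hY : 0 < Y := by positivity
  have hz := hlower s hs hs2 him
  have hz' := (hbound Y him s hs.le (by linarith) (by linarith)).2
  have hζ : 0 < ‖riemannZeta₁ s‖ := pos_of_mul_pos_right (hY.trans_le hz) (by positivity)
  rw [deriv_inv_riemannZeta₁ hs.le, norm_div, norm_neg, norm_pow, max_eq_right him]
  calc ‖deriv riemannZeta₁ s‖ / ‖riemannZeta₁ s‖ ^ 2
      ≤ A * K ^ 2 * ((Y ^ δ) ^ 9 / Y) := by
        rw [div_le_iff₀ (by positivity)]
        calc _ ≤ A * Y ^ δ / Y * Y ^ 2 := hz'.trans_eq (by field_simp)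
          _ ≤ A * Y ^ δ / Y * (K * (Y ^ δ) ^ 4 * ‖riemannZeta₁ s‖) ^ 2 := by gcongr
          _ = _ := by ring
    _ = A * K ^ 2 * Y ^ (9 * δ - 1) := by
        rw [Real.rpow_sub_one hY.ne', mul_comm 9 δ, Real.rpow_mul hY.le]; norm_cast
    _ ≤ max C (A * K ^ 2) * Y ^ (9 * δ - 1) := by gcongr; exact le_max_right _ _

theorem sum_Ioc_moebius_mul_div (R : Type*) [Ring R] {N : ℕ} (hN : 1 ≤ N) :
    ∑ n ∈ Ioc 0 N, (moebius n : R) * ((N / n : ℕ) : R) = 1 := by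
  have h := sum_Ioc_mul_zeta_eq_sum (moebius : ArithmeticFunction R) N
  rw [coe_moebius_mul_coe_zeta, sum_eq_single_of_mem 1 (by simp; lia) fun n _ hn ↦
    one_apply_ne hn, one_one] at h
  exact h.symm

/-! ### The logarithmic Mertens function -/

/-- The logarithmic Mertens function `m(x) = ∑_{n ≤ x} μ(n)/n`. -/
noncomputable def logMertens (x : ℝ) : ℝ := ∑ n ∈ Ioc 0 ⌊x⌋₊, (moebius n : ℝ) / n

theorem logMertens_of_lt_one {x : ℝ} (hx : x < 1) : logMertens x = 0 := by
  simp [logMertens, Nat.floor_eq_zero.mpr hx]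

theorem logMertens_natCast_div (N a : ℕ) :
    logMertens (N / a) = ∑ n ∈ Ioc 0 (N / a), (moebius n : ℝ) / n := by
  rw [logMertens, Nat.floor_div_eq_div]

theorem measurable_logMertens : Measurable logMertens :=
  (measurable_from_nat (f := fun N ↦ ∑ n ∈ Ioc 0 N, (moebius n : ℝ) / n)).comp Nat.measurable_floor

theorem abs_moebius_le_one (n : ℕ) : |(moebius n : ℝ)| ≤ 1 :=
  mod_cast ArithmeticFunction.abs_moebius_le_one

theorem abs_logMertens_le_one (x : ℝ) : |logMertens x| ≤ 1 := by
  rw [logMertens]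
  rcases Nat.eq_zero_or_pos ⌊x⌋₊ with hN | hN
  · simp [hN]
  set N := ⌊x⌋₊
  have hN0 : (0 : ℝ) < N := mod_cast hN
  have hfract (n : ℕ) : ((N / n : ℕ) : ℝ) = N / n - Int.fract ((N : ℝ) / n) := by
    rw [Int.self_sub_fract, ← natCast_floor_eq_intCast_floor (by positivity), Nat.floor_div_eq_div]
  have hsum : N * ∑ n ∈ Ioc 0 N, (moebius n : ℝ) / n =
      1 + ∑ n ∈ Ioc 0 N, (moebius n : ℝ) * Int.fract ((N : ℝ) / n) := by
    rw [← sum_Ioc_moebius_mul_div ℝ hN, ← sum_add_distrib, mul_sum]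
    refine sum_congr rfl fun n _ ↦ ?_
    rw [hfract]; ring
  have hone : |∑ n ∈ Ioc 0 N, (moebius n : ℝ) * Int.fract ((N : ℝ) / n)| ≤ N - 1 := by
    rw [← insert_Ioc_add_one_left_eq_Ioc hN, sum_insert (by simp)]
    refine le_trans (b := ∑ _n ∈ Ioc 1 N, (1 : ℝ)) ?_
      (by simp [Nat.cast_sub (Nat.succ_le_of_lt hN)])
    simp only [zero_add, Nat.cast_one, div_one, Int.fract_natCast, mul_zero]
    refine (abs_sum_le_sum_abs _ _).trans (sum_le_sum fun n _ ↦ ?_)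
    rw [abs_mul, Int.abs_fract]
    exact mul_le_one₀ (abs_moebius_le_one n) (Int.fract_nonneg _) (Int.fract_lt_one _).le
  refine le_of_mul_le_mul_left ?_ hN0
  rw [← abs_of_pos hN0, ← abs_mul, abs_of_pos hN0, hsum]
  grw [abs_add_le, hone]
  simp

theorem mul_mellin_sum_floor {f : ℕ → ℂ} {r : ℝ} (hr : 0 ≤ r) {s : ℂ} (hs : r < s.re)
    (hS : LSeriesSummable f s)
    (hO : (fun n ↦ ∑ k ∈ Ioc 0 n, f k) =O[atTop] fun n ↦ (n : ℝ) ^ r) :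
    s * mellin (fun t ↦ ∑ k ∈ Ioc 0 ⌊t⌋₊, f k) (-s) = LSeries f s := by
  have hIcc (n : ℕ) : Ioc 0 n = Icc 1 n := rfl
  simp only [hIcc] at hO ⊢
  rw [LSeries_eq_mul_integral f hr hs hS hO, mellin, ← integral_Ici_eq_integral_Ioi (x := 1),
    setIntegral_eq_of_subset_of_forall_sdiff_eq_zero measurableSet_Ioi
      (Set.Ici_subset_Ioi.mpr zero_lt_one)]
  · simp_rw [neg_add', smul_eq_mul, mul_comm]
  · intro t ht
    simp [Nat.floor_eq_zero.mpr (Set.notMem_Ici.mp ht.2)]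

theorem mellin_logMertens {s : ℂ} (hs : s.re < 0) :
    mellin (fun t ↦ (logMertens t : ℂ)) s = (riemannZeta₁ (1 - s))⁻¹ := by
  set w := 1 - s
  have hw : 1 < w.re := by simp only [w, Complex.sub_re, Complex.one_re]; linarith
  have hs0 : s ≠ 0 := by rintro rfl; simp at hs
  have hterm : LSeries.term (fun n ↦ (moebius n : ℂ) / n) (-s) =
      LSeries.term (fun n ↦ (moebius n : ℂ)) w := by
    ext n
    rcases eq_or_ne n 0 with rfl | hn
    · simp
    · rw [LSeries.term_of_ne_zero hn, LSeries.term_of_ne_zero hn, div_div,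
        show w = 1 + -s from sub_eq_add_neg 1 s, Complex.cpow_add _ _ (mod_cast hn),
        Complex.cpow_one]
  have hsummable : LSeriesSummable (fun n ↦ (moebius n : ℂ) / n) (-s) := by
    rw [LSeriesSummable, hterm]
    exact LSeriesSummable_moebius_iff.mpr hw
  have hbounded : (fun n ↦ ∑ k ∈ Ioc 0 n, (moebius k : ℂ) / k) =O[atTop]
      fun n ↦ (n : ℝ) ^ (0 : ℝ) := by
    refine .of_bound 1 (.of_forall fun n ↦ ?_)
    have h := abs_logMertens_le_one n
    rw [logMertens, Nat.floor_natCast, ← Real.norm_eq_abs, ← Complex.norm_real] at h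
    simpa using h
  have hmellin := mul_mellin_sum_floor le_rfl (by simpa) hsummable hbounded
  have hL := LSeries_zeta_mul_Lseries_moebius hw
  rw [LSeries_zeta_eq_riemannZeta hw, riemannZeta_eq_inv_sub_mul (by rintro h; simp [h] at hw),
    sub_sub_cancel_left] at hL
  rw [LSeries, hterm, ← LSeries, neg_neg] at hmellin
  simp only [logMertens]
  push_cast
  refine eq_inv_of_mul_eq_one_right ?_
  rw [← hL, ← hmellin]
  field_simp

/-- The function `u ↦ -u e^{σu} m(e^{-u})`, whose Fourier transform is the derivative of the Mellin
transform of `m` along the line `re s = -σ`. -/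
noncomputable def twistedLogMertens (σ u : ℝ) : ℂ :=
  ((Real.exp (σ * u) * (-u * logMertens (Real.exp (-u))) : ℝ) : ℂ)

theorem measurable_twistedLogMertens (σ : ℝ) : Measurable (twistedLogMertens σ) := by
  have := measurable_logMertens
  unfold twistedLogMertens
  fun_prop

theorem norm_twistedLogMertens_le {σ : ℝ} (hσ : 0 < σ) (u : ℝ) : ‖twistedLogMertens σ u‖ ≤
    (Set.Iic 0).indicator (fun u ↦ 2 / σ * Real.exp (σ / 2 * u)) u := by
  rw [twistedLogMertens, Complex.norm_real]
  rcases lt_or_ge 0 u with hu | hu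
  · simp [hu, logMertens_of_lt_one (Real.exp_lt_one_iff.mpr (neg_neg_of_pos hu))]
  have hu' : 0 ≤ -u := neg_nonneg.mpr hu
  have hlin : -u ≤ 2 / σ * Real.exp (-(σ / 2 * u)) := by
    have h := Real.add_one_le_exp (-(σ / 2 * u))
    rw [div_mul_eq_mul_div, le_div_iff₀ hσ]
    linarith
  rw [Set.indicator_of_mem (Set.mem_Iic.mpr hu)]
  calc ‖Real.exp (σ * u) * (-u * logMertens (Real.exp (-u)))‖
      = Real.exp (σ * u) * (-u * |logMertens (Real.exp (-u))|) := by
        rw [norm_mul, norm_mul, Real.norm_of_nonneg (Real.exp_pos _).le, Real.norm_of_nonneg hu',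
          Real.norm_eq_abs]
    _ ≤ Real.exp (σ * u) * (-u * 1) := by gcongr; exact abs_logMertens_le_one _
    _ ≤ Real.exp (σ * u) * (2 / σ * Real.exp (-(σ / 2 * u))) := by rw [mul_one]; gcongr
    _ = 2 / σ * Real.exp (σ / 2 * u) := by
        rw [mul_left_comm, ← Real.exp_add]; ring_nf

theorem integrable_indicator_Iic_exp {a : ℝ} (ha : 0 < a) (b c : ℝ) :
    Integrable ((Set.Iic c).indicator fun u ↦ b * Real.exp (a * u)) :=
  IntegrableOn.integrable_indicator ((integrableOn_exp_mul_Iic ha c).const_mul b) measurableSet_Iic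

theorem integrable_twistedLogMertens {σ : ℝ} (hσ : 0 < σ) : Integrable (twistedLogMertens σ) :=
  (integrable_indicator_Iic_exp (half_pos hσ) (2 / σ) 0).mono'
    (measurable_twistedLogMertens σ).aestronglyMeasurable
    (.of_forall (norm_twistedLogMertens_le hσ))

theorem memLp_two_twistedLogMertens {σ : ℝ} (hσ : 0 < σ) : MemLp (twistedLogMertens σ) 2 := by
  have hint := integrable_indicator_Iic_exp (half_pos hσ) (2 / σ) 0
  refine MemLp.mono' ((memLp_two_iff_integrable_sq hint.aestronglyMeasurable).mpr ?_)
    (measurable_twistedLogMertens σ).aestronglyMeasurable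
    (.of_forall (norm_twistedLogMertens_le hσ))
  refine (integrable_indicator_Iic_exp hσ ((2 / σ) ^ 2) 0).congr (.of_forall fun u ↦ ?_)
  by_cases hu : u ∈ Set.Iic (0 : ℝ)
  · simp only [Set.indicator_of_mem hu, mul_pow, ← Real.exp_nat_mul]
    ring_nf
  · simp only [Set.indicator_of_notMem hu, ne_eq, OfNat.ofNat_ne_zero, not_false_eq_true,
      zero_pow]

theorem fourier_twistedLogMertens {σ : ℝ} (hσ : 0 < σ) (ξ : ℝ) :
    𝓕 (twistedLogMertens σ) ξ =
      -deriv (fun z ↦ (riemannZeta₁ z)⁻¹) (1 - (-σ + (2 * Real.pi * ξ : ℝ) * Complex.I)) := by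
  set s : ℂ := -σ + (2 * Real.pi * ξ : ℝ) * Complex.I
  have hre : s.re = -σ := by simp [s]
  have him : s.im = 2 * Real.pi * ξ := by simp [s]
  have hs : s.re < 0 := by linarith
  have hfun : twistedLogMertens σ = fun u : ℝ ↦ Real.exp (-s.re * u) •
      (Real.log (Real.exp (-u)) • (logMertens (Real.exp (-u)) : ℂ)) :=
    funext fun u ↦ by simp [twistedLogMertens, hre]
  have hfourier : 𝓕 (twistedLogMertens σ) ξ =
      mellin (fun t ↦ Real.log t • (logMertens t : ℂ)) s := by
    rw [mellin_eq_fourier, him, mul_div_cancel_left₀ _ (by positivity), hfun]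
  have hlocint : LocallyIntegrableOn (fun t ↦ (logMertens t : ℂ)) (Set.Ioi 0) := by
    refine LocallyIntegrable.locallyIntegrableOn ?_ _
    refine (locallyIntegrable_const (1 : ℝ)).mono
      (Complex.measurable_ofReal.comp measurable_logMertens).aestronglyMeasurable
      (.of_forall fun t ↦ ?_)
    simpa using abs_logMertens_le_one t
  have htop : (fun t ↦ (logMertens t : ℂ)) =O[atTop] fun t : ℝ ↦ t ^ (-0 : ℝ) :=
    .of_bound 1 (.of_forall fun t ↦ by simpa using abs_logMertens_le_one t)
  have hbot : (fun t ↦ (logMertens t : ℂ)) =O[𝓝[>] 0] fun t : ℝ ↦ t ^ (-(s.re - 1)) := by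
    refine (isBigO_zero _ _).congr' (EventuallyEq.symm ?_) .rfl
    filter_upwards [nhdsWithin_le_nhds (Iio_mem_nhds zero_lt_one)] with t ht
    simp [logMertens_of_lt_one ht]
  have hmellin := (mellin_hasDerivAt_of_isBigO_rpow hlocint htop hs hbot (by linarith)).2
  have hζ : HasDerivAt (fun z ↦ (riemannZeta₁ z)⁻¹)
      (deriv (fun z ↦ (riemannZeta₁ z)⁻¹) (1 - s)) (1 - s) :=
    ((differentiable_riemannZeta₁ _).fun_inv (riemannZeta₁_ne_zero_of_one_le_re
      (by simp; linarith))).hasDerivAt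
  rw [hfourier]
  refine hmellin.unique ((hζ.comp_const_sub 1 s).congr_of_eventuallyEq ?_)
  filter_upwards [(isOpen_lt Complex.continuous_re continuous_const).mem_nhds hs] with z hz
  exact mellin_logMertens hz

theorem exists_eLpNorm_twistedLogMertens_le :
    ∃ C, C ≠ ⊤ ∧ ∀ σ, 0 < σ → σ ≤ 1 → eLpNorm (twistedLogMertens σ) 2 ≤ C := by
  obtain ⟨C, hC⟩ := exists_norm_deriv_inv_riemannZeta₁_le (δ := 1 / 20) (by norm_num) (by norm_num)
  have hbound : MemLp (fun ξ : ℝ ↦ C * (1 + ‖ξ‖) ^ (-(11 / 20) : ℝ)) 2 := by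
    refine MemLp.const_mul ((memLp_two_iff_integrable_sq ?_).mpr ?_) C
    · exact Measurable.aestronglyMeasurable (by fun_prop)
    · refine (integrable_one_add_norm (E := ℝ) (r := 11 / 10) (by simp; norm_num)).congr
        (.of_forall fun ξ ↦ ?_)
      beta_reduce
      rw [← Real.rpow_mul_natCast (by positivity)]
      norm_num
  refine ⟨_, hbound.eLpNorm_ne_top, fun σ hσ hσ1 ↦ ?_⟩
  rw [← eLpNorm_fourier_eq (integrable_twistedLogMertens hσ) (memLp_two_twistedLogMertens hσ)]
  refine eLpNorm_mono_real fun ξ ↦ ?_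
  rw [fourier_twistedLogMertens hσ, norm_neg]
  refine (hC _ (by simpa) (by simp; linarith)).trans ?_
  have hC0 : 0 ≤ C := nonneg_of_mul_nonneg_left
    ((norm_nonneg _).trans (hC 2 (by simp) (by simp))) (by positivity)
  have hξ : ‖ξ‖ ≤ |2 * Real.pi * ξ| := by
    rw [abs_mul, abs_of_pos (by positivity), ← Real.norm_eq_abs]
    exact le_mul_of_one_le_left (norm_nonneg ξ) (by linarith [Real.pi_gt_three])
  norm_num1
  refine mul_le_mul_of_nonneg_left (Real.rpow_le_rpow_of_nonpos (by positivity) ?_ (by norm_num))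
    hC0
  simpa using hξ

theorem memLp_two_twistedLogMertens_zero : MemLp (twistedLogMertens 0) 2 := by
  obtain ⟨C, hC, hbound⟩ := exists_eLpNorm_twistedLogMertens_le
  have hmeas (σ : ℝ) := (measurable_twistedLogMertens σ).aestronglyMeasurable (μ := volume)
  have hlim (u : ℝ) : Tendsto (fun n : ℕ ↦ twistedLogMertens (1 / (n + 1)) u) atTop
      (𝓝 (twistedLogMertens 0 u)) := by
    have hcont : Continuous (twistedLogMertens · u) := by
      simp only [twistedLogMertens]; fun_prop
    exact (hcont.tendsto 0).comp tendsto_one_div_add_atTop_nhds_zero_nat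
  have hfatou : eLpNorm (twistedLogMertens 0) 2 ≤
      liminf (fun n : ℕ ↦ eLpNorm (twistedLogMertens (1 / (n + 1))) 2) atTop :=
    Lp.eLpNorm_lim_le_liminf_eLpNorm (fun n : ℕ ↦ hmeas (1 / (n + 1))) _ (.of_forall hlim)
  have hliminf : liminf (fun n : ℕ ↦ eLpNorm (twistedLogMertens (1 / (n + 1))) 2) atTop ≤ C := by
    refine liminf_le_of_frequently_le' (Frequently.of_forall fun n ↦ hbound _ (by positivity) ?_)
    exact (div_le_one (by positivity)).mpr (by simp)
  exact ⟨hmeas 0, (hfatou.trans hliminf).trans_lt hC.lt_top⟩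

theorem integrableOn_logMertens_exp :
    IntegrableOn (fun v ↦ logMertens (Real.exp v)) (Set.Ioi 1) := by
  have hmem : MemLp (fun v ↦ twistedLogMertens 0 (-v)) 2 (volume.restrict (Set.Ioi 1)) :=
    (memLp_two_twistedLogMertens_zero.comp_measurePreserving
      (Measure.measurePreserving_neg volume)).restrict _
  have hinv : MemLp (fun v : ℝ ↦ ((v⁻¹ : ℝ) : ℂ)) 2 (volume.restrict (Set.Ioi 1)) := by
    refine MemLp.ofReal (f := fun v ↦ v⁻¹)
      ((memLp_two_iff_integrable_sq measurable_inv.aestronglyMeasurable).mpr ?_)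
    refine (integrableOn_Ioi_rpow_of_lt (a := -2) (by norm_num) zero_lt_one).congr_fun
      (fun v (hv : 1 < v) ↦ ?_) measurableSet_Ioi
    simp [Real.rpow_neg (zero_le_one.trans hv.le)]
  refine IntegrableOn.congr_fun (hinv.integrable_mul hmem).re (fun v (hv : 1 < v) ↦ ?_)
    measurableSet_Ioi
  have hv0 : v ≠ 0 := (zero_lt_one.trans hv).ne'
  simp [twistedLogMertens, hv0]

theorem integrable_logMertens_exp : Integrable fun v ↦ logMertens (Real.exp v) := by
  rw [← integrableOn_univ, ← Set.Iic_union_Ioi (a := (1 : ℝ)), integrableOn_union]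
  refine ⟨?_, integrableOn_logMertens_exp⟩
  have hIcc : IntegrableOn (fun v ↦ logMertens (Real.exp v)) (Set.Icc 0 1) :=
    Measure.integrableOn_of_bounded (M := 1) measure_Icc_lt_top.ne
      (measurable_logMertens.comp Real.measurable_exp).aestronglyMeasurable
      (.of_forall fun v ↦ abs_logMertens_le_one _)
  refine hIcc.of_forall_sdiff_eq_zero measurableSet_Iic fun v hv ↦ ?_
  have hv0 : v < 0 := not_le.mp fun h ↦ hv.2 ⟨h, hv.1⟩
  exact logMertens_of_lt_one (Real.exp_lt_one_iff.mpr hv0)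

/-- The tail `∫_v^∞ |m(e^w)| dw` of the convergent integral of `|m(e^w)|`; its increments control
averages of `|m|` over short multiplicative intervals. -/
noncomputable def logMertensTail (v : ℝ) : ℝ := ∫ w in Set.Ioi v, |logMertens (Real.exp w)|

theorem integral_abs_logMertens_exp (u v : ℝ) :
    ∫ w in u..v, |logMertens (Real.exp w)| = logMertensTail u - logMertensTail v :=
  (intervalIntegral.integral_Ioi_sub_Ioi' integrable_logMertens_exp.abs.integrableOn
    integrable_logMertens_exp.abs.integrableOn).symm

theorem tendsto_logMertensTail : Tendsto logMertensTail atTop (𝓝 0) :=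
  tendsto_integral_Ioi_zero tendsto_id

theorem logMertensTail_nonneg (v : ℝ) : 0 ≤ logMertensTail v :=
  integral_nonneg fun _ ↦ abs_nonneg _

theorem antitone_logMertensTail : Antitone logMertensTail := fun _ _ h ↦
  setIntegral_mono_set integrable_logMertens_exp.abs.integrableOn (.of_forall fun _ ↦ abs_nonneg _)
    (Set.Ioi_subset_Ioi h).eventuallyLE

theorem abs_logMertens_sub_le {u v : ℝ} (hu : 0 < u) (huv : u ≤ v) :
    |logMertens v - logMertens u| ≤ (v - u + 1) / u := by
  have hfloor : ⌊u⌋₊ ≤ ⌊v⌋₊ := Nat.floor_mono huv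
  have hterm : ∀ n ∈ Ioc ⌊u⌋₊ ⌊v⌋₊, |(moebius n : ℝ) / n| ≤ 1 / u := by
    intro n hn
    rw [abs_div, Nat.abs_cast]
    have hun : u ≤ n := (Nat.lt_of_floor_lt (mem_Ioc.mp hn).1).le
    gcongr
    exact abs_moebius_le_one n
  rw [logMertens, logMertens, ← sum_Ioc_consecutive _ (Nat.zero_le _) hfloor, add_sub_cancel_left]
  calc |∑ n ∈ Ioc ⌊u⌋₊ ⌊v⌋₊, (moebius n : ℝ) / n|
      ≤ ∑ n ∈ Ioc ⌊u⌋₊ ⌊v⌋₊, |(moebius n : ℝ) / n| := abs_sum_le_sum_abs _ _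
    _ ≤ (⌊v⌋₊ - ⌊u⌋₊) * (1 / u) := by
      grw [sum_le_card_nsmul _ _ _ hterm, Nat.card_Ioc, nsmul_eq_mul, Nat.cast_sub hfloor]
    _ ≤ (v - u + 1) * (1 / u) := by
      gcongr
      linarith [Nat.floor_le (hu.le.trans huv), Nat.sub_one_lt_floor u]
    _ = (v - u + 1) / u := mul_one_div _ _

theorem abs_logMertens_exp_mul_sub_le {u v : ℝ} (huv : u ≤ v) :
    |logMertens (Real.exp v)| * (v - u) ≤ logMertensTail u - logMertensTail v +
      (v - u) * ((Real.exp v - Real.exp u + 1) / Real.exp u) := by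
  have hle : ∀ w ∈ Set.Icc u v, |logMertens (Real.exp v)| ≤
      |logMertens (Real.exp w)| + (Real.exp v - Real.exp u + 1) / Real.exp u := by
    rintro w ⟨huw, hwv⟩
    have hsub := abs_logMertens_sub_le (Real.exp_pos w) (Real.exp_monotone hwv)
    have hmono : (Real.exp v - Real.exp w + 1) / Real.exp w ≤
        (Real.exp v - Real.exp u + 1) / Real.exp u := by
      have := Real.exp_monotone huv
      gcongr
    linarith [abs_sub_abs_le_abs_sub (logMertens (Real.exp v)) (logMertens (Real.exp w))]
  have hint : IntervalIntegrable (fun w ↦ |logMertens (Real.exp w)|) volume u v :=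
    integrable_logMertens_exp.abs.intervalIntegrable
  have h := intervalIntegral.integral_mono_on huv intervalIntegrable_const
    (hint.add intervalIntegrable_const) hle
  rw [intervalIntegral.integral_add hint intervalIntegrable_const, integral_abs_logMertens_exp,
    intervalIntegral.integral_const, intervalIntegral.integral_const, smul_eq_mul, smul_eq_mul] at h
  linarith

theorem tendsto_logMertens : Tendsto logMertens atTop (𝓝 0) := by
  suffices h : Tendsto (fun v ↦ |logMertens (Real.exp v)|) atTop (𝓝 0) by
    rw [tendsto_zero_iff_abs_tendsto_zero]
    refine (h.comp Real.tendsto_log_atTop).congr' ?_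
    filter_upwards [eventually_gt_atTop 0] with x hx
    simp [Real.exp_log hx]
  have hbound {L : ℝ} (hL : 0 < L) (v : ℝ) : |logMertens (Real.exp v)| ≤
      logMertensTail (v - L) / L + (Real.exp L - 1) + Real.exp (L - v) := by
    have h := abs_logMertens_exp_mul_sub_le (sub_le_self v hL.le)
    have hexp : (Real.exp v - Real.exp (v - L) + 1) / Real.exp (v - L) =
        Real.exp L - 1 + Real.exp (L - v) := by
      rw [Real.exp_sub, Real.exp_sub]
      field_simp
    rw [sub_sub_cancel, hexp] at h
    rw [div_add' _ _ _ hL.ne', div_add' _ _ _ hL.ne', le_div_iff₀ hL]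
    linarith [logMertensTail_nonneg v]
  rw [tendsto_order]
  refine ⟨fun a ha ↦ .of_forall fun v ↦ ha.trans_le (abs_nonneg _), fun ε hε ↦ ?_⟩
  have hexp : Tendsto (fun L ↦ Real.exp L - 1) (𝓝[>] 0) (𝓝 0) :=
    (Continuous.tendsto' (by fun_prop) _ _ (by simp)).mono_left nhdsWithin_le_nhds
  obtain ⟨L, hLε, hL⟩ := ((hexp.eventually_lt_const hε).and self_mem_nhdsWithin).exists
  have hlim : Tendsto (fun v ↦ logMertensTail (v - L) / L + (Real.exp L - 1) + Real.exp (L - v))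
      atTop (𝓝 (0 / L + (Real.exp L - 1) + 0)) := by
    refine (((tendsto_logMertensTail.comp ?_).div_const L).add_const _).add
      (Real.tendsto_exp_atBot.comp ?_)
    · exact tendsto_atTop_add_const_right _ _ tendsto_id
    · exact tendsto_atBot_add_const_left _ _ tendsto_neg_atTop_atBot
  filter_upwards [hlim.eventually_lt_const (u := ε) (by simpa)] with v hv
  exact (hbound hL v).trans_lt hv

theorem abs_logMertens_div_div_le {x : ℝ} (hx : 0 < x) {a : ℕ} (ha : 0 < a) :
    |logMertens (x / a)| / a ≤
      2 * (logMertensTail (Real.log (x / (a + 1))) - logMertensTail (Real.log (x / a))) +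
        1 / a ^ 2 + 2 / x := by
  have ha1 : (1 : ℝ) ≤ a := mod_cast ha
  set δ := Real.log (x / a) - Real.log (x / (a + 1))
  set Δ := logMertensTail (Real.log (x / (a + 1))) - logMertensTail (Real.log (x / a))
  have hle : Real.log (x / (a + 1)) ≤ Real.log (x / a) := by
    gcongr
    linarith
  have hΔ : 0 ≤ Δ := sub_nonneg.mpr (antitone_logMertensTail hle)
  have hδ : 1 ≤ 2 * (δ * a) := by
    have h := Real.one_sub_inv_le_log_of_pos (x := x / a / (x / (a + 1))) (by positivity)
    rw [Real.log_div (by positivity) (by positivity)] at h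
    have : 1 - (x / a / (x / (a + 1)))⁻¹ = 1 / (a + 1) := by field_simp; ring
    rw [this, div_le_iff₀ (by positivity)] at h
    nlinarith
  have hδ0 : 0 < δ := by nlinarith
  have h := abs_logMertens_exp_mul_sub_le hle
  rw [Real.exp_log (by positivity), Real.exp_log (by positivity)] at h
  have hgap : (x / a - x / (a + 1) + 1) / (x / (a + 1)) = 1 / a + (a + 1) / x := by field_simp; ring
  rw [hgap] at h
  calc |logMertens (x / a)| / a = |logMertens (x / a)| * δ / (δ * a) := by field_simp
    _ ≤ (Δ + δ * (1 / a + (a + 1) / x)) / (δ * a) := by gcongr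
    _ = Δ * (1 / (δ * a)) + 1 / a ^ 2 + (a + 1) / a / x := by field_simp; ring
    _ ≤ Δ * 2 + 1 / a ^ 2 + 2 / x := by
      gcongr
      · rwa [div_le_iff₀ (by positivity)]
      · rw [div_le_iff₀ (by positivity)]; linarith
    _ = _ := by rw [mul_comm]

theorem sum_Ioc_abs_logMertens_div_le {x : ℝ} (hx : 0 < x) {A M : ℕ} (hA : A ≠ 0) (hAM : A ≤ M) :
    ∑ a ∈ Ioc A M, |logMertens (x / a)| / a ≤
      2 * logMertensTail (Real.log (x / (M + 1))) + 1 / A + 2 * M / x := by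
  set T : ℕ → ℝ := fun a ↦ logMertensTail (Real.log (x / a))
  have htele : ∑ a ∈ Ioc A M, (T (a + 1) - T a) ≤ T (M + 1) := by
    rw [← Ico_succ_succ_eq_Ioc, sum_Ico_sub _ (by gcongr)]
    exact sub_le_self _ (logMertensTail_nonneg _)
  have hinv : ∑ a ∈ Ioc A M, (1 : ℝ) / a ^ 2 ≤ 1 / A := by
    have h := sum_Ioc_inv_sq_le_sub (α := ℝ) hA hAM
    simp_rw [one_div]
    exact h.trans (sub_le_self _ (by positivity))
  calc ∑ a ∈ Ioc A M, |logMertens (x / a)| / a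
      ≤ ∑ a ∈ Ioc A M, (2 * (T (a + 1) - T a) + 1 / a ^ 2 + 2 / x) := by
        refine sum_le_sum fun a ha ↦ ?_
        simpa [T] using abs_logMertens_div_div_le hx (Nat.zero_lt_of_lt (mem_Ioc.mp ha).1)
    _ = 2 * ∑ a ∈ Ioc A M, (T (a + 1) - T a) + ∑ a ∈ Ioc A M, (1 : ℝ) / a ^ 2 +
          (M - A) * (2 / x) := by
        rw [sum_add_distrib, sum_add_distrib, mul_sum, sum_const, Nat.card_Ioc, nsmul_eq_mul,
          Nat.cast_sub hAM]
    _ ≤ 2 * T (M + 1) + 1 / A + M * (2 / x) := by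
        gcongr
        exact sub_le_self _ A.cast_nonneg
    _ = _ := by simp only [T]; push_cast; ring

/-! ### Axer's theorem -/

theorem sum_Ioc_sum_divisorsAntidiagonal {M : Type*} [AddCommMonoid M] (F : ℕ → ℕ → M) (N : ℕ) :
    ∑ n ∈ Ioc 0 N, ∑ x ∈ n.divisorsAntidiagonal, F x.1 x.2 =
      ∑ a ∈ Ioc 0 N, ∑ b ∈ Ioc 0 (N / a), F b a := by
  rw [sum_sigma', sum_sigma']
  refine sum_bij' (fun x _ ↦ ⟨x.2.2, x.2.1⟩) (fun y _ ↦ ⟨y.2 * y.1, y.2, y.1⟩) ?_ ?_ ?_ ?_ ?_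
  · rintro ⟨n, b, a⟩ h
    simp only [mem_sigma, mem_Ioc, Nat.mem_divisorsAntidiagonal] at h ⊢
    obtain ⟨⟨hn, hnN⟩, rfl, -⟩ := h
    have ha := Nat.pos_of_mul_pos_left hn
    have hb := Nat.pos_of_mul_pos_right hn
    exact ⟨⟨ha, (Nat.le_mul_of_pos_left a hb).trans hnN⟩, hb, (Nat.le_div_iff_mul_le ha).mpr hnN⟩
  · rintro ⟨a, b⟩ h
    simp only [mem_sigma, mem_Ioc, Nat.mem_divisorsAntidiagonal] at h ⊢
    obtain ⟨⟨ha, -⟩, hb, hbN⟩ := h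
    have hba := Nat.mul_pos hb ha
    exact ⟨⟨hba, (Nat.le_div_iff_mul_le ha).mp hbN⟩, trivial, hba.ne'⟩
  · rintro ⟨n, b, a⟩ h
    simp only [mem_sigma, Nat.mem_divisorsAntidiagonal] at h
    obtain ⟨-, rfl, -⟩ := h
    rfl
  · exact fun _ _ ↦ rfl
  · exact fun _ _ ↦ rfl

section Module

variable {E : Type*} [AddCommGroup E] [Module ℝ E]

theorem sum_Ioc_inv_smul_eq_sum_logMertens_smul (g : ℕ → E) (N : ℕ) :
    ∑ n ∈ Ioc 0 N, (n : ℝ)⁻¹ • g n =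
      ∑ a ∈ Ioc 0 N, (logMertens (N / a) / a) • ∑ d ∈ a.divisors, g d := by
  set h : ℕ → E := fun a ↦ ∑ d ∈ a.divisors, g d
  have hinv : ∀ n > 0, ∑ x ∈ n.divisorsAntidiagonal, moebius x.1 • h x.2 = g n :=
    sum_eq_iff_sum_smul_moebius_eq.mp fun _ _ ↦ rfl
  calc ∑ n ∈ Ioc 0 N, (n : ℝ)⁻¹ • g n
      = ∑ n ∈ Ioc 0 N, ∑ x ∈ n.divisorsAntidiagonal,
          ((moebius x.1 : ℝ) / x.1 / x.2) • h x.2 := by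
        refine sum_congr rfl fun n hn ↦ ?_
        rw [← hinv n (mem_Ioc.mp hn).1, smul_sum]
        refine sum_congr rfl fun x hx ↦ ?_
        rw [← (Nat.mem_divisorsAntidiagonal.mp hx).1, ← Int.cast_smul_eq_zsmul ℝ, smul_smul,
          Nat.cast_mul, div_div, inv_mul_eq_div]
    _ = ∑ a ∈ Ioc 0 N, ∑ b ∈ Ioc 0 (N / a), ((moebius b : ℝ) / b / a) • h a :=
        sum_Ioc_sum_divisorsAntidiagonal (fun b a ↦ ((moebius b : ℝ) / b / a) • h a) N
    _ = ∑ a ∈ Ioc 0 N, (logMertens (N / a) / a) • h a := by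
        simp_rw [logMertens_natCast_div, sum_div, sum_smul]

theorem sum_Ioc_div_logMertens_smul (h : ℕ → E) {K : ℕ} (hK : 0 < K) (N : ℕ) :
    ∑ a ∈ Ioc (N / K) N, (logMertens (N / a) / a) • h a =
      ∑ n ∈ Ioc 0 K, ((moebius n : ℝ) / n) • ∑ a ∈ Ioc (N / K) (N / n), (a : ℝ)⁻¹ • h a := by
  simp_rw [logMertens_natCast_div, sum_div, sum_smul, smul_sum, smul_smul, ← div_eq_mul_inv]
  refine sum_comm' fun a n ↦ ?_
  simp only [mem_Ioc]
  constructor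
  · rintro ⟨⟨haK, -⟩, hn, hna⟩
    rw [Nat.div_lt_iff_lt_mul hK] at haK
    have ha : 0 < a := Nat.pos_of_mul_pos_right (Nat.zero_lt_of_lt haK)
    rw [Nat.le_div_iff_mul_le ha] at hna
    refine ⟨⟨(Nat.div_lt_iff_lt_mul hK).mpr haK, (Nat.le_div_iff_mul_le hn).mpr ?_⟩, hn, ?_⟩
    · rwa [mul_comm]
    · exact (Nat.lt_of_mul_lt_mul_left (by lia : a * n < a * K)).le
  · rintro ⟨⟨haK, han⟩, hn, -⟩
    refine ⟨⟨haK, han.trans (Nat.div_le_self _ _)⟩, hn, ?_⟩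
    rwa [Nat.le_div_iff_mul_le (Nat.zero_lt_of_lt haK), mul_comm, ← Nat.le_div_iff_mul_le hn]

theorem sum_Ioc_inv_smul_by_parts (h : ℕ → E) {M L : ℕ} (hML : M ≤ L) :
    ∑ a ∈ Ioc M L, (a : ℝ)⁻¹ • h a =
      (L : ℝ)⁻¹ • ∑ a ∈ Ioc 0 L, h a - (M : ℝ)⁻¹ • ∑ a ∈ Ioc 0 M, h a +
        ∑ k ∈ Ico M L, (k + 1 : ℝ)⁻¹ • (k : ℝ)⁻¹ • ∑ a ∈ Ioc 0 k, h a := by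
  induction L, hML using Nat.le_induction with
  | base => simp
  | succ L hML ih =>
    rw [sum_Ioc_succ_top hML, ih, sum_Ico_succ_top hML, sum_Ioc_succ_top (Nat.zero_le L)]
    rcases eq_or_ne L 0 with rfl | hL
    · obtain rfl : M = 0 := by lia
      simp
    · push_cast
      match_scalars <;> field_simp

end Module

section NormedSpace

variable {E : Type*} [NormedAddCommGroup E] [NormedSpace ℝ E]

theorem norm_sum_Ioc_inv_smul_le {h : ℕ → E} {ε : ℝ} {M L : ℕ} (hML : M ≤ L)
    (hε : ∀ k ∈ Icc M L, ‖(k : ℝ)⁻¹ • ∑ a ∈ Ioc 0 k, h a‖ ≤ ε) :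
    ‖∑ a ∈ Ioc M L, (a : ℝ)⁻¹ • h a‖ ≤ (2 + (L - M) / (M + 1)) * ε := by
  have : 0 ≤ ε := (norm_nonneg _).trans (hε M (left_mem_Icc.mpr hML))
  have hterm : ∀ k ∈ Ico M L,
      ‖(k + 1 : ℝ)⁻¹ • (k : ℝ)⁻¹ • ∑ a ∈ Ioc 0 k, h a‖ ≤ (M + 1 : ℝ)⁻¹ * ε := by
    intro k hk
    have hMk := (mem_Ico.mp hk).1
    rw [norm_smul, Real.norm_of_nonneg (by positivity)]
    gcongr
    exact hε k (Ico_subset_Icc_self hk)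
  rw [sum_Ioc_inv_smul_by_parts h hML]
  grw [norm_add_le, norm_sub_le, hε L (right_mem_Icc.mpr hML), hε M (left_mem_Icc.mpr hML),
    norm_sum_le, sum_le_card_nsmul _ _ _ hterm]
  rw [Nat.card_Ico, nsmul_eq_mul, Nat.cast_sub hML]
  exact le_of_eq (by ring)

theorem tendsto_sum_Ioc_div_inv_smul {h : ℕ → E} {k K : ℕ} (hk : 0 < k) (hkK : k ≤ K)
    (ho : (fun N : ℕ ↦ ∑ a ∈ Ioc 0 N, h a) =o[atTop] fun N ↦ (N : ℝ)) :
    Tendsto (fun N : ℕ ↦ ∑ a ∈ Ioc (N / K) (N / k), (a : ℝ)⁻¹ • h a) atTop (𝓝 0) := by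
  have hK : 0 < K := hk.trans_le hkK
  rw [NormedAddGroup.tendsto_nhds_zero]
  intro ε hε
  have hmean := ho.tendsto_inv_smul_nhds_zero.norm
  rw [norm_zero] at hmean
  obtain ⟨N₀, hN₀⟩ := eventually_atTop.mp <|
    hmean.eventually_lt_const (u := ε / (2 + K + 1)) (by positivity)
  filter_upwards [(Nat.tendsto_div_const_atTop hK.ne').eventually_ge_atTop N₀] with N hN
  have hNK : ((N / k : ℕ) : ℝ) ≤ K * ((N / K : ℕ) + 1) := by
    norm_cast
    exact (Nat.div_le_self N k).trans (Nat.lt_mul_div_succ N hK).le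
  have hratio : ((N / k : ℕ) - (N / K : ℕ) : ℝ) / ((N / K : ℕ) + 1) ≤ K := by
    rw [div_le_iff₀ (by positivity)]
    linarith [(N / K).cast_nonneg (α := ℝ)]
  calc _ ≤ (2 + ((N / k : ℕ) - (N / K : ℕ)) / ((N / K : ℕ) + 1)) * (ε / (2 + K + 1)) :=
        norm_sum_Ioc_inv_smul_le (Nat.div_le_div_left hkK hk)
          fun a ha ↦ (hN₀ a (hN.trans (mem_Icc.mp ha).1)).le
    _ ≤ (2 + K) * (ε / (2 + K + 1)) := by gcongr
    _ < ε := by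
      rw [mul_div_assoc', div_lt_iff₀ (by positivity)]
      linarith

theorem norm_sum_Ioc_logMertens_smul_le {h : ℕ → E} {C : ℝ} (hC : ∀ n, ‖h n‖ ≤ C) {K N : ℕ}
    (hK : 0 < K) (hKN : K ≤ N / K) :
    ‖∑ a ∈ Ioc K (N / K), (logMertens (N / a) / a) • h a‖ ≤
      (2 * logMertensTail (Real.log (K / 2)) + 3 / K) * C := by
  have hC0 : 0 ≤ C := (norm_nonneg _).trans (hC 0)
  have hM : 1 ≤ N / K := hK.trans_le hKN
  have hN : (0 : ℝ) < N := mod_cast (Nat.div_pos_iff.mp hM).2.trans_lt' hK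
  have hMN : ((N / K : ℕ) : ℝ) ≤ N / K := Nat.cast_div_le
  have htail : (K : ℝ) / 2 ≤ N / ((N / K : ℕ) + 1) := by
    have hM' : (1 : ℝ) ≤ (N / K : ℕ) := mod_cast hM
    rw [le_div_iff₀ (by positivity)] at hMN ⊢
    nlinarith
  calc ‖∑ a ∈ Ioc K (N / K), (logMertens (N / a) / a) • h a‖
      ≤ ∑ a ∈ Ioc K (N / K), |logMertens (N / a)| / a * C := by
        refine (norm_sum_le _ _).trans (sum_le_sum fun a _ ↦ ?_)
        rw [norm_smul, norm_div, Real.norm_natCast, Real.norm_eq_abs]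
        gcongr
        exact hC a
    _ ≤ (2 * logMertensTail (Real.log (N / ((N / K : ℕ) + 1))) + 1 / K +
          2 * (N / K : ℕ) / N) * C := by
        rw [← sum_mul]
        gcongr
        exact sum_Ioc_abs_logMertens_div_le hN hK.ne' hKN
    _ ≤ (2 * logMertensTail (Real.log (K / 2)) + 1 / K + 2 * (N / K) / N) * C := by
        gcongr
        exact antitone_logMertensTail (Real.log_le_log (by positivity) htail)
    _ = _ := by field_simp; ring

theorem tendsto_sum_Ioc_logMertens_smul (h : ℕ → E) (K : ℕ) :
    Tendsto (fun N : ℕ ↦ ∑ a ∈ Ioc 0 K, (logMertens (N / a) / a) • h a) atTop (𝓝 0) := by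
  suffices ∀ a ∈ Ioc 0 K, Tendsto (fun N : ℕ ↦ (logMertens (N / a) / a) • h a) atTop (𝓝 0) by
    simpa using tendsto_finsetSum (Ioc 0 K) this
  intro a ha
  have ha0 : (0 : ℝ) < a := mod_cast (mem_Ioc.mp ha).1
  simpa using ((tendsto_logMertens.comp
    (tendsto_natCast_atTop_atTop.atTop_div_const ha0)).div_const (a : ℝ)).smul_const (h a)

theorem tendsto_sum_Ioc_div_logMertens_smul {h : ℕ → E} {K : ℕ} (hK : 0 < K)
    (ho : (fun N : ℕ ↦ ∑ a ∈ Ioc 0 N, h a) =o[atTop] fun N ↦ (N : ℝ)) :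
    Tendsto (fun N : ℕ ↦ ∑ a ∈ Ioc (N / K) N, (logMertens (N / a) / a) • h a) atTop (𝓝 0) := by
  simp_rw [sum_Ioc_div_logMertens_smul h hK]
  suffices ∀ n ∈ Ioc 0 K, Tendsto (fun N : ℕ ↦ ((moebius n : ℝ) / n) •
      ∑ a ∈ Ioc (N / K) (N / n), (a : ℝ)⁻¹ • h a) atTop (𝓝 0) by
    simpa using tendsto_finsetSum (Ioc 0 K) this
  intro n hn
  simpa using (tendsto_sum_Ioc_div_inv_smul (mem_Ioc.mp hn).1 (mem_Ioc.mp hn).2 ho).const_smul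
    ((moebius n : ℝ) / n)

/-- A form of Axer's theorem, for `g = μ * h`. -/
theorem tendsto_sum_Ioc_inv_smul_of_isLittleO {g : ℕ → E} {C : ℝ}
    (hC : ∀ n : ℕ, ‖∑ d ∈ n.divisors, g d‖ ≤ C)
    (ho : (fun N : ℕ ↦ ∑ n ∈ Ioc 0 N, ∑ d ∈ n.divisors, g d) =o[atTop] fun N ↦ (N : ℝ)) :
    Tendsto (fun N : ℕ ↦ ∑ n ∈ Ioc 0 N, (n : ℝ)⁻¹ • g n) atTop (𝓝 0) := by
  let S (N : ℕ) (s : Finset ℕ) : E := ∑ a ∈ s, (logMertens (N / a) / a) • ∑ d ∈ a.divisors, g d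
  have hsplit {K N : ℕ} (hKN : K ≤ N / K) : ∑ n ∈ Ioc 0 N, (n : ℝ)⁻¹ • g n =
      S N (Ioc 0 K) + S N (Ioc K (N / K)) + S N (Ioc (N / K) N) := by
    rw [sum_Ioc_inv_smul_eq_sum_logMertens_smul, sum_Ioc_consecutive _ K.zero_le hKN,
      sum_Ioc_consecutive _ (Nat.zero_le _) (Nat.div_le_self N K)]
  have hmiddle : Tendsto (fun K : ℕ ↦ (2 * logMertensTail (Real.log (K / 2)) + 3 / K) * C)
      atTop (𝓝 0) := by
    have hlog : Tendsto (fun K : ℕ ↦ Real.log (K / 2)) atTop atTop :=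
      Real.tendsto_log_atTop.comp (tendsto_natCast_atTop_atTop.atTop_div_const two_pos)
    simpa using (((tendsto_logMertensTail.comp hlog).const_mul 2).add
      (tendsto_const_div_atTop_nhds_zero_nat (3 : ℝ))).mul_const C
  rw [NormedAddGroup.tendsto_nhds_zero]
  intro ε hε
  obtain ⟨K, hKε, hK⟩ :=
    ((hmiddle.eventually_lt_const (half_pos hε)).and (eventually_gt_atTop 0)).exists
  have hends := ((tendsto_sum_Ioc_logMertens_smul (fun a ↦ ∑ d ∈ a.divisors, g d) K).add
    (tendsto_sum_Ioc_div_logMertens_smul hK ho)).norm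
  rw [add_zero, norm_zero] at hends
  filter_upwards [hends.eventually_lt_const (half_pos hε),
    (Nat.tendsto_div_const_atTop hK.ne').eventually_ge_atTop K] with N hN hKN
  rw [hsplit hKN, add_right_comm]
  calc _ ≤ ‖S N (Ioc 0 K) + S N (Ioc (N / K) N)‖ + ‖S N (Ioc K (N / K))‖ := norm_add_le _ _
    _ < ε / 2 + ε / 2 := by
      gcongr
      exact (norm_sum_Ioc_logMertens_smul_le hC hK hKN).trans_lt hKε
    _ = ε := add_halves ε

end NormedSpace

/-! ### Duality between smallest and largest prime factors -/

section Duality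

theorem moebius_prod_of_prime {S : Finset ℕ} (hS : ∀ p ∈ S, p.Prime) :
    moebius (∏ p ∈ S, p) = (-1) ^ #S := by
  rw [isMultiplicative_moebius.map_prod_of_prime S hS,
    prod_congr rfl fun p hp ↦ moebius_apply_prime (hS p hp), prod_const]

theorem minFac_prod_insert {p : ℕ} {S : Finset ℕ} (hp : p.Prime) (hS : ∀ q ∈ S, q.Prime)
    (hpS : ∀ q ∈ S, p ≤ q) : (∏ q ∈ insert p S, q).minFac = p := by
  have hdvd : p ∣ ∏ q ∈ insert p S, q := dvd_prod_of_mem (fun q ↦ q) (mem_insert_self p S)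
  refine (Nat.minFac_le_of_dvd hp.two_le hdvd).antisymm ?_
  refine (Nat.le_minFac.mpr fun r hr hrdvd ↦ ?_).resolve_left fun h ↦
    hp.one_lt.ne' (Nat.dvd_one.mp (h ▸ hdvd))
  obtain ⟨q, hq, hrq⟩ := (hr.prime.dvd_finsetProd_iff _).mp hrdvd
  rcases mem_insert.mp hq with rfl | hqS
  · exact ((Nat.prime_dvd_prime_iff_eq hr hp).mp hrq).ge
  · exact (hpS q hqS).trans_eq ((Nat.prime_dvd_prime_iff_eq hr (hS q hqS)).mp hrq).symm

theorem sum_powerset_insert_neg_one_pow_card_mul_card_add_one {α : Type*} [DecidableEq α] {a : α}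
    {T : Finset α} (ha : a ∉ T) :
    ∑ S ∈ (insert a T).powerset, (-1 : ℤ) ^ #S * (#S + 1) = if T = ∅ then -1 else 0 := by
  have hpair : ∀ S ∈ T.powerset, (-1 : ℤ) ^ #S * (#S + 1) +
      (-1) ^ #(insert a S) * (#(insert a S) + 1) = -(-1) ^ #S := by
    intro S hS
    rw [card_insert_of_notMem fun h ↦ ha (mem_powerset.mp hS h)]
    push_cast
    ring
  rw [sum_powerset_insert ha, ← sum_add_distrib, sum_congr rfl hpair, sum_neg_distrib,
    sum_powerset_neg_one_pow_card]
  split_ifs <;> rfl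

variable {E : Type*} [AddCommGroup E]

theorem sum_divisors_moebius_smul {n : ℕ} (hn : n ≠ 0) (G : ℕ → E) :
    ∑ d ∈ n.divisors, moebius d • G d =
      ∑ S ∈ n.primeFactors.powerset, (-1 : ℤ) ^ #S • G (∏ p ∈ S, p) := by
  have hfactors : (UniqueFactorizationMonoid.normalizedFactors n).toFinset = n.primeFactors := by
    rw [Nat.factors_eq]; rfl
  rw [← sum_filter_of_ne (p := Squarefree) fun d _ h ↦ by_contra fun hd ↦ h (by
    rw [moebius_eq_zero_of_not_squarefree hd, zero_smul]),
    Nat.sum_divisors_filter_squarefree hn, hfactors]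
  refine sum_congr rfl fun S hS ↦ ?_
  rw [prod_val, ← moebius_prod_of_prime fun p hp ↦
    Nat.prime_of_mem_primeFactors (mem_powerset.mp hS hp)]
  rfl

theorem sum_powerset_card_smul_minFac {f : ℕ → E} (hf1 : f 1 = 0) {T : Finset ℕ}
    (hT : ∀ p ∈ T, p.Prime) (hne : T.Nonempty) :
    ∑ S ∈ T.powerset, (-1 : ℤ) ^ #S • (#S : ℤ) • f (∏ p ∈ S, p).minFac =
      f (((T.sort (· ≤ ·)).reverse).getD 1 1) - f (T.sup _root_.id) := by
  induction T using Finset.induction_on_min with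
  | empty => simp at hne
  | insert a T ha ih =>
    have haT : a ∉ T := fun h ↦ (ha a h).false
    have hT' : ∀ p ∈ T, p.Prime := fun p hp ↦ hT p (mem_insert_of_mem hp)
    have hinsert : ∀ S ∈ T.powerset,
        (-1 : ℤ) ^ #(insert a S) • (#(insert a S) : ℤ) • f (∏ p ∈ insert a S, p).minFac =
          ((-1 : ℤ) ^ #S * (#S + 1)) • -f a := by
      intro S hS
      have hST := mem_powerset.mp hS
      rw [minFac_prod_insert (hT a (mem_insert_self a T)) (fun p hp ↦ hT' p (hST hp))
        fun p hp ↦ (ha p (hST hp)).le, card_insert_of_notMem fun h ↦ haT (hST h)]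
      module
    rw [sum_powerset_insert haT, sum_congr rfl hinsert, ← sum_smul,
      sort_insert _ (fun b hb ↦ (ha b hb).le) haT, sup_insert, List.reverse_cons]
    rcases T.eq_empty_or_nonempty with rfl | ⟨b, hb⟩
    · simp [hf1]
    have hsup : _root_.id a ⊔ T.sup _root_.id = T.sup _root_.id :=
      sup_eq_right.mpr ((ha b hb).le.trans (le_sup (f := _root_.id) hb))
    rw [ih hT' ⟨b, hb⟩, hsup, ← insert_erase hb,
      sum_powerset_insert_neg_one_pow_card_mul_card_add_one (notMem_erase b T), insert_erase hb]
    split_ifs with hTb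
    · obtain rfl : T = {b} := by rw [← insert_erase hb, hTb, insert_empty_eq]
      simp [hf1, sub_eq_neg_add]
    · have hlen : 1 < (T.sort (· ≤ ·)).reverse.length := by
        rw [List.length_reverse, length_sort, one_lt_card_iff_nontrivial]
        exact (erase_nonempty hb).mp (nonempty_of_ne_empty hTb)
      rw [List.getD_append _ _ _ _ hlen, zero_smul, add_zero]

theorem sum_divisors_moebius_smul_card_smul_minFac {f : ℕ → E} (hf1 : f 1 = 0) {n : ℕ}
    (hn : 2 ≤ n) :
    ∑ d ∈ n.divisors, moebius d • (#d.primeFactors : ℤ) • f d.minFac =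
      f (secondLargestPrimeFac n) - f (maxPrimeFac n) := by
  have hprime : ∀ p ∈ n.primeFactors, p.Prime := fun p ↦ Nat.prime_of_mem_primeFactors
  rw [sum_divisors_moebius_smul (by lia), secondLargestPrimeFac, maxPrimeFac,
    ← sum_powerset_card_smul_minFac hf1 hprime (Nat.nonempty_primeFactors.mpr hn)]
  refine sum_congr rfl fun S hS ↦ ?_
  rw [Nat.primeFactors_prod fun p hp ↦ hprime p (mem_powerset.mp hS hp)]

end Duality

theorem prime_maxPrimeFac {n : ℕ} (hn : 2 ≤ n) : (maxPrimeFac n).Prime := by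
  obtain ⟨p, hp, h⟩ := exists_mem_eq_sup _ (Nat.nonempty_primeFactors.mpr hn) _root_.id
  rw [maxPrimeFac, h]
  exact Nat.prime_of_mem_primeFactors hp

theorem prime_secondLargestPrimeFac_or_eq_one (n : ℕ) :
    (secondLargestPrimeFac n).Prime ∨ secondLargestPrimeFac n = 1 := by
  rw [secondLargestPrimeFac]
  rcases lt_or_ge 1 (n.primeFactors.sort (· ≤ ·)).reverse.length with h | h
  · left
    rw [List.getD_eq_getElem _ _ h]
    refine Nat.prime_of_mem_primeFactors (n := n) ?_
    rw [← mem_sort (· ≤ ·), ← List.mem_reverse]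
    exact List.getElem_mem h
  · exact .inr (List.getD_eq_default _ _ h)

theorem norm_sub_maxPrimeFac_le {E : Type*} [SeminormedAddCommGroup E] {f : ℕ → E} (hf1 : f 1 = 0)
    {B : ℝ} (hB : ∀ q : ℕ, q.Prime → ‖f q‖ ≤ B) {n : ℕ} (hn : 2 ≤ n) :
    ‖f (secondLargestPrimeFac n) - f (maxPrimeFac n)‖ ≤ B + B := by
  refine norm_sub_le_of_le ?_ (hB _ (prime_maxPrimeFac hn))
  rcases prime_secondLargestPrimeFac_or_eq_one n with h | h
  · exact hB _ h
  · rw [h, hf1, norm_zero]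
    exact (norm_nonneg _).trans (hB 2 Nat.prime_two)

theorem sum_Ioc_zero_eq_sum_Icc_two {M : Type*} [AddCommMonoid M] {F : ℕ → M} (hF : F 1 = 0)
    (N : ℕ) : ∑ n ∈ Ioc 0 N, F n = ∑ n ∈ Icc 2 N, F n := by
  refine (sum_subset (fun n ↦ by simp only [mem_Icc, mem_Ioc]; lia) fun n hn hn' ↦ ?_).symm
  obtain rfl : n = 1 := by simp only [mem_Icc, mem_Ioc] at hn hn'; lia
  exact hF

theorem moebius_omega_f_smallest_factor_div_general {E : Type*} [NormedAddCommGroup E]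
    [NormedSpace ℝ E] (f : ℕ → E) (hf1 : f 1 = 0) (B : ℝ) (hB : ∀ q : ℕ, q.Prime → ‖f q‖ ≤ B)
    (h : (fun x : ℝ ↦ ∑ n ∈ Icc 2 ⌊x⌋₊, (f (secondLargestPrimeFac n) - f (maxPrimeFac n)))
      =o[atTop] fun x ↦ x) :
    Tendsto (fun x : ℝ ↦ ∑ n ∈ Icc 2 ⌊x⌋₊,
      ((moebius n : ℝ) * (#n.primeFactors : ℝ) / n) • f n.minFac) atTop (𝓝 0) := by
  let g (d : ℕ) : E := moebius d • (#d.primeFactors : ℤ) • f d.minFac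
  have hg1 : g 1 = 0 := by simp [g]
  have hdual {n : ℕ} (hn : 2 ≤ n) : ∑ d ∈ n.divisors, g d =
      f (secondLargestPrimeFac n) - f (maxPrimeFac n) :=
    sum_divisors_moebius_smul_card_smul_minFac hf1 hn
  have hbound (n : ℕ) : ‖∑ d ∈ n.divisors, g d‖ ≤ B + B := by
    rcases lt_or_ge n 2 with hn | hn
    · have hB0 : 0 ≤ B := (norm_nonneg _).trans (hB 2 Nat.prime_two)
      interval_cases n <;> simp [hg1, hB0]
    · exact hdual hn ▸ norm_sub_maxPrimeFac_le hf1 hB hn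
  have hmean : (fun N : ℕ ↦ ∑ n ∈ Ioc 0 N, ∑ d ∈ n.divisors, g d) =o[atTop] fun N ↦ (N : ℝ) := by
    refine (h.comp_tendsto tendsto_natCast_atTop_atTop).congr_left fun N ↦ ?_
    rw [sum_Ioc_zero_eq_sum_Icc_two (by simpa using hg1), Function.comp_apply, Nat.floor_natCast]
    exact sum_congr rfl fun n hn ↦ (hdual (mem_Icc.mp hn).1).symm
  refine ((tendsto_sum_Ioc_inv_smul_of_isLittleO hbound hmean).comp
    (tendsto_nat_floor_atTop (α := ℝ))).congr fun x ↦ ?_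
  rw [Function.comp_apply, sum_Ioc_zero_eq_sum_Icc_two (by simp [hg1])]
  refine sum_congr rfl fun n _ ↦ ?_
  simp only [g, ← Int.cast_smul_eq_zsmul ℝ, smul_smul, Int.cast_natCast]
  congr 1
  ring

/-- If `f` is a real-valued function with `f(1) = 0`, bounded on the primes, and there is
a constant `κ` with `Σ_{2 ≤ n ≤ x} f(P(n)) = κx + o(x)` and
`Σ_{2 ≤ n ≤ x} f(P₂(n)) = κx + o(x)`, then `Σ_{n ≥ 2} μ(n) ω(n) f(p(n))/n` converges to
`0`, i.e. its partial sums tend to `0` as `x → ∞`. -/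
theorem moebius_omega_f_smallest_factor_div
    (f : ℕ → ℝ) (hf1 : f 1 = 0) (B : ℝ) (hB : ∀ q : ℕ, q.Prime → |f q| ≤ B) (κ : ℝ)
    (hP : (fun x : ℝ => (∑ n ∈ Finset.Icc 2 ⌊x⌋₊, f (maxPrimeFac n)) - κ * x)
        =o[atTop] (fun x : ℝ => x))
    (hP2 : (fun x : ℝ => (∑ n ∈ Finset.Icc 2 ⌊x⌋₊, f (secondLargestPrimeFac n)) - κ * x)
        =o[atTop] (fun x : ℝ => x)) :
    Tendsto (fun x : ℝ =>
        ∑ n ∈ Finset.Icc 2 ⌊x⌋₊,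
          (moebius n : ℝ) * (n.primeFactors.card : ℝ) * f n.minFac / n)
      atTop (nhds 0) := by
  have h := moebius_omega_f_smallest_factor_div_general f hf1 B hB
    ((hP2.sub hP).congr_left fun x ↦ by rw [sub_sub_sub_cancel_right, sum_sub_distrib])
  simpa only [smul_eq_mul, div_mul_eq_mul_div] using h
end

section
/- There exists a constant C > 0 such that for all real x ≥ 4, |Σ_{√x < p ≤ x} ⌊x/p⌋ − x·log 2| ≤ C · x / log x, where the sum runs over primes p with √x < p ≤ x and ⌊y⌋ denotes the integer part of y. -/
open Finset Real

/-!
Replacing each `⌊x / p⌋` by `x / p` costs at most the number of primes up to `x` that exceed `√x`,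
which is `O(x / log x)` by Chebyshev's bound `θ(x) ≤ x log 4`. What remains is `x ∑ 1 / p`.
Comparing `log n!` with its prime factorization gives Mertens' first theorem
`∑_{p ≤ t} (log p) / p = log t + O(1)`, and partial summation against `1 / log t` turns this into
`∑_{y < p ≤ x} 1 / p = log (log x / log y) + O(1 / log y)`. At `y = √x` the main term is `log 2`.
-/

theorem log_factorial_eq_sum_primesLE (n : ℕ) :
    log n.factorial = ∑ p ∈ n.primesLE, (n.factorial.factorization p : ℝ) * log p := by
  rw [log_nat_eq_sum_factorization]
  refine Finsupp.sum_of_support_subset _ (fun p hp => ?_) _ (by simp)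
  have hprime := Nat.prime_of_mem_primeFactors hp
  exact Nat.mem_primesLE.2 ⟨hprime.dvd_factorial.1 (Nat.dvd_of_mem_primeFactors hp), hprime⟩

theorem log_factorial_le (n : ℕ) : log n.factorial ≤ n * log n := by
  rw [← log_pow]
  exact log_le_log (by positivity) (mod_cast n.factorial_le_pow)

theorem mul_log_sub_self_le_log_factorial (n : ℕ) : n * log n - n ≤ log n.factorial := by
  obtain rfl | hn := n.eq_zero_or_pos
  · simp
  have h := log_le_log (by positivity) (pow_div_factorial_le_exp n n.cast_nonneg n)
  rw [log_exp, log_div (by positivity) (by positivity), log_pow] at h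
  linarith

theorem div_le_factorization_factorial {p : ℕ} (hp : p.Prime) (n : ℕ) :
    n / p ≤ n.factorial.factorization p := by
  rw [Nat.factorization_factorial hp (b := Nat.log p n + 2) (by lia)]
  simpa using single_le_sum_of_canonicallyOrdered (f := fun i => n / p ^ i)
    (show 1 ∈ Ico 1 (Nat.log p n + 2) by simp)

theorem factorization_factorial_le_div {p : ℕ} (hp : p.Prime) (n : ℕ) :
    (n.factorial.factorization p : ℝ) ≤ n / (p - 1) := by
  have h : (n.factorial.factorization p : ℝ) ≤ ((n / (p - 1) : ℕ) : ℝ) :=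
    mod_cast Nat.factorization_factorial_le_div_pred hp n
  simpa [Nat.cast_sub hp.one_le] using h.trans Nat.cast_div_le

theorem log_div_mul_sub_one_le {x : ℝ} (hx : 1 < x) :
    log x / (x * (x - 1)) ≤ 2 * x ^ (-(3 / 2) : ℝ) := by
  have hx0 : 0 < x := by linarith
  have hs : 1 < √x := lt_sqrt_of_sq_lt (by simpa using hx)
  have hlog : log x ≤ 2 * (√x - 1) := by
    have := log_le_sub_one_of_pos (sqrt_pos.2 hx0)
    rw [log_sqrt hx0.le] at this
    linarith
  have hfac : x - 1 = (√x - 1) * (√x + 1) := by linear_combination -sq_sqrt hx0.le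
  have hpow : x ^ (-(3 / 2) : ℝ) = (x * √x)⁻¹ := by
    rw [rpow_neg hx0.le, sqrt_eq_rpow, ← rpow_one_add' hx0.le (by norm_num)]
    norm_num
  have hs' : 0 < √x - 1 := by linarith
  calc log x / (x * (x - 1)) ≤ 2 * (√x - 1) / (x * ((√x - 1) * (√x + 1))) := by
        rw [hfac]; gcongr
    _ = 2 / (x * (√x + 1)) := by field_simp
    _ ≤ 2 / (x * √x) := by gcongr; linarith
    _ = 2 * x ^ (-(3 / 2) : ℝ) := by rw [hpow, div_eq_mul_inv]

-- The terms `n = 0` and `n = 1` are `0` because division by zero is.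
theorem summable_log_div_mul_sub_one :
    Summable fun n : ℕ => log n / (n * (n - 1) : ℝ) := by
  have hs : Summable fun n : ℕ => 2 * (n : ℝ) ^ (-(3 / 2) : ℝ) :=
    (summable_nat_rpow.2 (by norm_num)).mul_left 2
  refine .of_norm_bounded_eventually_nat hs ?_
  filter_upwards [Filter.eventually_gt_atTop 1] with n hn
  have hn' : (1 : ℝ) < n := mod_cast hn
  rw [norm_of_nonneg (div_nonneg (log_natCast_nonneg n) (by nlinarith))]
  exact log_div_mul_sub_one_le hn'

theorem mul_sum_log_div_le (n : ℕ) :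
    n * ∑ p ∈ n.primesLE, log p / p ≤ log n.factorial + Chebyshev.theta n := by
  rw [log_factorial_eq_sum_primesLE, Chebyshev.theta_eq_sum_primesLE_log, mul_sum,
    ← sum_add_distrib]
  refine sum_le_sum fun p hp => ?_
  have hdiv : (n : ℝ) / p ≤ n.factorial.factorization p + 1 := by
    have hlt := Nat.lt_floor_add_one ((n : ℝ) / p)
    rw [Nat.floor_div_eq_div] at hlt
    have hle : ((n / p : ℕ) : ℝ) ≤ n.factorial.factorization p :=
      mod_cast div_le_factorization_factorial (Nat.prime_of_mem_primesLE hp) n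
    linarith
  calc n * (log p / p) = n / p * log p := by ring
    _ ≤ (n.factorial.factorization p + 1) * log p := by gcongr
    _ = n.factorial.factorization p * log p + log p := by ring

theorem log_factorial_le_mul_sum_log_div_sub_one (n : ℕ) :
    log n.factorial ≤ n * ∑ p ∈ n.primesLE, log p / (p - 1 : ℝ) := by
  rw [log_factorial_eq_sum_primesLE, mul_sum]
  refine sum_le_sum fun p hp => ?_
  calc n.factorial.factorization p * log p ≤ n / (p - 1) * log p := by
        gcongr
        exact factorization_factorial_le_div (Nat.prime_of_mem_primesLE hp) n
    _ = n * (log p / (p - 1)) := by ring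

theorem sum_log_div_sub_one_le (n : ℕ) :
    ∑ p ∈ n.primesLE, log p / (p - 1 : ℝ) ≤
      ∑ p ∈ n.primesLE, log p / p + ∑' k : ℕ, log k / (k * (k - 1) : ℝ) := by
  have hsplit : ∑ p ∈ n.primesLE, log p / (p - 1 : ℝ) =
      ∑ p ∈ n.primesLE, log p / p + ∑ p ∈ n.primesLE, log p / (p * (p - 1) : ℝ) := by
    rw [← sum_add_distrib]
    refine sum_congr rfl fun p hp => ?_
    have hp1 : (1 : ℝ) < p := mod_cast Nat.one_lt_of_mem_primesLE hp
    have hp0 : (p : ℝ) - 1 ≠ 0 := by linarith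
    field_simp
    ring
  rw [hsplit]
  gcongr
  refine summable_log_div_mul_sub_one.sum_le_tsum _ fun k _ => ?_
  obtain rfl | hk := k.eq_zero_or_pos
  · simp
  have hk1 : (1 : ℝ) ≤ k := mod_cast hk
  exact div_nonneg (log_natCast_nonneg k) (mul_nonneg k.cast_nonneg (by linarith))

theorem sum_log_div_prime_le {n : ℕ} (hn : n ≠ 0) :
    ∑ p ∈ n.primesLE, log p / p ≤ log n + log 4 := by
  have hn0 : (0 : ℝ) < n := by positivity
  refine le_of_mul_le_mul_left ?_ hn0
  linarith [mul_sum_log_div_le n, log_factorial_le n, Chebyshev.theta_le_log4_mul_x hn0.le]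

theorem le_sum_log_div_prime {n : ℕ} (hn : n ≠ 0) :
    log n - 1 - ∑' k : ℕ, log k / (k * (k - 1) : ℝ) ≤ ∑ p ∈ n.primesLE, log p / p := by
  have hn0 : (0 : ℝ) < n := by positivity
  have h : log n - 1 ≤ ∑ p ∈ n.primesLE, log p / (p - 1 : ℝ) := by
    refine le_of_mul_le_mul_left ?_ hn0
    linarith [mul_log_sub_self_le_log_factorial n, log_factorial_le_mul_sum_log_div_sub_one n]
  linarith [sum_log_div_sub_one_le n]

theorem log_le_log_floor_add_log_two {t : ℝ} (ht : 1 ≤ t) : log t ≤ log ⌊t⌋₊ + log 2 := by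
  have hfloor : (1 : ℝ) ≤ ⌊t⌋₊ := mod_cast (Nat.one_le_floor_iff t).2 ht
  rw [← log_mul (by positivity) two_ne_zero]
  exact log_le_log (by positivity) (by linarith [Nat.lt_floor_add_one t])

theorem exists_abs_sum_log_div_prime_sub_log_le : ∃ K : ℝ, ∀ t : ℝ, 1 ≤ t →
    |∑ p ∈ Nat.primesLE ⌊t⌋₊, log p / p - log t| ≤ K := by
  refine ⟨max (log 4) (1 + ∑' k : ℕ, log k / (k * (k - 1) : ℝ) + log 2), fun t ht => ?_⟩
  have hfloor : 0 < ⌊t⌋₊ := Nat.floor_pos.2 ht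
  have hlog : log ⌊t⌋₊ ≤ log t :=
    log_le_log (mod_cast hfloor) (Nat.floor_le (by linarith))
  refine abs_sub_le_iff.2 ⟨le_max_of_le_left ?_, le_max_of_le_right ?_⟩
  · linarith [sum_log_div_prime_le hfloor.ne']
  · linarith [le_sum_log_div_prime hfloor.ne', log_le_log_floor_add_log_two ht]

section PartialSummation

/-- The error made by approximating the partial sums of `c` by the logarithm. Mertens' first theorem
says that it is bounded when `c` is `log p / p` at each prime `p` and vanishes elsewhere. -/
noncomputable def partialSumSubLog (c : ℕ → ℝ) (t : ℝ) : ℝ :=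
  ∑ k ∈ Icc 0 ⌊t⌋₊, c k - log t

variable {a b : ℝ}

theorem integrableOn_inv_div_log_sq_Icc (ha : 1 < a) :
    MeasureTheory.IntegrableOn (fun t : ℝ => t⁻¹ / log t ^ 2) (Set.Icc a b) :=
  integrableOn_Icc_iff_integrableOn_Ioc (by simp) |>.2
    ((integrableOn_inv_div_log_sq_Ioi ha).mono_set Set.Ioc_subset_Ioi_self)

theorem sum_inv_log_mul_eq_sub_add_integral (c : ℕ → ℝ) (ha : 1 < a) (hab : a ≤ b) :
    ∑ k ∈ Ioc ⌊a⌋₊ ⌊b⌋₊, (log k)⁻¹ * c k =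
      (log b)⁻¹ * ∑ k ∈ Icc 0 ⌊b⌋₊, c k - (log a)⁻¹ * ∑ k ∈ Icc 0 ⌊a⌋₊, c k +
        ∫ t in a..b, t⁻¹ / log t ^ 2 * ∑ k ∈ Icc 0 ⌊t⌋₊, c k := by
  have hderiv : deriv (fun t => (log t)⁻¹) = fun t => -(t⁻¹ / log t ^ 2) := by
    simp only [deriv_inv_log, neg_div]
  rw [sum_mul_eq_sub_sub_integral_mul c (f := fun t => (log t)⁻¹) (by linarith) hab]
  · simp only [hderiv, neg_mul, MeasureTheory.integral_neg, sub_neg_eq_add,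
      intervalIntegral.integral_of_le hab]
  · intro t ht
    exact differentiableOn_inv_log.differentiableAt (Ioi_mem_nhds (ha.trans_le ht.1))
  · rw [hderiv]
    exact (integrableOn_inv_div_log_sq_Icc ha).neg

theorem integral_inv_div_log_sq_mul_sum (c : ℕ → ℝ) (ha : 1 < a) (hab : a ≤ b) :
    ∫ t in a..b, t⁻¹ / log t ^ 2 * ∑ k ∈ Icc 0 ⌊t⌋₊, c k =
      log (log b / log a) + ∫ t in a..b, t⁻¹ / log t ^ 2 * partialSumSubLog c t := by
  have hb : 1 < b := ha.trans_le hab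
  have hsum : IntervalIntegrable (fun t : ℝ => t⁻¹ / log t ^ 2 * ∑ k ∈ Icc 0 ⌊t⌋₊, c k)
      MeasureTheory.volume a b :=
    (intervalIntegrable_iff_integrableOn_Icc_of_le hab).2
      (integrableOn_mul_sum_Icc c (by linarith) (integrableOn_inv_div_log_sq_Icc ha))
  have hlog : IntervalIntegrable (fun t : ℝ => t⁻¹ / log t ^ 2 * log t)
      MeasureTheory.volume a b := by
    refine IntervalIntegrable.mul_continuousOn ?_ (continuousOn_log.mono fun t ht => ?_)
    · exact (intervalIntegrable_iff_integrableOn_Icc_of_le hab).2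
        (integrableOn_inv_div_log_sq_Icc ha)
    · rw [Set.uIcc_of_le hab] at ht
      exact (zero_lt_one.trans (ha.trans_le ht.1)).ne'
  have hmain : ∫ t in a..b, t⁻¹ / log t ^ 2 * log t = log (log b / log a) := by
    rw [log_div (log_pos hb).ne' (log_pos ha).ne', ← integral_inv_div_log ha hb]
    congr with t
    simp [field]
  simp only [partialSumSubLog, mul_sub]
  rw [intervalIntegral.integral_sub hsum hlog, hmain]
  ring

theorem sum_inv_log_mul_sub_log_eq (c : ℕ → ℝ) (ha : 1 < a) (hab : a ≤ b) :
    ∑ k ∈ Ioc ⌊a⌋₊ ⌊b⌋₊, (log k)⁻¹ * c k - log (log b / log a) =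
      (log b)⁻¹ * partialSumSubLog c b - (log a)⁻¹ * partialSumSubLog c a +
        ∫ t in a..b, t⁻¹ / log t ^ 2 * partialSumSubLog c t := by
  have hla : log a ≠ 0 := (log_pos ha).ne'
  have hlb : log b ≠ 0 := (log_pos (ha.trans_le hab)).ne'
  rw [sum_inv_log_mul_eq_sub_add_integral c ha hab, integral_inv_div_log_sq_mul_sum c ha hab,
    partialSumSubLog, partialSumSubLog, mul_sub, mul_sub, inv_mul_cancel₀ hla, inv_mul_cancel₀ hlb]
  ring

theorem abs_integral_inv_div_log_sq_mul_le {f : ℝ → ℝ} {K : ℝ} (ha : 1 < a) (hab : a ≤ b)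
    (hf : ∀ t ∈ Set.Ioc a b, |f t| ≤ K) :
    |∫ t in a..b, t⁻¹ / log t ^ 2 * f t| ≤ ((log a)⁻¹ - (log b)⁻¹) * K := by
  rw [← integral_inv_div_log_sq ha (ha.trans_le hab), ← intervalIntegral.integral_mul_const,
    ← norm_eq_abs]
  refine intervalIntegral.norm_integral_le_of_norm_le hab (.of_forall fun t ht => ?_) ?_
  · have ht0 : 0 < t := by linarith [ht.1]
    rw [norm_mul, norm_eq_abs, norm_eq_abs, abs_of_nonneg (by positivity)]
    gcongr
    exact hf t ht
  · exact ((intervalIntegrable_iff_integrableOn_Icc_of_le hab).2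
      (integrableOn_inv_div_log_sq_Icc ha)).mul_const K

theorem abs_sum_inv_log_mul_sub_log_le {c : ℕ → ℝ} {K : ℝ} (ha : 1 < a) (hab : a ≤ b)
    (hc : ∀ t ∈ Set.Icc a b, |partialSumSubLog c t| ≤ K) :
    |∑ k ∈ Ioc ⌊a⌋₊ ⌊b⌋₊, (log k)⁻¹ * c k - log (log b / log a)| ≤ 2 * K / log a := by
  have hla : 0 < log a := log_pos ha
  have hlb : 0 < log b := log_pos (ha.trans_le hab)
  have hendpoint {t : ℝ} (ht : t ∈ Set.Icc a b) (hlt : 0 < log t) :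
      |(log t)⁻¹ * partialSumSubLog c t| ≤ (log t)⁻¹ * K := by
    rw [abs_mul, abs_of_pos (inv_pos.2 hlt)]
    gcongr
    exact hc t ht
  rw [sum_inv_log_mul_sub_log_eq c ha hab]
  calc _ ≤ |(log b)⁻¹ * partialSumSubLog c b| + |(log a)⁻¹ * partialSumSubLog c a|
        + |∫ t in a..b, t⁻¹ / log t ^ 2 * partialSumSubLog c t| :=
        (abs_add_le _ _).trans (by gcongr; exact abs_sub _ _)
    _ ≤ (log b)⁻¹ * K + (log a)⁻¹ * K + ((log a)⁻¹ - (log b)⁻¹) * K := by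
        gcongr
        · exact hendpoint (Set.right_mem_Icc.2 hab) hlb
        · exact hendpoint (Set.left_mem_Icc.2 hab) hla
        · exact abs_integral_inv_div_log_sq_mul_le ha hab fun t ht =>
            hc t (Set.Ioc_subset_Icc_self ht)
    _ = 2 * K / log a := by ring

end PartialSummation

theorem exists_abs_sum_inv_prime_Ioc_sub_log_le : ∃ K : ℝ, ∀ y x : ℝ, 1 < y → y ≤ x →
    |∑ p ∈ Ioc ⌊y⌋₊ ⌊x⌋₊ with p.Prime, (p : ℝ)⁻¹ - log (log x / log y)| ≤ K / log y := by
  obtain ⟨K, hK⟩ := exists_abs_sum_log_div_prime_sub_log_le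
  refine ⟨2 * K, fun y x hy hyx => ?_⟩
  let c : ℕ → ℝ := fun k => if k.Prime then log k / k else 0
  have hc (t : ℝ) :
      partialSumSubLog c t = ∑ p ∈ Nat.primesLE ⌊t⌋₊, log p / p - log t := by
    rw [partialSumSubLog, Nat.primesLE_eq_filter_Icc_zero, sum_filter]
  have hsum : ∑ p ∈ Ioc ⌊y⌋₊ ⌊x⌋₊ with p.Prime, (p : ℝ)⁻¹ =
      ∑ k ∈ Ioc ⌊y⌋₊ ⌊x⌋₊, (log k)⁻¹ * c k := by
    simp only [c, mul_ite, mul_zero, ← sum_filter]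
    refine sum_congr rfl fun p hp => ?_
    have : log p ≠ 0 := (log_pos (mod_cast (mem_filter.1 hp).2.one_lt)).ne'
    field_simp
  rw [hsum]
  exact abs_sum_inv_log_mul_sub_log_le hy hyx fun t ht => hc t ▸ hK t (hy.le.trans ht.1)

theorem filter_prime_lt_Icc_eq (y : ℝ) (n : ℕ) :
    {p ∈ Icc 1 n | Nat.Prime p ∧ y < (p : ℝ)} = {p ∈ Ioc ⌊y⌋₊ n | Nat.Prime p} := by
  ext p
  simp only [mem_filter, mem_Icc, mem_Ioc]
  exact ⟨fun ⟨⟨_, hpn⟩, hp, hyp⟩ => ⟨⟨(Nat.floor_lt' hp.ne_zero).2 hyp, hpn⟩, hp⟩,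
    fun ⟨⟨hyp, hpn⟩, hp⟩ => ⟨⟨hp.one_le, hpn⟩, hp, (Nat.floor_lt' hp.ne_zero).1 hyp⟩⟩

theorem card_filter_prime_lt_mul_log_le {x y : ℝ} (hy : 0 < y) :
    #{p ∈ Icc 1 ⌊x⌋₊ | Nat.Prime p ∧ y < (p : ℝ)} * log y ≤ Chebyshev.theta x := by
  rw [Chebyshev.theta_eq_sum_primesLE, Nat.primesLE_eq_filter_Icc_one, ← nsmul_eq_mul]
  calc #{p ∈ Icc 1 ⌊x⌋₊ | Nat.Prime p ∧ y < (p : ℝ)} • log y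
      ≤ ∑ p ∈ Icc 1 ⌊x⌋₊ with Nat.Prime p ∧ y < (p : ℝ), log p :=
        card_nsmul_le_sum _ _ _ fun p hp => log_le_log hy (mem_filter.1 hp).2.2.le
    _ ≤ ∑ p ∈ Icc 1 ⌊x⌋₊ with Nat.Prime p, log p :=
        sum_le_sum_of_subset_of_nonneg (monotone_filter_right _ fun p _ hp => hp.1)
          fun p _ _ => log_natCast_nonneg p

theorem abs_sum_floor_sub_sum_le_card {ι : Type*} (s : Finset ι) (f : ι → ℝ) :
    |∑ i ∈ s, (⌊f i⌋ : ℝ) - ∑ i ∈ s, f i| ≤ #s := by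
  rw [← sum_sub_distrib]
  calc |∑ i ∈ s, ((⌊f i⌋ : ℝ) - f i)| ≤ ∑ i ∈ s, |(⌊f i⌋ : ℝ) - f i| := abs_sum_le_sum_abs _ _
    _ ≤ ∑ _i ∈ s, 1 := sum_le_sum fun i _ =>
        abs_sub_le_iff.2
          ⟨by linarith [Int.floor_le (f i)], by linarith [Int.lt_floor_add_one (f i)]⟩
    _ = #s := by simp

theorem sum_floor_over_large_primes_general :
    ∃ C > (0 : ℝ), ∀ x y : ℝ, 1 < y → y ≤ x →
      |∑ p ∈ Icc 1 ⌊x⌋₊ with Nat.Prime p ∧ y < (p : ℝ), (⌊x / (p : ℝ)⌋ : ℝ) -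
        x * log (log x / log y)| ≤ C * x / log y := by
  obtain ⟨K, hK⟩ := exists_abs_sum_inv_prime_Ioc_sub_log_le
  refine ⟨log 4 + |K|, by positivity, fun x y hy hyx => ?_⟩
  have hlogy : 0 < log y := log_pos hy
  have hx : 0 < x := by linarith
  set S := {p ∈ Icc 1 ⌊x⌋₊ | Nat.Prime p ∧ y < (p : ℝ)} with hS
  have hcard : #S ≤ log 4 * x / log y := by
    rw [le_div_iff₀ hlogy]
    exact (card_filter_prime_lt_mul_log_le (by linarith)).trans
      (Chebyshev.theta_le_log4_mul_x hx.le)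
  have hrecip : |∑ p ∈ S, x / p - x * log (log x / log y)| ≤ x * (|K| / log y) := by
    simp only [hS, filter_prime_lt_Icc_eq, div_eq_mul_inv x, ← mul_sum]
    rw [← mul_sub, abs_mul, abs_of_pos hx]
    gcongr
    exact (hK y x hy hyx).trans (by gcongr; exact le_abs_self K)
  calc |∑ p ∈ S, (⌊x / (p : ℝ)⌋ : ℝ) - x * log (log x / log y)|
      ≤ |∑ p ∈ S, (⌊x / (p : ℝ)⌋ : ℝ) - ∑ p ∈ S, x / p|
        + |∑ p ∈ S, x / p - x * log (log x / log y)| := abs_sub_le _ _ _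
    _ ≤ #S + x * (|K| / log y) := add_le_add (abs_sum_floor_sub_sum_le_card S _) hrecip
    _ ≤ log 4 * x / log y + x * (|K| / log y) := by gcongr
    _ = (log 4 + |K|) * x / log y := by ring

/-- There is `C > 0` such that for all `x ≥ 4`,
`|Σ_{√x < p ≤ x, p prime} ⌊x/p⌋ − x log 2| ≤ C x / log x`. -/
theorem sum_floor_over_large_primes :
    ∃ C > (0 : ℝ), ∀ x : ℝ, 4 ≤ x →
      |(∑ p ∈ (Finset.Icc 1 ⌊x⌋₊).filter (fun p : ℕ => Nat.Prime p ∧ Real.sqrt x < (p : ℝ)),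
          (⌊x / (p : ℝ)⌋ : ℝ)) - x * Real.log 2|
        ≤ C * x / Real.log x := by
  obtain ⟨C, hC, h⟩ := sum_floor_over_large_primes_general
  refine ⟨2 * C, by positivity, fun x hx => ?_⟩
  have hlog : log x ≠ 0 := (log_pos (by linarith)).ne'
  have hbound := h x √x (lt_sqrt_of_sq_lt (by linarith)) (sqrt_le_self_iff.2 (.inr (by linarith)))
  rw [log_sqrt (by linarith), div_div_cancel₀ hlog] at hbound
  exact hbound.trans_eq (by ring)
end
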